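/- arXiv:2510.22393 — 4 statements merged into one kernel-verified Lean document; each statement's English description precedes it below -/
import Mathlib

section
/- Let S ⊆ {1,…,n} and let δ > 0 be such that |λ_i − λ̃_j| ≥ δ for every i ∈ S and every j ∉ S. Then ‖Π̃_S − Π_S‖ ≤ π‖E‖/(2δ). (Davis–Kahan sine theorem.) -/
open Matrix

/-- The spectral norm (ℓ²→ℓ² operator norm) of a matrix. -/
noncomputable def specNorm {𝕜 : Type*} [RCLike 𝕜] {m n : ℕ}
    (M : Matrix (Fin m) (Fin n) 𝕜) : ℝ :=
  ‖LinearMap.toContinuousLinearMap (Matrix.toEuclideanLin M)‖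

lemma dk_orth_prod (N : ℕ) (h : ℝ → ℝ) (hc : Continuous h)
    (horth : ∀ m : ℤ, |m| < N →
      ∫ t in (0:ℝ)..(2 * Real.pi), (h t : ℂ) * Complex.exp (m * t * Complex.I) = 0)
    (α β : ℕ → ℂ) (s : Finset ℕ) :
    ∀ m : ℤ, -(N:ℤ) < m → m + s.card < N →
      ∫ t in (0:ℝ)..(2 * Real.pi), (h t : ℂ) * Complex.exp (m * t * Complex.I) *
        ∏ j ∈ s, (α j * Complex.exp (t * Complex.I) + β j) = 0 := by
  classical
  induction s using Finset.induction_on with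
  | empty =>
    intro m h1 h2
    simpa using horth m (abs_lt.mpr ⟨h1, by simpa using h2⟩)
  | insert a s ha ih =>
    intro m h1 h2
    rw [Finset.card_insert_of_notMem ha] at h2
    push_cast at h2
    have e1 := ih (m+1) (by omega) (by omega)
    have e2 := ih m (by omega) (by omega)
    have : ∀ t : ℝ, (h t : ℂ) * Complex.exp (m * t * Complex.I) *
        ∏ j ∈ insert a s, (α j * Complex.exp (t * Complex.I) + β j)
        = α a * ((h t : ℂ) * Complex.exp ((m+1 : ℤ) * t * Complex.I) *
        ∏ j ∈ s, (α j * Complex.exp (t * Complex.I) + β j)) +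
        β a * ((h t : ℂ) * Complex.exp (m * t * Complex.I) *
        ∏ j ∈ s, (α j * Complex.exp (t * Complex.I) + β j)) := by
      intro t
      rw [Finset.prod_insert ha]
      have : Complex.exp ((m+1 : ℤ) * t * Complex.I)
        = Complex.exp (m * t * Complex.I) * Complex.exp (t * Complex.I) := by
        rw [← Complex.exp_add]; congr 1; push_cast; ring
      rw [this]; ring
    simp_rw [this]
    rw [intervalIntegral.integral_add, intervalIntegral.integral_const_mul,
      intervalIntegral.integral_const_mul, e1, e2]
    · simp
    · apply Continuous.intervalIntegrable; fun_prop
    · apply Continuous.intervalIntegrable; fun_prop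

lemma dk_orth_sin (N : ℕ) (hN : 1 ≤ N) (h : ℝ → ℝ) (hc : Continuous h)
    (horth : ∀ m : ℤ, |m| < N →
      ∫ t in (0:ℝ)..(2 * Real.pi), (h t : ℂ) * Complex.exp (m * t * Complex.I) = 0)
    (τ : ℕ → ℝ) :
      ∫ t in (0:ℝ)..(2 * Real.pi), h t *
        ∏ j ∈ Finset.Ico 1 (2 * N - 1), Real.sin ((t - τ j) / 2) = 0 := by
  have key := dk_orth_prod N h hc horth
    (fun j => -(Complex.I / 2) * Complex.exp (-(τ j / 2) * Complex.I))
    (fun j => (Complex.I / 2) * Complex.exp ((τ j / 2) * Complex.I))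
    (Finset.Ico 1 (2 * N - 1)) (-((N:ℤ) - 1)) (by omega) (by simp; omega)
  have e : ∀ t : ℝ, ((h t *
        ∏ j ∈ Finset.Ico 1 (2 * N - 1), Real.sin ((t - τ j) / 2) : ℝ) : ℂ) =
      (h t : ℂ) * Complex.exp ((-((N:ℤ) - 1) : ℤ) * t * Complex.I) *
        ∏ j ∈ Finset.Ico 1 (2 * N - 1),
        ((-(Complex.I / 2) * Complex.exp (-(τ j / 2) * Complex.I)) * Complex.exp (t * Complex.I)
          + (Complex.I / 2) * Complex.exp ((τ j / 2) * Complex.I)) := by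
    intro t
    have : Complex.exp ((-((N:ℤ) - 1) : ℤ) * t * Complex.I)
        = ∏ j ∈ Finset.Ico 1 (2 * N - 1), Complex.exp (-(t / 2) * Complex.I) := by
      rw [Finset.prod_const, ← Complex.exp_nat_mul]
      congr 1
      have : ((2 * N - 1 - 1 : ℕ) : ℂ) = 2 * N - 2 := by
        rw [show 2 * N - 1 - 1 = 2 * N - 2 by omega, Nat.cast_sub (by omega)]; push_cast; ring
      simp only [Nat.card_Ico, this]
      push_cast; ring
    rw [this, mul_assoc, ← Finset.prod_mul_distrib]
    push_cast
    congr 1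
    apply Finset.prod_congr rfl
    intro j _
    rw [Complex.sin]
    have e1 : Complex.exp (-(((t:ℂ) - τ j) / 2) * Complex.I)
      = Complex.exp (-(t / 2) * Complex.I) * Complex.exp ((τ j / 2) * Complex.I) := by
      rw [← Complex.exp_add]; congr 1; ring
    have e2 : Complex.exp ((((t:ℂ) - τ j) / 2) * Complex.I)
      = Complex.exp (-(t / 2) * Complex.I) * (Complex.exp (-(τ j / 2) * Complex.I) * Complex.exp (t * Complex.I)) := by
      rw [← Complex.exp_add, ← Complex.exp_add]; congr 1; ring
    rw [e1, e2]; ring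
  have : ((∫ t in (0:ℝ)..(2 * Real.pi), h t *
        ∏ j ∈ Finset.Ico 1 (2 * N - 1), Real.sin ((t - τ j) / 2) : ℝ) : ℂ) = 0 := by
    rw [← intervalIntegral.integral_ofReal]
    simp_rw [e]
    exact key
  exact_mod_cast this

lemma dk_g_orth (N : ℕ) (hN : 1 ≤ N) (m : ℤ) (hm : |m| < N) :
    ∫ t in (0:ℝ)..(2 * Real.pi), ((Real.arcsin (Real.cos (N * t)) / N : ℝ) : ℂ) *
      Complex.exp (m * t * Complex.I) = 0 := by
  set G : ℝ → ℂ := fun t => ((Real.arcsin (Real.cos (N * t)) / N : ℝ) : ℂ) *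
      Complex.exp (m * t * Complex.I) with hG
  have hN0 : (0:ℝ) < N := by exact_mod_cast hN
  have hNr : (N:ℝ) ≠ 0 := hN0.ne'
  have hper : Function.Periodic G (2 * Real.pi) := by
    intro t
    simp only [hG]
    have e1 : Real.cos (N * (t + 2 * Real.pi)) = Real.cos (N * t) := by
      rw [mul_add]; exact Real.cos_add_nat_mul_two_pi _ _
    have e2 : Complex.exp (m * ((t + 2 * Real.pi : ℝ) : ℂ) * Complex.I) = Complex.exp (m * t * Complex.I) := by
      rw [show (m * ((t + 2 * Real.pi : ℝ) : ℂ) * Complex.I) = m * t * Complex.I + m * (2 * Real.pi * Complex.I) by push_cast; ring,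
        Complex.exp_add, Complex.exp_int_mul_two_pi_mul_I, mul_one]
    rw [e1, e2]
  have hanti : ∀ t, G (t + Real.pi / N) = -Complex.exp (((m * (Real.pi / N) : ℝ) : ℂ) * Complex.I) * G t := by
    intro t
    simp only [hG]
    have e1 : Real.cos (N * (t + Real.pi / N)) = - Real.cos (N * t) := by
      rw [mul_add, mul_div_cancel₀ _ hNr, Real.cos_add_pi]
    have e2 : Complex.exp (m * ((t + Real.pi / N : ℝ) : ℂ) * Complex.I) = Complex.exp (((m * (Real.pi / N) : ℝ) : ℂ) * Complex.I) * Complex.exp (m * t * Complex.I) := by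
      rw [← Complex.exp_add]; congr 1; push_cast; ring
    rw [e1, e2, Real.arcsin_neg]; push_cast; ring
  have h1 := hper.intervalIntegral_add_eq 0 (Real.pi / N)
  rw [zero_add, add_comm (Real.pi / N), ← zero_add (Real.pi / (N:ℝ))] at h1
  rw [show 2 * Real.pi + (0 + Real.pi / N) = 2 * Real.pi + Real.pi / N by ring] at h1
  rw [← intervalIntegral.integral_comp_add_right] at h1
  simp_rw [hanti] at h1
  rw [intervalIntegral.integral_const_mul] at h1
  have h2 : (1 + Complex.exp (((m * (Real.pi / N) : ℝ) : ℂ) * Complex.I)) * (∫ t in (0:ℝ)..(2 * Real.pi), G t) = 0 := by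
    linear_combination h1
  rcases mul_eq_zero.mp h2 with h3 | h3
  · exfalso
    have h4 := congrArg Complex.re h3
    rw [Complex.add_re, Complex.exp_ofReal_mul_I_re] at h4
    simp at h4
    have hx : |(m:ℝ) * (Real.pi / N)| < Real.pi := by
      rw [abs_mul, abs_of_pos (a := Real.pi / N) (by positivity), mul_div_assoc', div_lt_iff₀ hN0, mul_comm]
      have : |(m:ℝ)| < N := by exact_mod_cast hm
      gcongr
    have := Real.cos_lt_cos_of_nonneg_of_le_pi (abs_nonneg _) le_rfl hx
    rw [Real.cos_pi, Real.cos_abs] at this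
    linarith
  · exact h3

lemma dk_cross (h : ℝ → ℝ) (hc : Continuous h) (a b : ℝ) (hab : a ≤ b) (hb : b ≤ a + 2 * Real.pi)
    (hm : AntitoneOn h (Set.Icc a b)) :
    ∃ c ∈ Set.Icc a b, ∀ t ∈ Set.Icc a b, h t * Real.sin ((t - c) / 2) ≤ 0 := by
  have aux : ∃ c ∈ Set.Icc a b, ∀ t ∈ Set.Icc a b, (t < c → 0 ≤ h t) ∧ (c < t → h t ≤ 0) := by
    by_cases h1 : h a ≤ 0
    · refine ⟨a, ⟨le_rfl, hab⟩, fun t ht => ⟨fun hlt => absurd ht.1 (not_le.mpr hlt), fun hlt => ?_⟩⟩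
      exact (hm ⟨le_rfl, hab⟩ ht ht.1).trans h1
    by_cases h2 : 0 ≤ h b
    · refine ⟨b, ⟨hab, le_rfl⟩, fun t ht => ⟨fun hlt => ?_, fun hlt => absurd ht.2 (not_le.mpr hlt)⟩⟩
      exact h2.trans (hm ht ⟨hab, le_rfl⟩ ht.2)
    · push Not at h1 h2
      obtain ⟨c, hc1, hc2⟩ := intermediate_value_Icc' hab hc.continuousOn ⟨h2.le, h1.le⟩
      refine ⟨c, hc1, fun t ht => ⟨fun hlt => ?_, fun hlt => ?_⟩⟩
      · rw [← hc2]; exact hm ht hc1 hlt.le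
      · rw [← hc2]; exact hm hc1 ht hlt.le
  obtain ⟨c, hc1, hc2⟩ := aux
  refine ⟨c, hc1, fun t ht => ?_⟩
  rcases lt_trichotomy t c with h1 | h1 | h1
  · apply mul_nonpos_of_nonneg_of_nonpos ((hc2 t ht).1 h1)
    apply Real.sin_nonpos_of_nonpos_of_neg_pi_le
    · linarith
    · linarith [hc1.2, ht.1]
  · simp [h1]
  · apply mul_nonpos_of_nonpos_of_nonneg ((hc2 t ht).2 h1)
    apply Real.sin_nonneg_of_nonneg_of_le_pi
    · linarith
    · linarith [hc1.1, ht.2]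

lemma dk_g_eq (N : ℕ) (hN : 1 ≤ N) (k : ℕ) (t : ℝ)
    (ht : t ∈ Set.Icc (k * (Real.pi / N)) ((k + 1) * (Real.pi / N))) :
    (-1 : ℝ) ^ k * (Real.arcsin (Real.cos (N * t)) / N) = (Real.pi / 2 + k * Real.pi) / N - t := by
  have hN0 : (0:ℝ) < N := by exact_mod_cast hN
  have e : Real.cos (N * t) = (-1) ^ k * Real.sin (Real.pi / 2 - (N * t - k * Real.pi)) := by
    rw [Real.sin_pi_div_two_sub, Real.cos_sub_nat_mul_pi, ← mul_assoc, ← mul_pow]; simp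
  have h1 : k * Real.pi ≤ N * t := by
    have := mul_le_mul_of_nonneg_left ht.1 hN0.le
    calc _ = (N:ℝ) * (k * (Real.pi / N)) := by field_simp
      _ ≤ _ := this
  have h2 : N * t ≤ (k + 1) * Real.pi := by
    have := mul_le_mul_of_nonneg_left ht.2 hN0.le
    calc _ ≤ (N:ℝ) * ((k+1) * (Real.pi / N)) := this
      _ = _ := by field_simp
  have h3 : Real.arcsin (Real.sin (Real.pi / 2 - (N * t - k * Real.pi)))
      = Real.pi / 2 - (N * t - k * Real.pi) := Real.arcsin_sin (by linarith) (by linarith)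
  have h4 : (-1 : ℝ) ^ k * Real.arcsin (Real.cos (N * t)) = Real.pi / 2 - (N * t - k * Real.pi) := by
    rw [e]
    rcases neg_one_pow_eq_or ℝ k with h | h <;> rw [h] <;> simp [h3]
  rw [← mul_div_assoc, h4]
  field_simp
  ring

lemma dk_bohr (N : ℕ) (hN : 1 ≤ N) (f : ℝ → ℝ) (hf : ∀ s t, |f s - f t| ≤ |s - t|)
    (hper : f (2 * Real.pi) = f 0)
    (horth : ∀ m : ℤ, |m| < N →
      ∫ t in (0:ℝ)..(2 * Real.pi), (f t : ℂ) * Complex.exp (m * t * Complex.I) = 0) :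
    f 0 ≤ Real.pi / (2 * N) := by
  by_contra hcon
  push Not at hcon
  have hN0 : (0:ℝ) < N := by exact_mod_cast hN
  have hpi := Real.pi_pos
  have hfc : Continuous f := by
    have : LipschitzWith 1 f := LipschitzWith.of_dist_le_mul (fun x y => by
      simpa [Real.dist_eq] using hf x y)
    exact this.continuous
  set g : ℝ → ℝ := fun t => Real.arcsin (Real.cos (N * t)) / N with hg
  have hgc : Continuous g := by
    have := Real.continuous_arcsin
    simp only [hg]; fun_prop
  set h : ℝ → ℝ := fun t => g t - f t with hh
  have hc : Continuous h := hgc.sub hfc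
  have horth' : ∀ m : ℤ, |m| < N →
      ∫ t in (0:ℝ)..(2 * Real.pi), (h t : ℂ) * Complex.exp (m * t * Complex.I) = 0 := by
    intro m hm
    have e : ∀ t : ℝ, (h t : ℂ) * Complex.exp (m * t * Complex.I)
      = (g t : ℂ) * Complex.exp (m * t * Complex.I) - (f t : ℂ) * Complex.exp (m * t * Complex.I) := by
      intro t; simp only [hh]; push_cast; ring
    simp_rw [e]
    rw [intervalIntegral.integral_sub, horth m hm, dk_g_orth N hN m hm, sub_zero]
    · apply Continuous.intervalIntegrable; fun_prop
    · apply Continuous.intervalIntegrable; fun_prop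
  set w : ℝ := Real.pi / N with hw
  have hw0 : 0 < w := by positivity
  have hNw : 2 * N * w = 2 * Real.pi := by rw [hw]; field_simp
  have hanti : ∀ k : ℕ, AntitoneOn (fun t => (-1 : ℝ) ^ k * h t) (Set.Icc (k * w) ((k + 1) * w)) := by
    intro k s hs t ht hst
    have e1 := dk_g_eq N hN k s hs
    have e2 := dk_g_eq N hN k t ht
    have e3 := hf s t
    simp only [hh, mul_sub, hg, e1, e2]
    rw [abs_sub_comm s t, abs_of_nonneg (sub_nonneg.mpr hst)] at e3
    rcases neg_one_pow_eq_or ℝ k with h | h <;> rw [h] <;> linarith [abs_le.mp e3]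
  have hcross : ∀ k : ℕ, ∃ c ∈ Set.Icc (k * w) ((k + 1) * w), ∀ t ∈ Set.Icc (k * w) ((k + 1) * w),
      ((-1 : ℝ) ^ k * h t) * Real.sin ((t - c) / 2) ≤ 0 := by
    intro k
    apply dk_cross (fun t => (-1 : ℝ) ^ k * h t) (by fun_prop) _ _ (by nlinarith) _ (hanti k)
    have : w ≤ Real.pi := by
      rw [hw]; apply div_le_self hpi.le; exact_mod_cast hN
    nlinarith
  choose τ hτ1 hτ2 using hcross
  have hz := dk_orth_sin N hN h hc horth' τ
  have hh0 : h 0 < 0 := by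
    have : g 0 = Real.pi / (2 * N) := by simp [hg, div_div]
    simp only [hh]; linarith
  have hh1 : h (2 * Real.pi) < 0 := by
    have : g (2 * Real.pi) = g 0 := by
      simp only [hg]
      rw [Real.cos_nat_mul_two_pi]; simp
    simp only [hh] at hh0 ⊢; rw [this, hper]; exact hh0
  -- signs of the factors
  have hcast : ∀ j ∈ Finset.Ico 1 (2 * N - 1), w ≤ τ j ∧ τ j ≤ 2 * Real.pi - w := by
    intro j hj
    rw [Finset.mem_Ico] at hj
    have h1 : (1:ℝ) ≤ j := by exact_mod_cast hj.1
    have h2 : (j:ℝ) + 2 ≤ 2 * N := by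
      have : j + 2 ≤ 2 * N := by omega
      exact_mod_cast this
    constructor
    · nlinarith [(hτ1 j).1]
    · nlinarith [(hτ1 j).2]
  have hfacpos : ∀ t ∈ Set.Icc 0 (2 * Real.pi), ∀ j ∈ Finset.Ico 1 (2 * N - 1), τ j ≤ t →
      0 ≤ Real.sin ((t - τ j) / 2) := by
    intro t ht j hj hle
    obtain ⟨h1, h2⟩ := hcast j hj
    apply Real.sin_nonneg_of_nonneg_of_le_pi <;> linarith [ht.2]
  have hfacneg : ∀ t ∈ Set.Icc 0 (2 * Real.pi), ∀ j ∈ Finset.Ico 1 (2 * N - 1), t ≤ τ j →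
      0 ≤ - Real.sin ((t - τ j) / 2) := by
    intro t ht j hj hle
    obtain ⟨h1, h2⟩ := hcast j hj
    rw [neg_nonneg]
    apply Real.sin_nonpos_of_nonpos_of_neg_pi_le <;> linarith [ht.1]
  have hneg : ∀ t : ℝ, ∀ s : Finset ℕ, ∏ j ∈ s, Real.sin ((t - τ j) / 2)
      = (-1) ^ s.card * ∏ j ∈ s, (- Real.sin ((t - τ j) / 2)) := by
    intro t s
    rw [Finset.prod_neg, ← mul_assoc, ← mul_pow]; simp
  have hcard : (-1 : ℝ) ^ (Finset.Ico 1 (2 * N - 1)).card = 1 := by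
    rw [Nat.card_Ico]; apply Even.neg_one_pow; exact ⟨N - 1, by omega⟩
  have hle : ∀ t ∈ Set.Ioc 0 (2 * Real.pi),
      0 ≤ -(h t * ∏ j ∈ Finset.Ico 1 (2 * N - 1), Real.sin ((t - τ j) / 2)) := by
    intro t ht
    have ht' : t ∈ Set.Icc 0 (2 * Real.pi) := ⟨ht.1.le, ht.2⟩
    obtain ⟨k, hkN, hk⟩ : ∃ k : ℕ, k < 2 * N ∧ t ∈ Set.Icc (k * w) ((k + 1) * w) := by
      have hpos : 0 < ⌈t / w⌉₊ := Nat.ceil_pos.mpr (div_pos ht.1 hw0)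
      have hle2 : ⌈t / w⌉₊ ≤ 2 * N := by
        apply Nat.ceil_le.mpr
        rw [div_le_iff₀ hw0]; push_cast; linarith [ht.2]
      refine ⟨⌈t / w⌉₊ - 1, by omega, ?_, ?_⟩
      · have := Nat.ceil_lt_add_one (div_pos ht.1 hw0).le
        rw [Nat.cast_sub (by omega)]
        rw [← le_div_iff₀ hw0]; push_cast; linarith
      · rw [Nat.cast_sub (by omega)]
        rw [← div_le_iff₀ hw0]; push_cast; linarith [Nat.le_ceil (t / w)]
    have hlo : ∀ j, j < k → τ j ≤ t := by
      intro j hj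
      have : (j:ℝ) + 1 ≤ k := by exact_mod_cast hj
      nlinarith [(hτ1 j).2, hk.1]
    have hhi : ∀ j, k < j → t ≤ τ j := by
      intro j hj
      have : (k:ℝ) + 1 ≤ j := by exact_mod_cast hj
      nlinarith [(hτ1 j).1, hk.2]
    rw [neg_nonneg]
    by_cases hk0 : k = 0
    · subst hk0
      have hht : h t ≤ 0 := by
        have := hanti 0 (a := 0) (by constructor <;> simp [hw0.le]) hk ht.1.le
        simp at this; linarith
      apply mul_nonpos_of_nonpos_of_nonneg hht
      rw [hneg, hcard, one_mul]
      apply Finset.prod_nonneg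
      intro j hj
      exact hfacneg t ht' j hj (hhi j (by rw [Finset.mem_Ico] at hj; omega))
    by_cases hk1 : k = 2 * N - 1
    · have hkc : ((k:ℝ) + 1) * w = 2 * Real.pi := by
        rw [hk1, Nat.cast_sub (by omega)]; push_cast; linarith
      have hht : h t ≤ 0 := by
        have := hanti k (b := 2 * Real.pi) hk (by rw [hkc]; exact ⟨hk.1.trans ht.2, le_rfl⟩) ht.2
        have hodd : (-1 : ℝ) ^ k = -1 := by
          apply Odd.neg_one_pow; exact ⟨N - 1, by omega⟩
        simp only [hodd] at this; linarith
      apply mul_nonpos_of_nonpos_of_nonneg hht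
      apply Finset.prod_nonneg
      intro j hj
      exact hfacpos t ht' j hj (hlo j (by rw [Finset.mem_Ico] at hj; omega))
    · have hkm : k ∈ Finset.Ico 1 (2 * N - 1) := by rw [Finset.mem_Ico]; omega
      rw [← Finset.prod_Ico_consecutive _ (show 1 ≤ k by omega) (show k ≤ 2 * N - 1 by omega),
        Finset.prod_eq_prod_Ico_succ_bot (show k < 2 * N - 1 by omega),
        hneg t (Finset.Ico (k+1) _)]
      have hsg : (-1 : ℝ) ^ (Finset.Ico (k+1) (2 * N - 1)).card = (-1) ^ k := by
        rw [Nat.card_Ico]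
        rcases Nat.even_or_odd k with he | he
        · rw [he.neg_one_pow]; apply Even.neg_one_pow
          obtain ⟨r, hr⟩ := he
          exact ⟨N - 1 - r, by omega⟩
        · rw [he.neg_one_pow]; apply Odd.neg_one_pow
          obtain ⟨r, hr⟩ := he
          exact ⟨N - 1 - r - 1, by omega⟩
      rw [hsg]
      have p1 : 0 ≤ ∏ j ∈ Finset.Ico 1 k, Real.sin ((t - τ j) / 2) := by
        apply Finset.prod_nonneg
        intro j hj
        rw [Finset.mem_Ico] at hj
        exact hfacpos t ht' j (by rw [Finset.mem_Ico]; omega) (hlo j (by omega))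
      have p2 : 0 ≤ ∏ j ∈ Finset.Ico (k+1) (2 * N - 1), - Real.sin ((t - τ j) / 2) := by
        apply Finset.prod_nonneg
        intro j hj
        rw [Finset.mem_Ico] at hj
        exact hfacneg t ht' j (by rw [Finset.mem_Ico]; omega) (hhi j (by omega))
      have p3 := hτ2 k t hk
      have := mul_nonpos_of_nonpos_of_nonneg p3 (mul_nonneg p1 p2)
      calc _ = _ := by ring
        _ ≤ 0 := this
  have hlt : ∃ t ∈ Set.Icc 0 (2 * Real.pi),
      0 < -(h t * ∏ j ∈ Finset.Ico 1 (2 * N - 1), Real.sin ((t - τ j) / 2)) := by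
    have hw2 : w ≤ 2 * Real.pi := by
      have : (1:ℝ) ≤ N := by exact_mod_cast hN
      nlinarith
    refine ⟨w / 2, ⟨by linarith, by linarith⟩, ?_⟩
    have hht : h (w / 2) < 0 := by
      have := hanti 0 (a := 0) (b := w / 2) (by constructor <;> simp [hw0.le])
        (by constructor <;> simp <;> linarith) (by linarith)
      simp at this; linarith
    rw [neg_pos]
    apply mul_neg_of_neg_of_pos hht
    rw [hneg, hcard, one_mul]
    apply Finset.prod_pos
    intro j hj
    obtain ⟨h1, h2⟩ := hcast j hj
    rw [neg_pos]
    apply Real.sin_neg_of_neg_of_neg_pi_lt <;> linarith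
  have hpos := intervalIntegral.integral_pos (a := 0) (b := 2 * Real.pi) (by linarith)
    (f := fun t => -(h t * ∏ j ∈ Finset.Ico 1 (2 * N - 1), Real.sin ((t - τ j) / 2)))
    (by apply Continuous.continuousOn; fun_prop) hle hlt
  rw [intervalIntegral.integral_neg, hz] at hpos
  simp at hpos

lemma dk_cos_orth (d m : ℤ) (hdm : |m| < |d|) :
    ∫ t in (0:ℝ)..(2 * Real.pi), ((Real.cos (d * t) : ℝ) : ℂ) * Complex.exp (m * t * Complex.I) = 0 := by
  have hexp : ∀ k : ℤ, k ≠ 0 → ∫ t in (0:ℝ)..(2 * Real.pi), Complex.exp ((k * Complex.I) * t) = 0 := by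
    intro k hk
    rw [integral_exp_mul_complex (by simp [hk])]
    have : Complex.exp (k * Complex.I * ((2 * Real.pi : ℝ) : ℂ)) = 1 := by
      rw [← Complex.exp_int_mul_two_pi_mul_I k]; congr 1; push_cast; ring
    rw [this]; simp
  have e : ∀ t : ℝ, ((Real.cos (d * t) : ℝ) : ℂ) * Complex.exp (m * t * Complex.I)
      = (1/2) * Complex.exp (((d + m : ℤ) * Complex.I) * t)
        + (1/2) * Complex.exp (((m - d : ℤ) * Complex.I) * t) := by
    intro t
    push_cast
    rw [Complex.cos, show ((d:ℂ) + m) * Complex.I * t = d * t * Complex.I + m * t * Complex.I by ring,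
      show ((m:ℂ) - d) * Complex.I * t = -(d * t) * Complex.I + m * t * Complex.I by ring,
      Complex.exp_add, Complex.exp_add]
    ring
  simp_rw [e]
  have h1 : d + m ≠ 0 := by
    intro h; have : d = -m := by omega
    rw [this, abs_neg] at hdm; exact lt_irrefl _ hdm
  have h2 : m - d ≠ 0 := by
    intro h; have : d = m := by omega
    rw [this] at hdm; exact lt_irrefl _ hdm
  rw [intervalIntegral.integral_add, intervalIntegral.integral_const_mul,
      intervalIntegral.integral_const_mul, hexp _ h1, hexp _ h2]
  · simp
  · apply Continuous.intervalIntegrable; fun_prop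
  · apply Continuous.intervalIntegrable; fun_prop

lemma dk_int {P : Type*} [Fintype P] (N : ℕ) (hN : 1 ≤ N) (d : P → ℤ) (hd : ∀ p, (N:ℤ) ≤ |d p|)
    (z : P → ℝ) (K : ℝ) (hK : 0 < K)
    (hb : ∀ t : ℝ, |∑ p, z p * d p * Real.sin (d p * t)| ≤ K) :
    ∑ p, z p ≤ K * (Real.pi / (2 * N)) := by
  set f : ℝ → ℝ := fun t => ∑ p, z p / K * Real.cos (d p * t) with hf
  have hder : ∀ t, HasDerivAt f (-(∑ p, z p * d p * Real.sin (d p * t)) / K) t := by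
    intro t
    have : ∀ p ∈ Finset.univ, HasDerivAt (fun t => z p / K * Real.cos (d p * t))
        (z p / K * (- Real.sin (d p * t) * (d p * 1))) t := by
      intro p _
      exact (((hasDerivAt_id t).const_mul (d p : ℝ)).cos).const_mul _
    have h2 := HasDerivAt.fun_sum this
    refine h2.congr_deriv ?_
    rw [neg_div, Finset.sum_div, ← Finset.sum_neg_distrib]
    apply Finset.sum_congr rfl
    intro p _
    ring
  have hlip : ∀ s t, |f s - f t| ≤ |s - t| := by
    intro s t
    have := Convex.norm_image_sub_le_of_norm_hasDerivWithin_le (f := f) (s := Set.univ) (C := 1)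
      (fun x _ => (hder x).hasDerivWithinAt) (fun x _ => by
        rw [Real.norm_eq_abs, abs_div, abs_neg, abs_of_pos hK, div_le_one hK]; exact hb x)
      convex_univ (Set.mem_univ t) (Set.mem_univ s)
    simpa using this
  have hper : f (2 * Real.pi) = f 0 := by
    simp only [hf, Real.cos_int_mul_two_pi]; simp
  have key := dk_bohr N hN f hlip hper (by
    intro m hm
    have e : ∀ t : ℝ, (f t : ℂ) * Complex.exp (m * t * Complex.I)
      = ∑ p, ((z p / K : ℝ) : ℂ) * (((Real.cos (d p * t) : ℝ) : ℂ) * Complex.exp (m * t * Complex.I)) := by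
      intro t
      simp only [hf]
      rw [Complex.ofReal_sum, Finset.sum_mul]
      apply Finset.sum_congr rfl
      intro p _
      rw [Complex.ofReal_mul, mul_assoc]
    simp_rw [e]
    rw [intervalIntegral.integral_finsetSum]
    · apply Finset.sum_eq_zero
      intro p _
      rw [intervalIntegral.integral_const_mul, dk_cos_orth _ _ (lt_of_lt_of_le hm (hd p)), mul_zero]
    · intro p _
      apply Continuous.intervalIntegrable; fun_prop)
  have : f 0 = (∑ p, z p) / K := by simp [hf, Finset.sum_div]
  rw [this, div_le_iff₀ hK] at key
  linarith

lemma dk_trig {I J : Type*} [Fintype I] [Fintype J] (Y : I → J → ℝ) (C : ℝ) (hC : 0 ≤ C)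
    (hY : ∀ (a : I → ℝ) (b : J → ℝ), |∑ i, ∑ j, Y i j * a i * b j| ≤ C * √(∑ i, a i ^ 2) * √(∑ j, b j ^ 2))
    (a : I → ℝ) (b : J → ℝ) (θ : I → ℝ) (φ : J → ℝ) :
    |∑ i, ∑ j, Y i j * a i * b j * Real.sin (θ i - φ j)| ≤
      C * (√(∑ i, a i ^ 2) * √(∑ j, b j ^ 2)) := by
  have h1 := hY (fun i => a i * Real.sin (θ i)) (fun j => b j * Real.cos (φ j))
  have h2 := hY (fun i => a i * Real.cos (θ i)) (fun j => b j * Real.sin (φ j))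
  have e : ∑ i, ∑ j, Y i j * a i * b j * Real.sin (θ i - φ j)
    = ∑ i, ∑ j, Y i j * (a i * Real.sin (θ i)) * (b j * Real.cos (φ j))
      - ∑ i, ∑ j, Y i j * (a i * Real.cos (θ i)) * (b j * Real.sin (φ j)) := by
    simp_rw [← Finset.sum_sub_distrib]
    refine Finset.sum_congr rfl fun i _ => Finset.sum_congr rfl fun j _ => ?_
    rw [Real.sin_sub]; ring
  have ea : ∑ i, a i ^ 2 = ∑ i, (a i * Real.sin (θ i)) ^ 2 + ∑ i, (a i * Real.cos (θ i)) ^ 2 := by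
    rw [← Finset.sum_add_distrib]
    refine Finset.sum_congr rfl fun i _ => ?_
    linear_combination (-(a i) ^ 2) * Real.sin_sq_add_cos_sq (θ i)
  have eb : ∑ j, b j ^ 2 = ∑ j, (b j * Real.sin (φ j)) ^ 2 + ∑ j, (b j * Real.cos (φ j)) ^ 2 := by
    rw [← Finset.sum_add_distrib]
    refine Finset.sum_congr rfl fun i _ => ?_
    linear_combination (-(b i) ^ 2) * Real.sin_sq_add_cos_sq (φ i)
  have p1 : 0 ≤ ∑ i, (a i * Real.sin (θ i)) ^ 2 := Finset.sum_nonneg fun _ _ => sq_nonneg _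
  have p2 : 0 ≤ ∑ i, (a i * Real.cos (θ i)) ^ 2 := Finset.sum_nonneg fun _ _ => sq_nonneg _
  have p3 : 0 ≤ ∑ j, (b j * Real.sin (φ j)) ^ 2 := Finset.sum_nonneg fun _ _ => sq_nonneg _
  have p4 : 0 ≤ ∑ j, (b j * Real.cos (φ j)) ^ 2 := Finset.sum_nonneg fun _ _ => sq_nonneg _
  rw [e, ea, eb]
  generalize ∑ i, (a i * Real.sin (θ i)) ^ 2 = A1 at *
  generalize ∑ i, (a i * Real.cos (θ i)) ^ 2 = A2 at *
  generalize ∑ j, (b j * Real.sin (φ j)) ^ 2 = B1 at *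
  generalize ∑ j, (b j * Real.cos (φ j)) ^ 2 = B2 at *
  have key : √A1 * √B2 + √A2 * √B1 ≤ √(A1 + A2) * √(B1 + B2) := by
    rw [← Real.sqrt_mul (show 0 ≤ A1 + A2 by positivity)]
    apply Real.le_sqrt_of_sq_le
    nlinarith [sq_nonneg (√A1 * √B1 - √A2 * √B2), Real.sq_sqrt p1, Real.sq_sqrt p2,
      Real.sq_sqrt p3, Real.sq_sqrt p4, mul_pow (√A1) (√B1) 2, mul_pow (√A2) (√B2) 2,
      mul_pow (√A1) (√B2) 2, mul_pow (√A2) (√B1) 2]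
  have := abs_sub (∑ i, ∑ j, Y i j * (a i * Real.sin (θ i)) * (b j * Real.cos (φ j)))
    (∑ i, ∑ j, Y i j * (a i * Real.cos (θ i)) * (b j * Real.sin (φ j)))
  calc _ ≤ C * √A1 * √B2 + C * √A2 * √B1 := by linarith
    _ = C * (√A1 * √B2 + √A2 * √B1) := by ring
    _ ≤ _ := by gcongr

lemma dk_sylvester {I J : Type*} [Fintype I] [Fintype J] (x : I → J → ℝ) (μ : I → ℝ) (ν : J → ℝ)
    (δ : ℝ) (hδ : 0 < δ) (hsep : ∀ i j, δ ≤ |μ i - ν j|) (C : ℝ) (hC : 0 ≤ C)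
    (hY : ∀ (a : I → ℝ) (b : J → ℝ), |∑ i, ∑ j, ((μ i - ν j) * x i j) * a i * b j|
      ≤ C * √(∑ i, a i ^ 2) * √(∑ j, b j ^ 2))
    (a : I → ℝ) (b : J → ℝ) :
    ∑ i, ∑ j, x i j * a i * b j ≤ Real.pi * C / (2 * δ) * (√(∑ i, a i ^ 2) * √(∑ j, b j ^ 2)) := by
  set W := √(∑ i, a i ^ 2) * √(∑ j, b j ^ 2) with hW
  have hW0 : 0 ≤ W := by positivity
  set V := ∑ i, ∑ j, x i j * a i * b j with hV
  set K0 := ∑ i, ∑ j, |x i j * a i * b j| with hK0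
  have hK00 : 0 ≤ K0 := Finset.sum_nonneg fun _ _ => Finset.sum_nonneg fun _ _ => abs_nonneg _
  have hpi := Real.pi_pos
  have step : ∀ q : ℕ, 1 < q * δ → 2 * (q * δ - 1) * V ≤ Real.pi * (q * (C * W) + K0 + 1) := by
    intro q hq
    set m : I → ℤ := fun i => round (q * μ i) with hm
    set l : J → ℤ := fun j => round (q * ν j) with hl
    have hclose : ∀ i j, |((m i - l j : ℤ) : ℝ) - q * (μ i - ν j)| ≤ 1 := by
      intro i j
      have h1 := abs_le.mp (abs_sub_round ((q:ℝ) * μ i))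
      have h2 := abs_le.mp (abs_sub_round ((q:ℝ) * ν j))
      rw [abs_le]; push_cast; simp only [hm, hl]
      constructor <;> linarith [h1.1, h1.2, h2.1, h2.2]
    set N := ⌈(q * δ - 1 : ℝ)⌉₊ with hNdef
    have hN : 1 ≤ N := Nat.ceil_pos.mpr (by linarith)
    have hNle : q * δ - 1 ≤ N := Nat.le_ceil _
    have hd : ∀ p : I × J, (N:ℤ) ≤ |m p.1 - l p.2| := by
      rintro ⟨i, j⟩
      have h1 : (q * δ - 1 : ℝ) ≤ ((|m i - l j| : ℤ) : ℝ) := by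
        have h2 := hclose i j
        have h3 : (q:ℝ) * δ ≤ |q * (μ i - ν j)| := by
          rw [abs_mul, Nat.abs_cast]; exact mul_le_mul_of_nonneg_left (hsep i j) (Nat.cast_nonneg _)
        rw [Int.cast_abs]
        have h4 := abs_sub_abs_le_abs_sub ((q:ℝ) * (μ i - ν j)) ((m i - l j : ℤ) : ℝ)
        rw [abs_sub_comm] at h4
        linarith
      have h5 : N ≤ (|m i - l j|).toNat := by
        apply Nat.ceil_le.mpr
        have : (((|m i - l j|).toNat : ℤ) : ℝ) = ((|m i - l j| : ℤ) : ℝ) := by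
          rw [Int.toNat_of_nonneg (abs_nonneg _)]
        rw [← this] at h1
        exact_mod_cast h1
      have := Int.toNat_of_nonneg (abs_nonneg (m i - l j))
      change (N:ℤ) ≤ |m i - l j|
      omega
    have hint := dk_int N hN (fun p : I × J => m p.1 - l p.2) hd
      (fun p => x p.1 p.2 * a p.1 * b p.2) (q * (C * W) + K0 + 1) (by positivity) (by
        intro t
        rw [Fintype.sum_prod_type]
        have h1 := dk_trig (fun i j => (μ i - ν j) * x i j) C hC hY a b
          (fun i => m i * t) (fun j => l j * t)
        have e : ∑ i, ∑ j, x i j * a i * b j * ((m i - l j : ℤ) : ℝ) * Real.sin (((m i - l j : ℤ) : ℝ) * t)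
          = q * ∑ i, ∑ j, (μ i - ν j) * x i j * a i * b j * Real.sin (m i * t - l j * t)
            + ∑ i, ∑ j, (((m i - l j : ℤ) : ℝ) - q * (μ i - ν j)) * (x i j * a i * b j) * Real.sin (m i * t - l j * t) := by
          simp_rw [Finset.mul_sum, ← Finset.sum_add_distrib]
          refine Finset.sum_congr rfl fun i _ => Finset.sum_congr rfl fun j _ => ?_
          push_cast; rw [← sub_mul]; ring
        have h2 : |∑ i, ∑ j, (((m i - l j : ℤ) : ℝ) - q * (μ i - ν j)) * (x i j * a i * b j) * Real.sin (m i * t - l j * t)| ≤ K0 := by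
          refine (Finset.abs_sum_le_sum_abs _ _).trans (Finset.sum_le_sum fun i _ => ?_)
          refine (Finset.abs_sum_le_sum_abs _ _).trans (Finset.sum_le_sum fun j _ => ?_)
          rw [abs_mul, abs_mul]
          calc _ ≤ 1 * |x i j * a i * b j| * 1 := by
                gcongr
                · exact hclose i j
                · exact Real.abs_sin_le_one _
            _ = _ := by ring
        rw [e]
        refine (abs_add_le _ _).trans ?_
        rw [abs_mul, Nat.abs_cast]
        have h3 := mul_le_mul_of_nonneg_left h1 (Nat.cast_nonneg (α := ℝ) q)
        linarith)
    rw [Fintype.sum_prod_type] at hint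
    change V ≤ _ at hint
    have hN0 : (0:ℝ) < N := by exact_mod_cast hN
    have hR : 0 ≤ Real.pi * (q * (C * W) + K0 + 1) := by positivity
    rcases le_or_gt V 0 with hv | hv
    · nlinarith
    · have : V * (2 * N) ≤ Real.pi * (q * (C * W) + K0 + 1) := by
        rw [← le_div_iff₀ (by positivity)]
        calc V ≤ _ := hint
          _ = _ := by ring
      nlinarith
  have hfin : 2 * δ * V ≤ Real.pi * (C * W) := by
    by_contra hcon
    push Not at hcon
    set D := 2 * δ * V - Real.pi * (C * W) with hD
    have hD0 : 0 < D := by linarith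
    obtain ⟨q1, hq1⟩ := exists_nat_gt (1 / δ)
    obtain ⟨q2, hq2⟩ := exists_nat_gt ((2 * V + Real.pi * (K0 + 1)) / D)
    rw [div_lt_iff₀ hδ] at hq1
    rw [div_lt_iff₀ hD0] at hq2
    have hs := step (q1 + q2) (by push_cast; nlinarith [Nat.cast_nonneg (α := ℝ) q2])
    push_cast at hs
    have : 0 ≤ (q1:ℝ) * D := by positivity
    nlinarith
  rw [div_mul_eq_mul_div, le_div_iff₀ (by positivity)]
  linarith

open scoped InnerProductSpace in
lemma dk_proj {V : Type*} [NormedAddCommGroup V] [InnerProductSpace ℝ V] [FiniteDimensional ℝ V]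
    (U W : Submodule ℝ V) (hr : Module.finrank ℝ U = Module.finrank ℝ W) (s : ℝ) (hs : 0 ≤ s)
    (H : ∀ p ∈ U, ∀ y ∈ Wᗮ, ⟪p, y⟫_ℝ ≤ s * (‖p‖ * ‖y‖)) (x : V) :
    ‖W.starProjection x - U.starProjection x‖ ≤ s * ‖x‖ := by
  have pyth : ∀ (K : Submodule ℝ V) (v : V),
      ‖v‖ ^ 2 = ‖K.starProjection v‖ ^ 2 + ‖v - K.starProjection v‖ ^ 2 := by
    intro K v
    have h0 : ⟪K.starProjection v, v - K.starProjection v⟫_ℝ = 0 :=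
      (K.sub_starProjection_mem_orthogonal v) _ (K.starProjection_apply_mem v)
    have := norm_add_sq_eq_norm_sq_add_norm_sq_of_inner_eq_zero _ _ h0
    rw [add_sub_cancel] at this
    nlinarith
  have h1 : ∀ p ∈ U, (1 - s ^ 2) * ‖p‖ ^ 2 ≤ ‖W.starProjection p‖ ^ 2 := by
    intro p hp
    have hy := W.sub_starProjection_mem_orthogonal p
    have h2 := H p hp _ hy
    have h0 : ⟪W.starProjection p, p - W.starProjection p⟫_ℝ = 0 :=
      hy _ (W.starProjection_apply_mem p)
    have h3 : ⟪p, p - W.starProjection p⟫_ℝ = ‖p - W.starProjection p‖ ^ 2 := by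
      rw [← real_inner_self_eq_norm_sq, inner_sub_left (x := p), h0, sub_zero]
    have h4 : ‖p - W.starProjection p‖ ≤ s * ‖p‖ := by
      rcases (norm_nonneg (p - W.starProjection p)).eq_or_lt with h | h
      · rw [← h]; positivity
      · rw [h3] at h2; nlinarith
    have h5 := pyth W p
    have h6 := pow_le_pow_left₀ (norm_nonneg _) h4 2
    nlinarith
  have h2 : ∀ q ∈ W, ‖q - U.starProjection q‖ ^ 2 ≤ s ^ 2 * ‖q‖ ^ 2 := by
    intro q hq
    have hp := pyth U q
    rcases le_or_gt 1 s with hs1 | hs1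
    · have : 1 ≤ s ^ 2 := by nlinarith
      nlinarith [sq_nonneg ‖U.starProjection q‖, sq_nonneg ‖q‖]
    · have hs2 : 0 < 1 - s ^ 2 := by nlinarith
      let T : U →ₗ[ℝ] W := (W.orthogonalProjectionOnto : V →ₗ[ℝ] W) ∘ₗ U.subtype
      have hTv : ∀ p : U, ((T p : W) : V) = W.starProjection (p : V) := fun p => rfl
      have hinj : Function.Injective T := by
        rw [← LinearMap.ker_eq_bot, LinearMap.ker_eq_bot']
        intro p hp0
        have h3 := h1 p p.2
        rw [← hTv, hp0] at h3
        simp only [ZeroMemClass.coe_zero, norm_zero] at h3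
        have : ‖(p:V)‖ ^ 2 = 0 := by nlinarith [sq_nonneg ‖(p:V)‖]
        have : (p : V) = 0 := by simpa using this
        exact Subtype.ext this
      have hsurj := (LinearMap.injective_iff_surjective_of_finrank_eq_finrank hr).mp hinj
      obtain ⟨p, hpq⟩ := hsurj ⟨q, hq⟩
      have hpq' : W.starProjection (p : V) = q := by rw [← hTv, hpq]
      have h3 := h1 p p.2
      rw [hpq'] at h3
      have e1 : ⟪q, (p : V)⟫_ℝ = ‖q‖ ^ 2 := by
        have h0 : ⟪q, (p : V) - W.starProjection p⟫_ℝ = 0 := W.sub_starProjection_mem_orthogonal p _ hq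
        rw [inner_sub_right, hpq', real_inner_self_eq_norm_sq] at h0
        linarith
      have e2 : ⟪q, (p : V)⟫_ℝ = ⟪U.starProjection q, (p : V)⟫_ℝ := by
        have h0 : ⟪(p : V), q - U.starProjection q⟫_ℝ = 0 := U.sub_starProjection_mem_orthogonal q _ p.2
        rw [inner_sub_right, real_inner_comm, real_inner_comm _ (p:V)] at h0
        linarith
      have e3 := real_inner_le_norm (U.starProjection q) (p : V)
      rw [← e2, e1] at e3
      rcases (norm_nonneg q).eq_or_lt with h | h
      · rw [← h] at hp ⊢; nlinarith [sq_nonneg ‖U.starProjection q‖]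
      · have e4 := pow_le_pow_left₀ (by positivity) e3 2
        have e5 : (1 - s ^ 2) * ‖q‖ ^ 2 ≤ ‖U.starProjection q‖ ^ 2 := by
          have hq2 : 0 < ‖q‖ ^ 2 := by positivity
          have e6 : (1 - s ^ 2) * ‖q‖ ^ 2 * ‖q‖ ^ 2 ≤ ‖U.starProjection q‖ ^ 2 * ‖q‖ ^ 2 := by
            calc _ = (1 - s ^ 2) * (‖q‖ ^ 2) ^ 2 := by ring
              _ ≤ (1 - s ^ 2) * (‖U.starProjection q‖ * ‖(p:V)‖) ^ 2 := by gcongr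
              _ = ‖U.starProjection q‖ ^ 2 * ((1 - s ^ 2) * ‖(p:V)‖ ^ 2) := by ring
              _ ≤ _ := by gcongr
          exact le_of_mul_le_mul_right e6 hq2
        nlinarith
  set q := W.starProjection x with hq
  set r := x - q with hrdef
  have hqW : q ∈ W := W.starProjection_apply_mem x
  have hrW : r ∈ Wᗮ := W.sub_starProjection_mem_orthogonal x
  have h3 : ‖U.starProjection r‖ ^ 2 ≤ s ^ 2 * ‖r‖ ^ 2 := by
    have h4 := H _ (U.starProjection_apply_mem r) r hrW
    have h0 : ⟪U.starProjection r, r - U.starProjection r⟫_ℝ = 0 :=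
      (U.sub_starProjection_mem_orthogonal r) _ (U.starProjection_apply_mem r)
    rw [inner_sub_right, real_inner_self_eq_norm_sq] at h0
    have h4' : ‖U.starProjection r‖ ≤ s * ‖r‖ := by
      rcases (norm_nonneg (U.starProjection r)).eq_or_lt with h | h
      · rw [← h]; positivity
      · nlinarith
    have h6 := pow_le_pow_left₀ (norm_nonneg _) h4' 2
    nlinarith
  have e : q - U.starProjection x = (q - U.starProjection q) + (- U.starProjection r) := by
    rw [hrdef, map_sub]; abel
  have horth : ⟪q - U.starProjection q, - U.starProjection r⟫_ℝ = 0 := by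
    rw [inner_neg_right, real_inner_comm, neg_eq_zero]
    exact (U.sub_starProjection_mem_orthogonal q) _ (U.starProjection_apply_mem r)
  have h7 := norm_add_sq_eq_norm_sq_add_norm_sq_of_inner_eq_zero _ _ horth
  rw [norm_neg, ← e] at h7
  have h8 := pyth W x
  have h9 := h2 q hqW
  rw [← hq, ← hrdef] at h8
  apply le_of_sq_le_sq _ (by positivity)
  nlinarith

open scoped InnerProductSpace in
lemma dk_norm_sum {V : Type*} [NormedAddCommGroup V] [InnerProductSpace ℝ V]
    {κ : Type*} [Fintype κ] (v : κ → V) (hv : Orthonormal ℝ v) (a : κ → ℝ) :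
    ‖∑ i, a i • v i‖ = √(∑ i, a i ^ 2) := by
  symm
  rw [Real.sqrt_eq_iff_mul_self_eq (Finset.sum_nonneg fun _ _ => sq_nonneg _) (norm_nonneg _),
    ← real_inner_self_eq_norm_mul_norm, hv.inner_sum]
  simp [sq]

open scoped InnerProductSpace in
lemma dk_starProj {V : Type*} [NormedAddCommGroup V] [InnerProductSpace ℝ V] [FiniteDimensional ℝ V]
    {κ : Type*} [Fintype κ] (v : κ → V) (hv : Orthonormal ℝ v) (x : V) :
    (Submodule.span ℝ (Set.range v)).starProjection x = ∑ i, ⟪v i, x⟫_ℝ • v i := by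
  classical
  apply Submodule.eq_starProjection_of_mem_of_inner_eq_zero
  · exact Submodule.sum_mem _ fun i _ => Submodule.smul_mem _ _ (Submodule.subset_span ⟨i, rfl⟩)
  · intro w hw
    obtain ⟨a, rfl⟩ := (Submodule.mem_span_range_iff_exists_fun ℝ).mp hw
    rw [inner_sub_left, hv.inner_sum, inner_sum, sub_eq_zero]
    refine Finset.sum_congr rfl fun i _ => ?_
    rw [inner_smul_right, real_inner_comm]
    simp [mul_comm]

open scoped InnerProductSpace in
lemma dk_abstract {V : Type*} [NormedAddCommGroup V] [InnerProductSpace ℝ V] [FiniteDimensional ℝ V]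
    {ι : Type*} [Fintype ι] [DecidableEq ι] (b c : OrthonormalBasis ι ℝ V) (T : V →L[ℝ] V)
    (μ ν : ι → ℝ) (hT : ∀ i j, ⟪b i, T (c j)⟫_ℝ = (ν j - μ i) * ⟪b i, c j⟫_ℝ)
    (p : ι → Prop) [DecidablePred p] (δ : ℝ) (hδ : 0 < δ)
    (hsep : ∀ i j, p i → ¬ p j → δ ≤ |μ i - ν j|) (x : V) :
    ‖∑ i : {i // p i}, ⟪c i, x⟫_ℝ • c i - ∑ i : {i // p i}, ⟪b i, x⟫_ℝ • b i‖
      ≤ Real.pi * ‖T‖ / (2 * δ) * ‖x‖ := by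
  have hb : Orthonormal ℝ (fun i : {i // p i} => b i) := b.orthonormal.comp _ Subtype.val_injective
  have hc : Orthonormal ℝ (fun i : {i // p i} => c i) := c.orthonormal.comp _ Subtype.val_injective
  have hc' : Orthonormal ℝ (fun i : {i // ¬ p i} => c i) := c.orthonormal.comp _ Subtype.val_injective
  rw [← dk_starProj _ hb x, ← dk_starProj _ hc x]
  have hpi := Real.pi_pos
  apply dk_proj _ _ _ _ (by positivity)
  · intro u hu y hy
    obtain ⟨a, rfl⟩ := (Submodule.mem_span_range_iff_exists_fun ℝ).mp hu
    have hy2 : y = ∑ j : {j // ¬ p j}, ⟪c j, y⟫_ℝ • c j := by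
      conv_lhs => rw [← c.sum_repr' y]
      rw [← Fintype.sum_subtype_add_sum_subtype p]
      rw [Finset.sum_eq_zero, zero_add]
      intro j _
      have : ⟪c j, y⟫_ℝ = 0 := hy _ (Submodule.subset_span ⟨j, rfl⟩)
      rw [this, zero_smul]
    have key := dk_sylvester (fun (i : {i // p i}) (j : {j // ¬ p j}) => ⟪b i, c j⟫_ℝ)
      (fun i => μ i) (fun j => ν j) δ hδ (fun i j => hsep i j i.2 j.2) ‖T‖ (norm_nonneg _) (by
        intro a β
        have e : ∑ i : {i // p i}, ∑ j : {j // ¬ p j}, ((μ i - ν j) * ⟪b i, c j⟫_ℝ) * a i * β j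
          = - ⟪∑ i, a i • b (i : ι), T (∑ j, β j • c (j : ι))⟫_ℝ := by
          rw [map_sum, sum_inner, ← Finset.sum_neg_distrib]
          refine Finset.sum_congr rfl fun i _ => ?_
          rw [inner_sum, ← Finset.sum_neg_distrib]
          refine Finset.sum_congr rfl fun j _ => ?_
          rw [map_smul, inner_smul_left, inner_smul_right, hT]
          simp only [conj_trivial]
          ring
        rw [e, abs_neg, ← dk_norm_sum _ hb, ← dk_norm_sum _ hc']
        refine (abs_real_inner_le_norm _ _).trans ?_
        calc _ ≤ ‖∑ i, a i • b (i : ι)‖ * (‖T‖ * ‖∑ j, β j • c (j : ι)‖) := by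
              gcongr; exact T.le_opNorm _
          _ = _ := by ring) a (fun j => ⟪c j, y⟫_ℝ)
    rw [← dk_norm_sum _ hb, ← dk_norm_sum _ hc', ← hy2] at key
    refine le_trans (le_of_eq ?_) key
    conv_lhs => rw [hy2]
    rw [sum_inner]
    refine Finset.sum_congr rfl fun i _ => ?_
    rw [inner_sum]
    refine Finset.sum_congr rfl fun j _ => ?_
    rw [inner_smul_left, inner_smul_right]
    simp only [conj_trivial]
    ring
  · rw [finrank_span_eq_card hb.linearIndependent, finrank_span_eq_card hc.linearIndependent]

abbrev DKIdx (n : ℕ) : Type := {k : ℕ // k ∈ Finset.Icc 1 n}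

open scoped InnerProductSpace in
lemma dk_basis {n : ℕ} (u : ℕ → (Fin n → ℝ))
    (hu_on : ∀ i ∈ Finset.Icc 1 n, ∀ j ∈ Finset.Icc 1 n,
      u i ⬝ᵥ u j = if i = j then 1 else 0) :
    ∃ b : OrthonormalBasis (DKIdx n) ℝ (EuclideanSpace ℝ (Fin n)),
      ∀ i : DKIdx n, b i = WithLp.toLp 2 (u i) := by
  have hon : Orthonormal ℝ (fun i : DKIdx n => WithLp.toLp 2 (u i)) := by
    rw [orthonormal_iff_ite]
    intro i j
    rw [EuclideanSpace.inner_toLp_toLp, star_trivial, hu_on _ j.2 _ i.2]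
    simp only [Subtype.ext_iff, eq_comm]
  have hsp : ⊤ ≤ Submodule.span ℝ
      (Set.range (fun i : DKIdx n => (WithLp.toLp 2 (u i) : EuclideanSpace ℝ (Fin n)))) := by
    rw [hon.linearIndependent.span_eq_top_of_card_eq_finrank' (by simp)]
  refine ⟨OrthonormalBasis.mk hon hsp, fun i => ?_⟩
  rw [OrthonormalBasis.coe_mk hon hsp]

lemma dk_sum {n : ℕ} {M : Type*} [AddCommMonoid M] (S : Finset ℕ) (hS : S ⊆ Finset.Icc 1 n)
    (F : ℕ → M) :
    ∑ i : {i : DKIdx n // (i : ℕ) ∈ S}, F i = ∑ k ∈ S, F k := by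
  refine Finset.sum_bij (fun i _ => ((i : DKIdx n) : ℕ)) ?_ ?_ ?_ ?_
  · intro i _; exact i.2
  · intro i _ j _ h; exact Subtype.ext (Subtype.ext h)
  · intro k hk; exact ⟨⟨⟨k, hS hk⟩, hk⟩, Finset.mem_univ _, rfl⟩
  · intro i _; rfl

/-- **Davis–Kahan sine theorem.**  If `|λ_i − λ̃_j| ≥ δ > 0` for every `i ∈ S` and
every `j ∉ S`, then `‖Π̃_S − Π_S‖ ≤ π‖E‖/(2δ)`. (Indices are 1-based.) -/
theorem davis_kahan_sine
    {n : ℕ} (A E : Matrix (Fin n) (Fin n) ℝ) (hA : A.IsSymm) (hE : E.IsSymm)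
    (lam tlam : ℕ → ℝ) (u tu : ℕ → (Fin n → ℝ))
    (hlam_mono : ∀ i ∈ Finset.Icc 1 n, ∀ j ∈ Finset.Icc 1 n, i ≤ j → lam j ≤ lam i)
    (htlam_mono : ∀ i ∈ Finset.Icc 1 n, ∀ j ∈ Finset.Icc 1 n, i ≤ j → tlam j ≤ tlam i)
    (hu_on : ∀ i ∈ Finset.Icc 1 n, ∀ j ∈ Finset.Icc 1 n,
      u i ⬝ᵥ u j = if i = j then 1 else 0)
    (htu_on : ∀ i ∈ Finset.Icc 1 n, ∀ j ∈ Finset.Icc 1 n,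
      tu i ⬝ᵥ tu j = if i = j then 1 else 0)
    (hu_eig : ∀ i ∈ Finset.Icc 1 n, A *ᵥ u i = lam i • u i)
    (htu_eig : ∀ i ∈ Finset.Icc 1 n, (A + E) *ᵥ tu i = tlam i • tu i)
    (S : Finset ℕ) (hS : S ⊆ Finset.Icc 1 n)
    (δ : ℝ) (hδ : 0 < δ)
    (hsep : ∀ i ∈ S, ∀ j ∈ Finset.Icc 1 n, j ∉ S → δ ≤ |lam i - tlam j|) :
    specNorm ((∑ i ∈ S, vecMulVec (tu i) (tu i)) - ∑ i ∈ S, vecMulVec (u i) (u i))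
      ≤ Real.pi * specNorm E / (2 * δ) := by
  classical
  obtain ⟨b, hb⟩ := dk_basis u hu_on
  obtain ⟨c, hc⟩ := dk_basis tu htu_on
  have hpi := Real.pi_pos
  unfold specNorm
  apply ContinuousLinearMap.opNorm_le_bound _ (by positivity)
  intro x
  have key := dk_abstract b c (LinearMap.toContinuousLinearMap (Matrix.toEuclideanLin E))
    (fun i : DKIdx n => lam i) (fun i : DKIdx n => tlam i) (by
      intro i j
      rw [hb, hc]
      simp only [LinearMap.coe_toContinuousLinearMap', Matrix.toEuclideanLin_apply,
        EuclideanSpace.inner_toLp_toLp, star_trivial]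
      have h1 : E *ᵥ tu j = tlam j • tu j - A *ᵥ tu j := by
        rw [← htu_eig _ j.2, Matrix.add_mulVec, add_sub_cancel_left]
      have h2 : (A *ᵥ tu j) ⬝ᵥ u i = lam i * (tu j ⬝ᵥ u i) := by
        rw [dotProduct_comm, Matrix.dotProduct_mulVec, ← Matrix.mulVec_transpose, hA.eq,
          hu_eig _ i.2, smul_dotProduct, dotProduct_comm, smul_eq_mul]
      rw [h1, sub_dotProduct, h2, smul_dotProduct, smul_eq_mul]
      ring)
    (fun i : DKIdx n => (i : ℕ) ∈ S) δ hδ (fun i j hi hj => hsep i hi j j.2 hj) x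
  have conv : ∀ (w : ℕ → (Fin n → ℝ)),
      ∑ k ∈ S, (inner ℝ (WithLp.toLp 2 (w k)) x : ℝ) • (WithLp.toLp 2 (w k) : EuclideanSpace ℝ (Fin n))
        = WithLp.toLp 2 ((∑ k ∈ S, vecMulVec (w k) (w k)) *ᵥ x.ofLp) := by
    intro w
    rw [Matrix.sum_mulVec, WithLp.toLp_sum]
    refine Finset.sum_congr rfl fun k _ => ?_
    rw [Matrix.vecMulVec_mulVec, EuclideanSpace.inner_eq_star_dotProduct, star_trivial,
      dotProduct_comm]
    ext l
    simp [mul_comm]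
  simp only [hb, hc] at key
  rw [dk_sum S hS (fun k => (inner ℝ (WithLp.toLp 2 (tu k)) x : ℝ) • (WithLp.toLp 2 (tu k) : EuclideanSpace ℝ (Fin n))),
    dk_sum S hS (fun k => (inner ℝ (WithLp.toLp 2 (u k)) x : ℝ) • (WithLp.toLp 2 (u k) : EuclideanSpace ℝ (Fin n))),
    conv, conv, ← WithLp.toLp_sub, ← Matrix.sub_mulVec] at key
  exact key
end

section
/- Let S be a nonempty proper subset of {1,…,n} and set δ_S := min_{i∈S, j∉S} |λ_i − λ_j|. If δ_S > 0, then ‖Π̃_S − Π_S‖ ≤ π‖E‖/δ_S. -/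
open Matrix

section DK
open MeasureTheory Set

noncomputable def dkA (y : ℝ) : ℝ := if |y| ≤ 1 then 1 + y else y⁻¹ - (y^2)⁻¹
noncomputable def dkB (y : ℝ) : ℝ := if 0 < y then Real.exp (-y) else 0

lemma dkA_meas : Measurable dkA := by
  unfold dkA
  refine Measurable.ite (measurableSet_le (by fun_prop) (by fun_prop)) (by fun_prop) (by fun_prop)

lemma dkB_meas : Measurable dkB := by
  unfold dkB
  refine Measurable.ite (measurableSet_lt (by fun_prop) (by fun_prop)) (by fun_prop) (by fun_prop)

lemma dkB_sq : (fun y => dkB y ^ 2) = (Ioi (0:ℝ)).indicator (fun y => Real.exp (-2 * y)) := by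
  ext y
  simp only [dkB, indicator, mem_Ioi]
  split_ifs
  · rw [← Real.exp_nat_mul]; congr 1; push_cast; ring
  · simp

lemma dkB_int : Integrable (fun y => dkB y ^ 2) := by
  rw [dkB_sq, integrable_indicator_iff measurableSet_Ioi]
  exact integrableOn_exp_mul_Ioi (by norm_num) 0

lemma dkB_val : ∫ y, dkB y ^ 2 = 1/2 := by
  rw [dkB_sq, integral_indicator measurableSet_Ioi, integral_exp_mul_Ioi (by norm_num)]
  norm_num

/-- dominating function for `dkA ^ 2`. -/
lemma dkA_bound (y : ℝ) : dkA y ^ 2 ≤ (Icc (-1:ℝ) 1).indicator (fun y => (1+y)^2) y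
    + (Ioi (1:ℝ)).indicator (fun y => y ^ (-2:ℝ)) y
    + 4 * (Ioi (1:ℝ)).indicator (fun y => y ^ (-2:ℝ)) (-y) := by
  have key : ∀ z : ℝ, 1 < z → z ^ (-2:ℝ) = (z^2)⁻¹ := by
    intro z hz
    rw [Real.rpow_neg (by linarith)]; norm_num
  simp only [dkA, indicator, mem_Icc, mem_Ioi, abs_le]
  by_cases h1 : -1 ≤ y ∧ y ≤ 1
  · have h2 : ¬ (1 < y) := by linarith
    have h3 : ¬ (1 < -y) := by linarith
    simp [h1, h2, h3]
  · simp only [h1, if_false]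
    by_cases h2 : 1 < y
    · have h3 : ¬ (1 < -y) := by linarith
      simp only [h2, h3, if_true, if_false, key y h2]
      have h4 : 0 ≤ y⁻¹ := by positivity
      have h5 : y⁻¹ ≤ 1 := inv_le_one_of_one_le₀ h2.le
      have : (y^2)⁻¹ = y⁻¹^2 := by rw [inv_pow]
      rw [this]
      generalize y⁻¹ = z at *
      nlinarith [mul_nonneg h4 (sub_nonneg.2 h5), mul_nonneg (mul_nonneg h4 h4) h4, mul_nonneg h4 h4, mul_nonneg (mul_nonneg (mul_nonneg h4 h4) h4) (sub_nonneg.2 h5)]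
    · have h3 : 1 < -y := by
        by_contra h; exact h1 ⟨by linarith, by linarith⟩
      simp only [h2, h3, if_true, if_false, key _ h3]
      have h4 : 0 ≤ (-y)⁻¹ := by positivity
      have h5 : (-y)⁻¹ ≤ 1 := inv_le_one_of_one_le₀ h3.le
      have : (y^2)⁻¹ = (-y)⁻¹^2 := by rw [inv_pow]; simp
      have hq : y⁻¹ = -(-y)⁻¹ := by rw [inv_neg]; simp
      have h6 : ((-y)^2)⁻¹ = (-y)⁻¹^2 := by rw [inv_pow]
      rw [this, hq, h6]
      generalize (-y)⁻¹ = z at *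
      have : z^2 ≤ z := by nlinarith
      have h8 : (-z - z^2)^2 = (z + z^2)^2 := by ring
      rw [h8]
      have : (z+z^2)^2 ≤ (z+z)^2 := by gcongr
      linarith

lemma dk_dom_int : Integrable (fun y : ℝ => (Icc (-1:ℝ) 1).indicator (fun y => (1+y)^2) y
    + (Ioi (1:ℝ)).indicator (fun y => y ^ (-2:ℝ)) y
    + 4 * (Ioi (1:ℝ)).indicator (fun y => y ^ (-2:ℝ)) (-y)) ∧
    ∫ y : ℝ, ((Icc (-1:ℝ) 1).indicator (fun y => (1+y)^2) y
    + (Ioi (1:ℝ)).indicator (fun y => y ^ (-2:ℝ)) y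
    + 4 * (Ioi (1:ℝ)).indicator (fun y => y ^ (-2:ℝ)) (-y)) ≤ 8 := by
  have i1 : Integrable ((Icc (-1:ℝ) 1).indicator (fun y : ℝ => (1+y)^2)) := by
    rw [integrable_indicator_iff measurableSet_Icc]
    exact (Continuous.continuousOn (by fun_prop)).integrableOn_Icc
  have i2 : Integrable ((Ioi (1:ℝ)).indicator (fun y : ℝ => y ^ (-2:ℝ))) := by
    rw [integrable_indicator_iff measurableSet_Ioi]
    exact integrableOn_Ioi_rpow_of_lt (by norm_num) (by norm_num)
  have i3 := i2.comp_neg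
  have v1 : ∫ y, (Icc (-1:ℝ) 1).indicator (fun y : ℝ => (1+y)^2) y = 8/3 := by
    rw [integral_indicator measurableSet_Icc, integral_Icc_eq_integral_Ioc,
      ← intervalIntegral.integral_of_le (by norm_num)]
    have := intervalIntegral.integral_comp_add_left (a := -1) (b := 1) (fun x : ℝ => x^2) 1
    rw [this]
    norm_num [integral_pow]
  have v2 : ∫ y, (Ioi (1:ℝ)).indicator (fun y : ℝ => y ^ (-2:ℝ)) y = 1 := by
    rw [integral_indicator measurableSet_Ioi, integral_Ioi_rpow_of_lt (by norm_num) (by norm_num)]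
    norm_num
  have v3 : ∫ y, (Ioi (1:ℝ)).indicator (fun y : ℝ => y ^ (-2:ℝ)) (-y) = 1 := by
    rw [integral_neg_eq_self (fun y => (Ioi (1:ℝ)).indicator (fun y : ℝ => y ^ (-2:ℝ)) y), v2]
  refine ⟨(i1.add i2).add (i3.const_mul 4), ?_⟩
  have h12 : ∫ y, ((Icc (-1:ℝ) 1).indicator (fun y : ℝ => (1+y)^2) y
      + (Ioi (1:ℝ)).indicator (fun y : ℝ => y ^ (-2:ℝ)) y) = 8/3 + 1 := by
    rw [integral_add i1 i2, v1, v2]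
  have i12 : Integrable (fun y => (Icc (-1:ℝ) 1).indicator (fun y : ℝ => (1+y)^2) y
      + (Ioi (1:ℝ)).indicator (fun y : ℝ => y ^ (-2:ℝ)) y) := i1.add i2
  rw [integral_add i12 (i3.const_mul 4), h12, integral_const_mul, v3]
  norm_num

lemma dkA_int : Integrable (fun y => dkA y ^ 2) := by
  refine dk_dom_int.1.mono' (dkA_meas.pow_const 2).aestronglyMeasurable ?_
  filter_upwards with y
  rw [Real.norm_of_nonneg (by positivity)]
  exact dkA_bound y

lemma dkA_val : ∫ y, dkA y ^ 2 ≤ 8 :=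
  (integral_mono dkA_int dk_dom_int.1 dkA_bound).trans dk_dom_int.2

lemma dkAB_int (p q : ℝ) : Integrable (fun s => dkA (p - s) * dkB (s - q)) := by
  have h1 : MemLp (fun s => dkA (p - s)) 2 := by
    rw [memLp_two_iff_integrable_sq (show Measurable (fun s => dkA (p - s)) from dkA_meas.comp (by fun_prop)).aestronglyMeasurable]
    exact dkA_int.comp_sub_left p
  have h2 : MemLp (fun s => dkB (s - q)) 2 := by
    rw [memLp_two_iff_integrable_sq (show Measurable (fun s => dkB (s - q)) from dkB_meas.comp (by fun_prop)).aestronglyMeasurable]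
    exact dkB_int.comp_sub_right q
  exact h1.integrable_mul h2

lemma dk_deriv (x y : ℝ) (hy : y ≠ 0) : HasDerivAt (fun y => Real.exp (y - x) * y⁻¹)
    ((y⁻¹ - (y^2)⁻¹) * Real.exp (y - x)) y := by
  have h1 : HasDerivAt (fun y => Real.exp (y - x)) (Real.exp (y - x)) y := by
    simpa using ((hasDerivAt_id y).sub_const x).exp
  refine (h1.mul (hasDerivAt_inv hy)).congr_deriv ?_
  ring

lemma dk_deriv2 (x y : ℝ) : HasDerivAt (fun y => Real.exp (y - x) * y)
    ((1 + y) * Real.exp (y - x)) y := by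
  have h1 : HasDerivAt (fun y => Real.exp (y - x)) (Real.exp (y - x)) y := by
    simpa using ((hasDerivAt_id y).sub_const x).exp
  refine (h1.mul (hasDerivAt_id y)).congr_deriv ?_
  simp only [id]; ring

lemma dkA_out {y : ℝ} (hy : 1 < |y|) : dkA y = y⁻¹ - (y^2)⁻¹ := by
  simp [dkA, not_le.2 hy]

lemma dk_intOn (x : ℝ) : IntegrableOn (fun y => dkA y * Real.exp (y - x)) (Iio x) := by
  have h := (dkAB_int x 0).comp_sub_left x
  rw [← integrable_indicator_iff measurableSet_Iio]
  refine h.congr (Filter.Eventually.of_forall fun y => ?_)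
  simp only [indicator, mem_Iio, dkB]
  by_cases hh : y < x
  · simp [hh]
  · simp [hh]

lemma dk_left (x z : ℝ) (hz : z ≤ -1) (hzx : z ≤ x) :
    ∫ y in Iio z, dkA y * Real.exp (y - x) = Real.exp (z - x) * z⁻¹ := by
  have e : EqOn (fun y => dkA y * Real.exp (y - x))
      (fun y => (y⁻¹ - (y^2)⁻¹) * Real.exp (y - x)) (Iio z) := by
    intro y hy
    have hy : y < z := hy
    simp only
    rw [dkA_out]
    rw [lt_abs]; right; linarith
  have hi := (dk_intOn x).mono_set (Iio_subset_Iio hzx)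
  rw [integrableOn_congr_fun e measurableSet_Iio, ← integrableOn_Iic_iff_integrableOn_Iio] at hi
  rw [setIntegral_congr_fun measurableSet_Iio e, ← integral_Iic_eq_integral_Iio]
  rw [integral_Iic_of_hasDerivAt_of_tendsto' (m := 0) (f := fun y => Real.exp (y - x) * y⁻¹)
    (fun y hy => dk_deriv x y (by have : y ≤ z := hy
                                  intro h; linarith)) hi ?_]
  · simp
  · have h1 : Filter.Tendsto (fun y : ℝ => Real.exp (y - x)) Filter.atBot (nhds 0) :=
      Real.tendsto_exp_atBot.comp (Filter.tendsto_atBot_add_const_right _ (-x) Filter.tendsto_id)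
    simpa using h1.mul (tendsto_inv_atBot_zero (𝕜 := ℝ))

lemma dk_kernel0 (x : ℝ) (hx : 1 ≤ |x|) :
    ∫ y in Iio x, dkA y * Real.exp (y - x) = x⁻¹ := by
  by_cases h : x ≤ -1
  · rw [dk_left x x h le_rfl]; simp
  have hx1 : 1 ≤ x := by
    rcases le_abs.1 hx with hq | hq
    · exact hq
    · exact absurd (by linarith) h
  have hi := dk_intOn x
  have hs : Iio x = Iio (-1) ∪ Ico (-1) x := (Iio_union_Ico_eq_Iio (by linarith)).symm
  have hs2 : Ico (-1) x = Ico (-1) 1 ∪ Ico 1 x := (Ico_union_Ico_eq_Ico (by linarith) hx1).symm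
  have hi1 := hi.mono_set (Iio_subset_Iio (show (-1:ℝ) ≤ x by linarith))
  have hi2 : IntegrableOn (fun y => dkA y * Real.exp (y - x)) (Ico (-1) 1) :=
    hi.mono_set (fun y hy => lt_of_lt_of_le hy.2 hx1)
  have hi3 : IntegrableOn (fun y => dkA y * Real.exp (y - x)) (Ico 1 x) :=
    hi.mono_set (fun y hy => hy.2)
  have d1 : Disjoint (Ico (-1:ℝ) 1) (Ico 1 x) := by
    rw [Set.disjoint_left]; intro y hy hyq; linarith [hy.2, hyq.1]
  have d2 : Disjoint (Iio (-1:ℝ)) (Ico (-1) 1 ∪ Ico 1 x) := by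
    rw [← hs2, Set.disjoint_left]; intro y hy hyq; exact absurd hyq.1 (not_le.2 hy)
  rw [hs, hs2, setIntegral_union d2 (measurableSet_Ico.union measurableSet_Ico) hi1 (hi2.union hi3),
    setIntegral_union d1 measurableSet_Ico hi2 hi3, dk_left x (-1) le_rfl (by linarith)]
  have e2 : ∫ y in Ico (-1) 1, dkA y * Real.exp (y - x)
      = Real.exp (1 - x) * 1 - Real.exp (-1 - x) * (-1) := by
    rw [setIntegral_congr_fun (g := fun y => (1 + y) * Real.exp (y - x)) measurableSet_Ico,
      integral_Ico_eq_integral_Ioo, ← integral_Ioc_eq_integral_Ioo,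
      ← intervalIntegral.integral_of_le (by norm_num)]
    · exact intervalIntegral.integral_eq_sub_of_hasDerivAt (f := fun y => Real.exp (y - x) * y)
        (fun y _ => dk_deriv2 x y) (Continuous.intervalIntegrable (by fun_prop) _ _)
    · intro y hy
      simp [dkA, abs_le, hy.1, hy.2.le]
  have e3 : ∫ y in Ico 1 x, dkA y * Real.exp (y - x)
      = Real.exp (x - x) * x⁻¹ - Real.exp (1 - x) * 1⁻¹ := by
    rw [integral_Ico_eq_integral_Ioo,
      setIntegral_congr_fun (g := fun y => (y⁻¹ - (y^2)⁻¹) * Real.exp (y - x)) measurableSet_Ioo,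
      ← integral_Ioc_eq_integral_Ioo, ← intervalIntegral.integral_of_le hx1]
    · refine intervalIntegral.integral_eq_sub_of_hasDerivAt (f := fun y => Real.exp (y - x) * y⁻¹)
        (fun y hy => dk_deriv x y ?_) (ContinuousOn.intervalIntegrable ?_)
      · rw [uIcc_of_le hx1] at hy
        linarith [hy.1]
      · rw [uIcc_of_le hx1]
        have : ∀ y ∈ Icc 1 x, y ≠ 0 := fun y hy => by linarith [hy.1]
        refine ContinuousOn.mul (ContinuousOn.sub (continuousOn_id.inv₀ this)
          (ContinuousOn.inv₀ (by fun_prop) fun y hy => pow_ne_zero 2 (this y hy))) (by fun_prop)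
    · intro y hy
      simp only
      rw [dkA_out]
      exact lt_of_lt_of_le hy.1 (le_abs_self y)
  rw [e2, e3]
  norm_num
  ring

lemma dk_kernel (p q : ℝ) (h : 1 ≤ |p - q|) :
    ∫ s, dkA (p - s) * dkB (s - q) = (p - q)⁻¹ := by
  rw [← dk_kernel0 (p - q) h, ← integral_indicator measurableSet_Iio]
  rw [← integral_sub_left_eq_self
    ((Iio (p - q)).indicator fun y => dkA y * Real.exp (y - (p - q))) volume p]
  congr 1; ext s
  simp only [indicator, mem_Iio, dkB]
  by_cases hh : p - s < p - q
  · have : 0 < s - q := by linarith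
    rw [if_pos hh, if_pos this]; congr 2; ring
  · have : ¬ 0 < s - q := by linarith
    rw [if_neg hh, if_neg this, mul_zero]

lemma dk_norm_sq {n : ℕ} {H : Type*} [NormedAddCommGroup H] [InnerProductSpace ℝ H]
    (U : OrthonormalBasis (Fin n) ℝ H) (S : Finset (Fin n)) (c : Fin n → ℝ) :
    ‖∑ i ∈ S, c i • U i‖ ^ 2 = ∑ i ∈ S, c i ^ 2 := by
  rw [← real_inner_self_eq_norm_sq]
  have := U.orthonormal.inner_sum c c S
  simpa [sq] using this

lemma dk_schur {n : ℕ} {H : Type*} [NormedAddCommGroup H] [InnerProductSpace ℝ H]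
    (U V : OrthonormalBasis (Fin n) ℝ H) (E : H →ₗ[ℝ] H) (ε : ℝ) (hε : 0 ≤ ε)
    (hE : ∀ x, ‖E x‖ ≤ ε * ‖x‖) (S T : Finset (Fin n)) (p q : Fin n → ℝ)
    (hpq : ∀ i ∈ S, ∀ j ∈ T, 1 ≤ |p i - q j|) (α β : Fin n → ℝ) :
    |∑ i ∈ S, ∑ j ∈ T, α i * β j * (inner ℝ (U i) (E (V j)) * (p i - q j)⁻¹)|
      ≤ ε * (∑ i ∈ S, α i ^ 2 + ∑ j ∈ T, β j ^ 2) := by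
  have h1 : ∑ i ∈ S, ∑ j ∈ T, α i * β j * (inner ℝ (U i) (E (V j)) * (p i - q j)⁻¹)
      = ∫ s, inner ℝ (∑ i ∈ S, (α i * dkA (p i - s)) • U i)
          (E (∑ j ∈ T, (β j * dkB (s - q j)) • V j)) := by
    have e : ∀ s, inner ℝ (∑ i ∈ S, (α i * dkA (p i - s)) • U i)
          (E (∑ j ∈ T, (β j * dkB (s - q j)) • V j)) = ∑ i ∈ S, ∑ j ∈ T,
          (α i * β j * inner ℝ (U i) (E (V j))) * (dkA (p i - s) * dkB (s - q j)) := by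
      intro s
      rw [map_sum, sum_inner]
      refine Finset.sum_congr rfl fun i _ => ?_
      rw [inner_sum]
      refine Finset.sum_congr rfl fun j _ => ?_
      rw [map_smul, inner_smul_left, inner_smul_right]
      simp only [conj_trivial]
      ring
    simp_rw [e]
    rw [integral_finsetSum _ fun i _ => integrable_finsetSum _ fun j _ =>
      (dkAB_int (p i) (q j)).const_mul _]
    refine Finset.sum_congr rfl fun i hi => ?_
    rw [integral_finsetSum _ fun j _ => (dkAB_int (p i) (q j)).const_mul _]
    refine Finset.sum_congr rfl fun j hj => ?_
    rw [integral_const_mul, dk_kernel _ _ (hpq i hi j hj)]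
    ring
  rw [h1]
  have iA : ∀ i, Integrable (fun s => α i ^ 2 * dkA (p i - s) ^ 2) := fun i =>
    (dkA_int.comp_sub_left (p i)).const_mul _
  have iB : ∀ j, Integrable (fun s => β j ^ 2 * dkB (s - q j) ^ 2) := fun j =>
    (dkB_int.comp_sub_right (q j)).const_mul _
  have iSA : Integrable (fun s => ∑ i ∈ S, α i ^ 2 * dkA (p i - s) ^ 2) :=
    integrable_finsetSum _ fun i _ => iA i
  have iSB : Integrable (fun s => ∑ j ∈ T, β j ^ 2 * dkB (s - q j) ^ 2) :=
    integrable_finsetSum _ fun j _ => iB j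
  have vA : ∫ s, ∑ i ∈ S, α i ^ 2 * dkA (p i - s) ^ 2 ≤ 8 * ∑ i ∈ S, α i ^ 2 := by
    rw [integral_finsetSum _ fun i _ => iA i, Finset.mul_sum]
    refine Finset.sum_le_sum fun i _ => ?_
    rw [integral_const_mul, integral_sub_left_eq_self (fun y => dkA y ^ 2) volume (p i)]
    nlinarith [dkA_val, sq_nonneg (α i)]
  have vB : ∫ s, ∑ j ∈ T, β j ^ 2 * dkB (s - q j) ^ 2 = 1/2 * ∑ j ∈ T, β j ^ 2 := by
    rw [integral_finsetSum _ fun i _ => iB i, Finset.mul_sum]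
    refine Finset.sum_congr rfl fun i _ => ?_
    rw [integral_const_mul, integral_sub_right_eq_self (fun y => dkB y ^ 2) (q i), dkB_val]
    ring
  rw [← Real.norm_eq_abs]
  have hb : ∀ s, ‖(inner ℝ (∑ i ∈ S, (α i * dkA (p i - s)) • U i)
          (E (∑ j ∈ T, (β j * dkB (s - q j)) • V j)) : ℝ)‖ ≤
          ε * (1/8 * (∑ i ∈ S, α i ^ 2 * dkA (p i - s) ^ 2)
            + 2 * ∑ j ∈ T, β j ^ 2 * dkB (s - q j) ^ 2) := by
    intro s
    have e1 := dk_norm_sq U S (fun i => α i * dkA (p i - s))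
    have e2 := dk_norm_sq V T (fun j => β j * dkB (s - q j))
    simp only [mul_pow] at e1 e2
    rw [← e1, ← e2]
    refine (norm_inner_le_norm _ _).trans ?_
    refine (mul_le_mul_of_nonneg_left (hE _) (norm_nonneg _)).trans ?_
    generalize ‖∑ i ∈ S, (α i * dkA (p i - s)) • U i‖ = a
    generalize ‖∑ j ∈ T, (β j * dkB (s - q j)) • V j‖ = b
    nlinarith [mul_nonneg hε (sq_nonneg (a - 4 * b))]
  refine (norm_integral_le_of_norm_le (((iSA.const_mul (1/8)).add (iSB.const_mul 2)).const_mul ε)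
    (Filter.Eventually.of_forall hb)).trans ?_
  simp only [Pi.add_apply]
  rw [integral_const_mul, integral_add (iSA.const_mul (1/8)) (iSB.const_mul 2),
    integral_const_mul, integral_const_mul, vB]
  refine mul_le_mul_of_nonneg_left ?_ hε
  linarith

/-- Combination of the two off-diagonal blocks. -/
lemma dk_combine {n : ℕ} {H : Type*} [NormedAddCommGroup H] [InnerProductSpace ℝ H]
    (U V : OrthonormalBasis (Fin n) ℝ H) (S : Finset (Fin n)) (K : ℝ)
    (h1 : ∀ α β : Fin n → ℝ, |∑ i ∈ S, ∑ j ∈ Sᶜ, α i * β j * inner ℝ (U i) (V j)|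
      ≤ K / 2 * (∑ i ∈ S, α i ^ 2 + ∑ j ∈ Sᶜ, β j ^ 2))
    (h2 : ∀ α β : Fin n → ℝ, |∑ i ∈ Sᶜ, ∑ j ∈ S, α i * β j * inner ℝ (U i) (V j)|
      ≤ K / 2 * (∑ i ∈ Sᶜ, α i ^ 2 + ∑ j ∈ S, β j ^ 2)) (x : H) :
    ‖∑ i ∈ S, (inner ℝ (V i) x : ℝ) • V i - ∑ i ∈ S, (inner ℝ (U i) x : ℝ) • U i‖ ≤ K * ‖x‖ := by
  set D := ∑ i ∈ S, (inner ℝ (V i) x : ℝ) • V i - ∑ i ∈ S, (inner ℝ (U i) x : ℝ) • U i with hD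
  have parU : ∀ y : H, ∑ i ∈ S, (inner ℝ (U i) y : ℝ) ^ 2 + ∑ i ∈ Sᶜ, (inner ℝ (U i) y : ℝ) ^ 2
      = ‖y‖ ^ 2 := by
    intro y
    rw [Finset.sum_add_sum_compl, ← U.sum_sq_norm_inner_right y]
    simp
  have parV : ∀ y : H, ∑ i ∈ S, (inner ℝ (V i) y : ℝ) ^ 2 + ∑ i ∈ Sᶜ, (inner ℝ (V i) y : ℝ) ^ 2
      = ‖y‖ ^ 2 := by
    intro y
    rw [Finset.sum_add_sum_compl, ← V.sum_sq_norm_inner_right y]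
    simp
  have key : ∀ y : H, inner ℝ y D ≤ K / 2 * (‖y‖ ^ 2 + ‖x‖ ^ 2) := by
    intro y
    have blk : ∀ P Q : Finset (Fin n), ∑ i ∈ P, ∑ j ∈ Q, (inner ℝ (U i) y : ℝ) * inner ℝ (V j) x *
        inner ℝ (U i) (V j) = inner ℝ (∑ i ∈ P, (inner ℝ (U i) y : ℝ) • U i)
          (∑ j ∈ Q, (inner ℝ (V j) x : ℝ) • V j) := by
      intro P Q
      rw [sum_inner]
      refine Finset.sum_congr rfl fun i _ => ?_
      rw [inner_sum]
      refine Finset.sum_congr rfl fun j _ => ?_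
      rw [inner_smul_left, inner_smul_right]
      simp only [conj_trivial]
      ring
    have k1 := h1 (fun i => inner ℝ (U i) y) (fun j => inner ℝ (V j) x)
    have k2 := h2 (fun i => inner ℝ (U i) y) (fun j => inner ℝ (V j) x)
    simp only [blk] at k1 k2
    have hy : ∑ i ∈ S, (inner ℝ (U i) y : ℝ) • U i + ∑ i ∈ Sᶜ, (inner ℝ (U i) y : ℝ) • U i = y := by
      rw [Finset.sum_add_sum_compl]; exact U.sum_repr' y
    have hx : ∑ i ∈ S, (inner ℝ (V i) x : ℝ) • V i + ∑ i ∈ Sᶜ, (inner ℝ (V i) x : ℝ) • V i = x := by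
      rw [Finset.sum_add_sum_compl]; exact V.sum_repr' x
    have hyU : inner ℝ y (∑ i ∈ S, (inner ℝ (U i) x : ℝ) • U i)
        = inner ℝ (∑ i ∈ S, (inner ℝ (U i) y : ℝ) • U i) x := by
      rw [sum_inner, inner_sum]
      refine Finset.sum_congr rfl fun i _ => ?_
      rw [inner_smul_left, inner_smul_right, real_inner_comm y (U i)]
      simp only [conj_trivial]
      ring
    have pu := parU y
    have pv := parV x
    have hDy : inner ℝ y D = inner ℝ (∑ i ∈ Sᶜ, (inner ℝ (U i) y : ℝ) • U i)
          (∑ j ∈ S, (inner ℝ (V j) x : ℝ) • V j) - inner ℝ (∑ i ∈ S, (inner ℝ (U i) y : ℝ) • U i)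
          (∑ j ∈ Sᶜ, (inner ℝ (V j) x : ℝ) • V j) := by
      rw [hD, inner_sub_right, hyU]
      generalize (∑ i ∈ S, (inner ℝ (U i) y : ℝ) • U i) = y1 at *
      generalize (∑ i ∈ Sᶜ, (inner ℝ (U i) y : ℝ) • U i) = y2 at *
      generalize (∑ i ∈ S, (inner ℝ (V i) x : ℝ) • V i) = x1 at *
      generalize (∑ i ∈ Sᶜ, (inner ℝ (V i) x : ℝ) • V i) = x2 at *
      rw [← hx, ← hy, inner_add_left, inner_add_right]
      ring
    rw [hDy, ← pu, ← pv]
    have := (abs_le.1 k1).1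
    have := (abs_le.1 k2).2
    linarith
  by_cases hD0 : ‖D‖ = 0
  · rw [hD0]
    by_cases hx0 : ‖x‖ = 0
    · rw [hx0]; simp
    · have := key 0
      simp only [inner_zero_left, norm_zero] at this
      have hxp : 0 < ‖x‖ := lt_of_le_of_ne (norm_nonneg _) (Ne.symm hx0)
      have : 0 ≤ K := by
        by_contra hK
        push Not at hK
        nlinarith [mul_pos hxp hxp]
      positivity
  · have hDp : 0 < ‖D‖ := lt_of_le_of_ne (norm_nonneg _) (Ne.symm hD0)
    have hxp : 0 < ‖x‖ := by
      rcases (norm_nonneg x).lt_or_eq with h | h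
      · exact h
      · exfalso
        have : x = 0 := norm_eq_zero.1 h.symm
        apply hD0
        rw [hD, this]; simp
    have k := key ((‖x‖ / ‖D‖) • D)
    rw [inner_smul_left, real_inner_self_eq_norm_sq, norm_smul, Real.norm_of_nonneg (by positivity),
      div_mul_cancel₀ _ hD0] at k
    simp only [conj_trivial] at k
    have : ‖x‖ / ‖D‖ * ‖D‖ ^ 2 = ‖x‖ * ‖D‖ := by field_simp
    rw [this] at k
    have : ‖x‖ * ‖D‖ ≤ ‖x‖ * (K * ‖x‖) := by nlinarith
    exact le_of_mul_le_mul_left this hxp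

/-- One half of Weyl's inequality. -/
lemma dk_weyl {n : ℕ} {H : Type*} [NormedAddCommGroup H] [InnerProductSpace ℝ H]
    (U V : OrthonormalBasis (Fin n) ℝ H) (A B : H →ₗ[ℝ] H) (ε : ℝ)
    (hE : ∀ x, ‖A x - B x‖ ≤ ε * ‖x‖) (l m : Fin n → ℝ)
    (hl : ∀ i j, i ≤ j → l j ≤ l i) (hm : ∀ i j, i ≤ j → m j ≤ m i)
    (hA : ∀ i, A (U i) = l i • U i) (hB : ∀ i, B (V i) = m i • V i) (i : Fin n) :
    l i - m i ≤ ε := by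
  have quad : ∀ (W : OrthonormalBasis (Fin n) ℝ H) (C : H →ₗ[ℝ] H) (c : Fin n → ℝ)
      (_ : ∀ i, C (W i) = c i • W i) (x : H),
      inner ℝ x (C x) = ∑ k, c k * (inner ℝ (W k) x : ℝ) ^ 2 := by
    intro W C c hC x
    conv_lhs => rw [← W.sum_repr' x]
    rw [map_sum]
    simp only [map_smul, hC, smul_smul]
    rw [W.orthonormal.inner_sum]
    refine Finset.sum_congr rfl fun k _ => ?_
    simp only [conj_trivial]; ring
  have par : ∀ (W : OrthonormalBasis (Fin n) ℝ H) (x : H),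
      ∑ k, (inner ℝ (W k) x : ℝ) ^ 2 = ‖x‖ ^ 2 := by
    intro W x
    rw [← W.sum_sq_norm_inner_right x]; simp
  have : FiniteDimensional ℝ H := U.toBasis.finiteDimensional_of_finite
  let L : H →ₗ[ℝ] ({k : Fin n // k ≠ i} → ℝ) :=
    LinearMap.pi fun k => if i < k.1 then (innerSL ℝ (U k.1)).toLinearMap
      else (innerSL ℝ (V k.1)).toLinearMap
  have hker : LinearMap.ker L ≠ ⊥ := by
    apply LinearMap.ker_ne_bot_of_finrank_lt
    rw [Module.finrank_eq_card_basis U.toBasis, Module.finrank_fintype_fun_eq_card]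
    exact Fintype.card_subtype_lt (x := i) (by simp)
  obtain ⟨x, hx, hx0⟩ := Submodule.exists_mem_ne_zero_of_ne_bot hker
  have hLx : ∀ k : Fin n, k ≠ i → (if i < k then (innerSL ℝ (U k)).toLinearMap
      else (innerSL ℝ (V k)).toLinearMap) x = 0 := by
    intro k hk
    have := congrFun (LinearMap.mem_ker.1 hx) ⟨k, hk⟩
    simpa [L] using this
  have hU : ∀ k, i < k → (inner ℝ (U k) x : ℝ) = 0 := by
    intro k hk
    have := hLx k hk.ne'
    rw [if_pos hk] at this
    simpa using this
  have hV : ∀ k, k < i → (inner ℝ (V k) x : ℝ) = 0 := by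
    intro k hk
    have := hLx k hk.ne
    rw [if_neg (not_lt.2 hk.le)] at this
    simpa using this
  have q1 : l i * ‖x‖ ^ 2 ≤ inner ℝ x (A x) := by
    rw [quad U A l hA x, ← par U x, Finset.mul_sum]
    refine Finset.sum_le_sum fun k _ => ?_
    rcases lt_or_ge i k with h | h
    · rw [hU k h]; simp
    · exact mul_le_mul_of_nonneg_right (hl _ _ h) (sq_nonneg _)
  have q2 : inner ℝ x (B x) ≤ m i * ‖x‖ ^ 2 := by
    rw [quad V B m hB x, ← par V x, Finset.mul_sum]
    refine Finset.sum_le_sum fun k _ => ?_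
    rcases lt_or_ge k i with h | h
    · rw [hV k h]; simp
    · exact mul_le_mul_of_nonneg_right (hm _ _ h) (sq_nonneg _)
  have q3 : inner ℝ x (A x) - inner ℝ x (B x) ≤ ε * ‖x‖ ^ 2 := by
    rw [← inner_sub_right]
    refine (real_inner_le_norm _ _).trans ?_
    nlinarith [hE x, norm_nonneg x]
  have hxp : 0 < ‖x‖ ^ 2 := by positivity
  refine le_of_mul_le_mul_right ?_ hxp
  linarith

lemma dk_core {n : ℕ} {H : Type*} [NormedAddCommGroup H] [InnerProductSpace ℝ H]
    (U V : OrthonormalBasis (Fin n) ℝ H) (A E : H →ₗ[ℝ] H) (ε δ : ℝ) (hε : 0 ≤ ε) (hδ : 0 < δ)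
    (hsym : ∀ x y, (inner ℝ (A x) y : ℝ) = inner ℝ x (A y))
    (hE : ∀ x, ‖E x‖ ≤ ε * ‖x‖) (l m : Fin n → ℝ)
    (hl : ∀ i j, i ≤ j → l j ≤ l i) (hm : ∀ i j, i ≤ j → m j ≤ m i)
    (hA : ∀ i, A (U i) = l i • U i) (hB : ∀ i, (A + E) (V i) = m i • V i)
    (S : Finset (Fin n)) (hgap : ∀ i ∈ S, ∀ j ∈ Sᶜ, δ ≤ |l i - l j|) (x : H) :
    ‖∑ i ∈ S, (inner ℝ (V i) x : ℝ) • V i - ∑ i ∈ S, (inner ℝ (U i) x : ℝ) • U i‖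
      ≤ (Real.pi * ε / δ) * ‖x‖ := by
  have w1 : ∀ i, l i - m i ≤ ε := dk_weyl U V A (A + E) ε (by
    intro x; simpa using hE x) l m hl hm hA hB
  have w2 : ∀ i, m i - l i ≤ ε := dk_weyl V U (A + E) A ε (by
    intro x; simpa using hE x) m l hm hl hB hA
  have hpi := Real.pi_gt_three
  by_cases hc : δ ≤ Real.pi * ε
  · have triv : ∀ (P Q : Finset (Fin n)) (α β : Fin n → ℝ),
        |∑ i ∈ P, ∑ j ∈ Q, α i * β j * inner ℝ (U i) (V j)|
        ≤ 1 / 2 * (∑ i ∈ P, α i ^ 2 + ∑ j ∈ Q, β j ^ 2) := by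
      intro P Q α β
      have : ∑ i ∈ P, ∑ j ∈ Q, α i * β j * inner ℝ (U i) (V j)
          = inner ℝ (∑ i ∈ P, α i • U i) (∑ j ∈ Q, β j • V j) := by
        rw [sum_inner]
        refine Finset.sum_congr rfl fun i _ => ?_
        rw [inner_sum]
        refine Finset.sum_congr rfl fun j _ => ?_
        rw [inner_smul_left, inner_smul_right]
        simp only [conj_trivial]
        ring
      rw [this, ← dk_norm_sq U, ← dk_norm_sq V]
      refine (abs_real_inner_le_norm _ _).trans ?_
      nlinarith [sq_nonneg (‖∑ i ∈ P, α i • U i‖ - ‖∑ j ∈ Q, β j • V j‖)]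
    refine (dk_combine U V S 1 (triv _ _) (triv _ _) x).trans ?_
    refine mul_le_mul_of_nonneg_right ?_ (norm_nonneg _)
    rwa [le_div_iff₀ hδ, one_mul]
  · push Not at hc
    have hd : 0 < δ - ε := by nlinarith
    set d := δ - ε with hdd
    have gap : ∀ i j, δ ≤ |l i - l j| → d ≤ |l i - m j| := by
      intro i j h
      have h1 : |l i - l j| ≤ |l i - m j| + |m j - l j| := abs_sub_le _ _ _
      have h2 : |m j - l j| ≤ ε := abs_le.2 ⟨by linarith [w1 j], w2 j⟩
      linarith
    have blk : ∀ (P Q : Finset (Fin n)), (∀ i ∈ P, ∀ j ∈ Q, δ ≤ |l i - l j|) →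
        ∀ (α β : Fin n → ℝ),
        |∑ i ∈ P, ∑ j ∈ Q, α i * β j * inner ℝ (U i) (V j)|
        ≤ (2 * ε / d) / 2 * (∑ i ∈ P, α i ^ 2 + ∑ j ∈ Q, β j ^ 2) := by
      intro P Q hPQ α β
      have hs := dk_schur U V E ε hε hE P Q (fun i => l i / d) (fun j => m j / d) (by
        intro i hi j hj
        rw [← sub_div, abs_div, abs_of_pos hd, le_div_iff₀ hd, one_mul]
        exact gap i j (hPQ i hi j hj)) α β
      have e : ∑ i ∈ P, ∑ j ∈ Q, α i * β j * inner ℝ (U i) (V j)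
          = - d⁻¹ * ∑ i ∈ P, ∑ j ∈ Q,
            α i * β j * (inner ℝ (U i) (E (V j)) * (l i / d - m j / d)⁻¹) := by
        simp only [Finset.mul_sum]
        refine Finset.sum_congr rfl fun i hi => Finset.sum_congr rfl fun j hj => ?_
        have hne : l i - m j ≠ 0 := by
          have := gap i j (hPQ i hi j hj)
          intro h
          rw [h, abs_zero] at this
          linarith
        have hEV : E (V j) = m j • V j - A (V j) := by
          rw [← hB j]; simp
        have : (inner ℝ (U i) (E (V j)) : ℝ) = -(l i - m j) * inner ℝ (U i) (V j) := by
          rw [hEV, inner_sub_right, inner_smul_right, ← hsym, hA, inner_smul_left]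
          simp only [conj_trivial]
          ring
        rw [this, ← sub_div, inv_div]
        field_simp
      rw [e, abs_mul, abs_neg, abs_of_pos (inv_pos.2 hd)]
      refine (mul_le_mul_of_nonneg_left hs (inv_pos.2 hd).le).trans (le_of_eq ?_)
      field_simp
    refine (dk_combine U V S (2 * ε / d) (blk _ _ hgap) (blk _ _ ?_) x).trans ?_
    · intro i hi j hj
      rw [abs_sub_comm]; exact hgap j hj i hi
    · refine mul_le_mul_of_nonneg_right ?_ (norm_nonneg _)
      rw [div_le_div_iff₀ hd hδ]
      have : 2 * δ ≤ Real.pi * d := by rw [hdd]; nlinarith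
      nlinarith [mul_le_mul_of_nonneg_left this hε]

end DK

/-- **Davis–Kahan, eigenvalues of `A` only.**  For a nonempty proper subset `S` of
`{1,…,n}`, with `δ_S := min_{i∈S, j∉S} |λ_i − λ_j| > 0`, one has
`‖Π̃_S − Π_S‖ ≤ π‖E‖/δ_S`. (Indices are 1-based.) -/
theorem davis_kahan_deltaS
    {n : ℕ} (A E : Matrix (Fin n) (Fin n) ℝ) (hA : A.IsSymm) (hE : E.IsSymm)
    (lam tlam : ℕ → ℝ) (u tu : ℕ → (Fin n → ℝ))
    (hlam_mono : ∀ i ∈ Finset.Icc 1 n, ∀ j ∈ Finset.Icc 1 n, i ≤ j → lam j ≤ lam i)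
    (htlam_mono : ∀ i ∈ Finset.Icc 1 n, ∀ j ∈ Finset.Icc 1 n, i ≤ j → tlam j ≤ tlam i)
    (hu_on : ∀ i ∈ Finset.Icc 1 n, ∀ j ∈ Finset.Icc 1 n,
      u i ⬝ᵥ u j = if i = j then 1 else 0)
    (htu_on : ∀ i ∈ Finset.Icc 1 n, ∀ j ∈ Finset.Icc 1 n,
      tu i ⬝ᵥ tu j = if i = j then 1 else 0)
    (hu_eig : ∀ i ∈ Finset.Icc 1 n, A *ᵥ u i = lam i • u i)
    (htu_eig : ∀ i ∈ Finset.Icc 1 n, (A + E) *ᵥ tu i = tlam i • tu i)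
    (S : Finset ℕ) (hS : S ⊆ Finset.Icc 1 n)
    (hS_ne : S.Nonempty) (hSc_ne : ((Finset.Icc 1 n) \ S).Nonempty)
    (δS : ℝ)
    (hδS : δS = (S ×ˢ ((Finset.Icc 1 n) \ S)).inf' (hS_ne.product hSc_ne)
      (fun q => |lam q.1 - lam q.2|))
    (hδS_pos : 0 < δS) :
    specNorm ((∑ i ∈ S, vecMulVec (tu i) (tu i)) - ∑ i ∈ S, vecMulVec (u i) (u i))
      ≤ Real.pi * specNorm E / δS := by
  have hmem : ∀ i : Fin n, (i : ℕ) + 1 ∈ Finset.Icc 1 n := by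
    intro i; rw [Finset.mem_Icc]; omega
  have mk : ∀ w : ℕ → (Fin n → ℝ), (∀ i ∈ Finset.Icc 1 n, ∀ j ∈ Finset.Icc 1 n,
      w i ⬝ᵥ w j = if i = j then 1 else 0) →
      ∃ W : OrthonormalBasis (Fin n) ℝ (EuclideanSpace ℝ (Fin n)), ∀ i, W i = WithLp.toLp 2 (w (i + 1)) := by
    intro w hw
    have hon : Orthonormal ℝ (fun i : Fin n => (WithLp.toLp 2 (w (i + 1)) : EuclideanSpace ℝ (Fin n))) := by
      rw [orthonormal_iff_ite]
      intro i j
      rw [EuclideanSpace.inner_toLp_toLp, dotProduct_comm]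
      simp only [star_trivial]
      rw [hw _ (hmem i) _ (hmem j)]
      simp [Fin.ext_iff]
    obtain ⟨k0, hk0⟩ := hS_ne
    have hk0 := Finset.mem_Icc.1 (hS hk0)
    have : Nonempty (Fin n) := ⟨⟨0, by omega⟩⟩
    let b := basisOfOrthonormalOfCardEqFinrank hon (by simp)
    have hb : ∀ i, b i = WithLp.toLp 2 (w (i + 1)) := fun i => by
      simp [b]
    refine ⟨b.toOrthonormalBasis ?_, fun i => ?_⟩
    · rw [show (b : Fin n → EuclideanSpace ℝ (Fin n)) = (fun i : Fin n => (WithLp.toLp 2 (w (i + 1)) : EuclideanSpace ℝ (Fin n))) from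
        funext hb]
      exact hon
    · simp [hb]
  obtain ⟨U, hU⟩ := mk u hu_on
  obtain ⟨V, hV⟩ := mk tu htu_on
  let SF : Finset (Fin n) := Finset.univ.filter fun i => (i : ℕ) + 1 ∈ S
  have hsum : ∀ {M : Type} [AddCommMonoid M] (f : ℕ → M),
      ∑ i ∈ S, f i = ∑ i ∈ SF, f ((i : ℕ) + 1) := by
    intro M _ f
    symm
    refine Finset.sum_bij (fun (i : Fin n) _ => (i : ℕ) + 1) ?_ ?_ ?_ ?_
    · intro i hi; simpa [SF] using hi
    · intro i _ j _ h; ext; omega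
    · intro k hk
      have := Finset.mem_Icc.1 (hS hk)
      refine ⟨⟨k - 1, by omega⟩, ?_, ?_⟩
      · simp only [SF, Finset.mem_filter, Finset.mem_univ, true_and]
        rwa [Nat.sub_add_cancel this.1]
      · simp only; omega
    · intro i _; rfl
  have hproj : ∀ (w : ℕ → (Fin n → ℝ)) (W : OrthonormalBasis (Fin n) ℝ (EuclideanSpace ℝ (Fin n)))
      (_ : ∀ i, W i = WithLp.toLp 2 (w (i + 1))) (x : EuclideanSpace ℝ (Fin n)),
      Matrix.toEuclideanLin (∑ i ∈ S, vecMulVec (w i) (w i)) x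
        = ∑ i ∈ SF, (inner ℝ (W i) x : ℝ) • W i := by
    intro w W hW x
    rw [hsum, map_sum, LinearMap.sum_apply]
    refine Finset.sum_congr rfl fun i _ => ?_
    rw [hW]
    ext k
    simp [Matrix.toLpLin_apply, vecMulVec_mulVec, PiLp.inner_apply, dotProduct, mul_comm]
  have hpinn := Real.pi_pos
  have hε : 0 ≤ specNorm E := norm_nonneg _
  unfold specNorm
  refine ContinuousLinearMap.opNorm_le_bound _ (by
    have : 0 ≤ ‖LinearMap.toContinuousLinearMap (Matrix.toEuclideanLin E)‖ := norm_nonneg _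
    positivity) fun x => ?_
  rw [LinearMap.coe_toContinuousLinearMap', map_sub, LinearMap.sub_apply, hproj tu V hV,
    hproj u U hU]
  have heig : ∀ (M : Matrix (Fin n) (Fin n) ℝ) (w : Fin n → ℝ) (c : ℝ), M *ᵥ w = c • w →
      Matrix.toEuclideanLin M (WithLp.toLp 2 w) = c • (WithLp.toLp 2 w : EuclideanSpace ℝ (Fin n)) := by
    intro M w c h
    rw [Matrix.toLpLin_toLp, Matrix.toLin'_apply, h]; rfl
  refine dk_core U V (Matrix.toEuclideanLin A) (Matrix.toEuclideanLin E) _ δS hε hδS_pos ?_ ?_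
    (fun i => lam (i + 1)) (fun i => tlam (i + 1)) ?_ ?_ ?_ ?_ SF ?_ x
  · have : (Matrix.toEuclideanLin A).IsSymmetric := by
      rw [Matrix.isSymmetric_toEuclideanLin_iff]
      rw [Matrix.IsHermitian, Matrix.conjTranspose_eq_transpose_of_trivial]; exact hA
    exact this
  · intro x
    exact (LinearMap.toContinuousLinearMap (Matrix.toEuclideanLin E)).le_opNorm x
  · intro i j hij
    exact hlam_mono _ (hmem i) _ (hmem j) (by have : (i:ℕ) ≤ j := hij; omega)
  · intro i j hij
    exact htlam_mono _ (hmem i) _ (hmem j) (by have : (i:ℕ) ≤ j := hij; omega)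
  · intro i
    rw [hU]; exact heig _ _ _ (hu_eig _ (hmem i))
  · intro i
    rw [hV, ← map_add]; exact heig _ _ _ (htu_eig _ (hmem i))
  · intro i hi j hj
    rw [hδS]
    refine Finset.inf'_le (f := fun q : ℕ × ℕ => |lam q.1 - lam q.2|) (b := ((i : ℕ) + 1, (j : ℕ) + 1)) ?_
    simp only [SF, Finset.mem_compl, Finset.mem_filter, Finset.mem_univ, true_and] at hi hj
    rw [Finset.mem_product, Finset.mem_sdiff]
    exact ⟨hi, hmem j, hj⟩
end

section
/- Let 1 ≤ p < n and let r be an integer with p ≤ r < n such that |λ_p|/2 ≤ λ_p − λ_{r+1}. Set x := max_{1≤i,j≤r} |u_iᵀ E u_j|. Assume that 0 < 4‖E‖ ≤ δ_p := λ_p − λ_{p+1} ≤ |λ_p|/4. Then ‖Π̃_p − Π_p‖ ≤ 24 ( (‖E‖/|λ_p|)·log(6σ₁/δ_p) + r²x/δ_p ). -/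
open Matrix

section MG
open scoped InnerProductSpace
variable {H : Type*} [NormedAddCommGroup H] [InnerProductSpace ℝ H] {n : ℕ}

/-- Diagonal operator in an orthonormal basis. -/
noncomputable def mgD (b : OrthonormalBasis (Fin n) ℝ H) (f : Fin n → ℝ) : H →L[ℝ] H :=
  ∑ i, (f i) • (innerSL ℝ (b i)).smulRight (b i)

theorem mgD_apply (b : OrthonormalBasis (Fin n) ℝ H) (f : Fin n → ℝ) (z : H) :
    mgD b f z = ∑ i, (f i * ⟪b i, z⟫_ℝ) • b i := by
  simp [mgD, mul_smul]

theorem mgD_inner (b : OrthonormalBasis (Fin n) ℝ H) (f : Fin n → ℝ) (z : H) (i : Fin n) :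
    ⟪b i, mgD b f z⟫_ℝ = f i * ⟪b i, z⟫_ℝ := by
  rw [mgD_apply, inner_sum]
  simp [inner_smul_right, OrthonormalBasis.inner_eq_ite]

theorem mg_ext (b : OrthonormalBasis (Fin n) ℝ H) {y z : H}
    (h : ∀ i, ⟪b i, y⟫_ℝ = ⟪b i, z⟫_ℝ) : y = z := by
  apply b.repr.injective
  ext i
  simp [OrthonormalBasis.repr_apply_apply, h i]

theorem mgD_mul (b : OrthonormalBasis (Fin n) ℝ H) (f g : Fin n → ℝ) (z : H) :
    mgD b f (mgD b g z) = mgD b (fun i => f i * g i) z := by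
  apply mg_ext b; intro i; simp only [mgD_inner]; ring

theorem mg_norm_sq (b : OrthonormalBasis (Fin n) ℝ H) (z : H) :
    ‖z‖ ^ 2 = ∑ i, ⟪b i, z⟫_ℝ ^ 2 := by
  have := b.sum_sq_norm_inner_right z
  simpa using this.symm

theorem mg_inner_sum (b : OrthonormalBasis (Fin n) ℝ H) (y z : H) :
    ⟪y, z⟫_ℝ = ∑ i, ⟪b i, y⟫_ℝ * ⟪b i, z⟫_ℝ := by
  rw [← b.sum_inner_mul_inner y z]
  exact Finset.sum_congr rfl fun i _ => by rw [real_inner_comm]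

theorem mgD_symm (b : OrthonormalBasis (Fin n) ℝ H) (f : Fin n → ℝ) (y z : H) :
    ⟪mgD b f y, z⟫_ℝ = ⟪y, mgD b f z⟫_ℝ := by
  rw [mg_inner_sum b, mg_inner_sum b y]
  simp only [mgD_inner]
  exact Finset.sum_congr rfl fun i _ => by ring

theorem mgD_quad (b : OrthonormalBasis (Fin n) ℝ H) (f : Fin n → ℝ) (z : H) :
    ⟪mgD b f z, z⟫_ℝ = ∑ i, f i * ⟪b i, z⟫_ℝ ^ 2 := by
  rw [mg_inner_sum b]
  simp only [mgD_inner]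
  exact Finset.sum_congr rfl fun i _ => by ring

theorem mgD_norm_le (b : OrthonormalBasis (Fin n) ℝ H) (f : Fin n → ℝ) (hf : ∀ i, |f i| ≤ 1) (z : H) :
    ‖mgD b f z‖ ≤ ‖z‖ := by
  apply le_of_sq_le_sq _ (norm_nonneg _)
  rw [mg_norm_sq b, mg_norm_sq b z]
  apply Finset.sum_le_sum
  intro i _
  rw [mgD_inner, mul_pow]
  have : f i ^ 2 ≤ 1 := by rw [sq_le_one_iff_abs_le_one]; exact hf i
  nlinarith [sq_nonneg (⟪b i, z⟫_ℝ)]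

/-- quadratic form lower bound on vectors supported where `f ≥ a` -/
theorem mgD_quad_ge (b : OrthonormalBasis (Fin n) ℝ H) (f : Fin n → ℝ) (a : ℝ) (z : H)
    (h : ∀ i, a ≤ f i ∨ ⟪b i, z⟫_ℝ = 0) : a * ‖z‖ ^ 2 ≤ ⟪mgD b f z, z⟫_ℝ := by
  rw [mgD_quad, mg_norm_sq b, Finset.mul_sum]
  apply Finset.sum_le_sum
  intro i _
  rcases h i with h | h
  · exact mul_le_mul_of_nonneg_right h (sq_nonneg _)
  · simp [h]

theorem mgD_quad_le (b : OrthonormalBasis (Fin n) ℝ H) (f : Fin n → ℝ) (a : ℝ) (z : H)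
    (h : ∀ i, f i ≤ a ∨ ⟪b i, z⟫_ℝ = 0) : ⟪mgD b f z, z⟫_ℝ ≤ a * ‖z‖ ^ 2 := by
  rw [mgD_quad, mg_norm_sq b, Finset.mul_sum]
  apply Finset.sum_le_sum
  intro i _
  rcases h i with h | h
  · exact mul_le_mul_of_nonneg_right h (sq_nonneg _)
  · simp [h]

/-- One-sided Sylvester (Davis–Kahan) bound. -/
theorem mg_sylvester [FiniteDimensional ℝ H] (Y Ys S T C : H →L[ℝ] H) (a c g : ℝ)
    (hadj : ∀ y z, ⟪Y y, z⟫_ℝ = ⟪y, Ys z⟫_ℝ)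
    (hC : ∀ z, Y (S z) - T (Y z) = C z)
    (hS : ∀ w, a * ‖Ys w‖ ^ 2 ≤ ⟪S (Ys w), Ys w⟫_ℝ)
    (hT : ∀ w, ⟪T (Y w), Y w⟫_ℝ ≤ c * ‖Y w‖ ^ 2)
    (hgap : g ≤ a - c) : g * ‖Y‖ ≤ ‖C‖ := by
  by_cases hY : ‖Y‖ = 0
  · rw [hY]; simp
  have hs : 0 < ‖Y‖ := lt_of_le_of_ne (norm_nonneg _) (Ne.symm hY)
  have hNT : Nontrivial H := by
    by_contra h
    rw [not_nontrivial_iff_subsingleton] at h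
    apply hY
    have : Y = 0 := by ext z; exact Subsingleton.elim _ _
    simp [this]
  obtain ⟨v, hv, hmax⟩ := (isCompact_sphere (0 : H) 1).exists_isMaxOn
    (NormedSpace.sphere_nonempty.mpr zero_le_one) (Y.continuous.norm.continuousOn)
  have hv1 : ‖v‖ = 1 := by simpa using hv
  have hYv : ‖Y‖ ≤ ‖Y v‖ := by
    apply Y.opNorm_le_of_unit_norm (norm_nonneg _)
    intro z hz
    exact hmax (by simpa using hz)
  have hYv2 : ‖Y v‖ = ‖Y‖ := le_antisymm (by simpa [hv1] using Y.le_opNorm v) hYv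
  set s := ‖Y‖ with hsdef
  have hYs : ‖Ys (Y v)‖ ≤ s * s := by
    by_contra hcon
    push Not at hcon
    have h1 : ‖Ys (Y v)‖ ^ 2 ≤ s * ‖Ys (Y v)‖ * s := by
      rw [← real_inner_self_eq_norm_sq, ← hadj]
      refine (real_inner_le_norm _ _).trans ?_
      rw [hYv2]
      exact mul_le_mul_of_nonneg_right (Y.le_opNorm _) hs.le
    nlinarith [mul_pos hs hs]
  have heig : Ys (Y v) = (s ^ 2) • v := by
    have h0 : ‖Ys (Y v) - (s ^ 2) • v‖ ^ 2 ≤ 0 := by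
      rw [norm_sub_sq_real, inner_smul_right, real_inner_comm, ← hadj, real_inner_self_eq_norm_sq,
        norm_smul, hv1, hYv2, Real.norm_of_nonneg (sq_nonneg s)]
      nlinarith [norm_nonneg (Ys (Y v))]
    have h1 : ‖Ys (Y v) - (s ^ 2) • v‖ = 0 := by
      nlinarith [norm_nonneg (Ys (Y v) - (s ^ 2) • v)]
    exact sub_eq_zero.mp (norm_eq_zero.mp h1)
  have h1 := hS (Y v)
  have h2 := hT v
  rw [heig] at h1
  rw [map_smul, norm_smul, hv1, inner_smul_left, inner_smul_right,
    Real.norm_of_nonneg (sq_nonneg s)] at h1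
  simp only [conj_trivial] at h1
  have h1' : a ≤ ⟪S v, v⟫_ℝ := by
    have h4 : 0 < s ^ 2 * s ^ 2 := by positivity
    have : a * (s ^ 2 * s ^ 2) ≤ ⟪S v, v⟫_ℝ * (s ^ 2 * s ^ 2) := by nlinarith
    exact le_of_mul_le_mul_right this h4
  have h3 : ⟪C v, Y v⟫_ℝ ≤ ‖C‖ * s := by
    refine (real_inner_le_norm _ _).trans ?_
    rw [hYv2]
    exact mul_le_mul_of_nonneg_right (by simpa [hv1] using C.le_opNorm v) hs.le
  rw [← hC, inner_sub_left, hadj, heig, inner_smul_right] at h3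
  rw [hYv2] at h2
  have h5 : (g * s) * s ≤ ‖C‖ * s := by nlinarith [mul_pos hs hs]
  exact le_of_mul_le_mul_right h5 hs

/-- Weyl inequality (lower bound). -/
theorem mg_weyl (b b' : OrthonormalBasis (Fin n) ℝ H) (l l' : Fin n → ℝ)
    (hl : Antitone l) (hl' : Antitone l') (E : H →L[ℝ] H)
    (hE : ∀ z, mgD b' l' z = mgD b l z + E z) (k : Fin n) : l k - ‖E‖ ≤ l' k := by
  have : FiniteDimensional ℝ H := b.toBasis.finiteDimensional_of_finite
  let φ : H →ₗ[ℝ] ({i : Fin n // i ≠ k} → ℝ) := LinearMap.pi fun i =>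
    (innerSL ℝ (if i.1 < k then b' i.1 else b i.1)).toLinearMap
  have hfin : Module.finrank ℝ ({i : Fin n // i ≠ k} → ℝ) < Module.finrank ℝ H := by
    rw [Module.finrank_fintype_fun_eq_card, Module.finrank_eq_card_basis b.toBasis]
    exact Fintype.card_subtype_lt (x := k) (by simp)
  have hker := LinearMap.ker_ne_bot_of_finrank_lt (f := φ) hfin
  obtain ⟨z, hz, hz0⟩ := (Submodule.ne_bot_iff _).mp hker
  have hφ : ∀ i : Fin n, i ≠ k → ⟪if i < k then b' i else b i, z⟫_ℝ = 0 := fun i hi => by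
    have := congrFun (LinearMap.mem_ker.mp hz) ⟨i, hi⟩
    simpa [φ] using this
  have h1 := mgD_quad_ge b l (l k) z (fun i => by
    rcases le_or_gt i k with h | h
    · exact Or.inl (hl h)
    · right; have := hφ i h.ne'; rwa [if_neg h.not_gt] at this)
  have h2 := mgD_quad_le b' l' (l' k) z (fun i => by
    rcases le_or_gt k i with h | h
    · exact Or.inl (hl' h)
    · right; have := hφ i h.ne; rwa [if_pos h] at this)
  rw [hE, inner_add_left] at h2
  have h3 : -(‖E‖ * ‖z‖ ^ 2) ≤ ⟪E z, z⟫_ℝ := by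
    have := abs_real_inner_le_norm (E z) z
    have h4 := mul_le_mul_of_nonneg_right (E.le_opNorm z) (norm_nonneg z)
    have h5 := neg_abs_le (⟪E z, z⟫_ℝ)
    nlinarith
  have hzp : 0 < ‖z‖ ^ 2 := by positivity
  have : (l k - ‖E‖) * ‖z‖ ^ 2 ≤ l' k * ‖z‖ ^ 2 := by nlinarith
  exact le_of_mul_le_mul_right this hzp

/-- Difference of two spectral projections of the same rank. -/
theorem mg_proj (b b' : OrthonormalBasis (Fin n) ℝ H) (f : Fin n → ℝ)
    (hf : ∀ i, f i = 0 ∨ f i = 1) (c : ℝ) (hc : 0 ≤ c)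
    (h : ∀ z, ‖mgD b (fun i => 1 - f i) (mgD b' f z)‖ ≤ c * ‖z‖) :
    ‖mgD b' f - mgD b f‖ ≤ 2 * c := by
  have : FiniteDimensional ℝ H := b.toBasis.finiteDimensional_of_finite
  have hsplit : ∀ (d : OrthonormalBasis (Fin n) ℝ H) (z : H),
      mgD d (fun i => 1 - f i) z = z - mgD d f z := fun d z => by
    apply mg_ext d; intro i; rw [inner_sub_right, mgD_inner, mgD_inner]; ring
  have hidem : ∀ (d : OrthonormalBasis (Fin n) ℝ H) (z : H),
      mgD d f (mgD d f z) = mgD d f z := fun d z => by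
    rw [mgD_mul]; congr 2; ext i; rcases hf i with h | h <;> simp [h]
  have hf1 : ∀ i, |f i| ≤ 1 := fun i => by rcases hf i with h | h <;> simp [h]
  have hg1 : ∀ i, |1 - f i| ≤ 1 := fun i => by rcases hf i with h | h <;> simp [h]
  have hpyth : ∀ (d : OrthonormalBasis (Fin n) ℝ H) (z : H),
      ‖z‖ ^ 2 = ‖mgD d f z‖ ^ 2 + ‖mgD d (fun i => 1 - f i) z‖ ^ 2 := fun d z => by
    rw [mg_norm_sq d, mg_norm_sq d, mg_norm_sq d, ← Finset.sum_add_distrib]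
    refine Finset.sum_congr rfl fun i _ => ?_
    rw [mgD_inner, mgD_inner]
    rcases hf i with h | h <;> simp [h]
  have key : ∀ y, mgD b f y = y → ‖mgD b' (fun i => 1 - f i) y‖ ≤ c * ‖y‖ := by
    intro y hy
    rcases le_or_gt 1 c with hc1 | hc1
    · refine (mgD_norm_le b' _ hg1 y).trans ?_
      nlinarith [norm_nonneg y]
    let V : H →ₗ[ℝ] H := (b.repr.trans b'.repr.symm).toLinearEquiv.toLinearMap
    have hV : ∀ z i, ⟪b' i, V z⟫_ℝ = ⟪b i, z⟫_ℝ := fun z i => by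
      simp [V, ← OrthonormalBasis.repr_apply_apply]
    have hVP : ∀ z, V (mgD b f z) = mgD b' f (V z) := fun z => by
      apply mg_ext b'; intro i; rw [hV, mgD_inner, mgD_inner, hV]
    let T : H →ₗ[ℝ] H := (mgD b f).toLinearMap ∘ₗ V ∘ₗ (mgD b f).toLinearMap
      + (mgD b (fun i => 1 - f i)).toLinearMap
    have hT : ∀ z, T z = mgD b f (V (mgD b f z)) + mgD b (fun i => 1 - f i) z := fun z => rfl
    have hQP : ∀ z, mgD b f (mgD b (fun i => 1 - f i) z) = 0 := fun z => by
      rw [hsplit, map_sub, hidem, sub_self]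
    have hPT : ∀ z, mgD b f (T z) = mgD b f (V (mgD b f z)) := fun z => by
      rw [hT, map_add, hidem, hQP, add_zero]
    have hinj : Function.Injective T := by
      rw [injective_iff_map_eq_zero]
      intro z hz
      have h1 : mgD b f (V (mgD b f z)) = 0 := by rw [← hPT, hz, map_zero]
      have h2 : mgD b (fun i => 1 - f i) z = 0 := by
        have := hT z; rw [hz, h1, zero_add] at this; exact this.symm
      have h3 : mgD b f z = z := by
        rw [hsplit] at h2; exact (sub_eq_zero.mp h2).symm
      have h4 := h (V z)
      rw [← hVP, h3, hsplit] at h4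
      rw [h3] at h1
      rw [h1, sub_zero] at h4
      have h5 : ‖V z‖ = 0 := by nlinarith [norm_nonneg (V z)]
      have h6 : V z = 0 := norm_eq_zero.mp h5
      apply mg_ext b; intro i
      rw [← hV, h6]; simp
    obtain ⟨w, hw⟩ := LinearMap.injective_iff_surjective.mp hinj y
    set z := V (mgD b f w) with hz
    have hPz : mgD b f z = y := by rw [hz, ← hPT, hw, hy]
    have hz' : mgD b' f z = z := by rw [hz, hVP, hidem]
    have h1 : ‖y‖ ^ 2 ≤ ‖mgD b' f y‖ * ‖z‖ := by
      calc ‖y‖ ^ 2 = ⟪y, mgD b f z⟫_ℝ := by rw [hPz, real_inner_self_eq_norm_sq]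
        _ = ⟪mgD b' f y, z⟫_ℝ := by rw [← mgD_symm, hy, mgD_symm, hz']
        _ ≤ _ := real_inner_le_norm _ _
    have h2 := hpyth b z
    have h3 := h z
    rw [hz'] at h3
    rw [hPz] at h2
    have h4 := hpyth b' y
    set α := ‖mgD b' f y‖
    set β := ‖mgD b' (fun i => 1 - f i) y‖
    set γ := ‖mgD b (fun i => 1 - f i) z‖
    have hγ : γ ^ 2 ≤ c ^ 2 * ‖z‖ ^ 2 := by
      rw [← mul_pow]; exact pow_le_pow_left₀ (norm_nonneg _) h3 2
    apply le_of_sq_le_sq _ (by positivity)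
    rw [mul_pow]
    by_cases hy0 : ‖y‖ = 0
    · have : β ^ 2 ≤ 0 := by rw [hy0] at h4; nlinarith [sq_nonneg α]
      rw [hy0]; simpa using this
    have hyp : 0 < ‖y‖ ^ 2 := by positivity
    have h6 : (‖y‖ ^ 2) ^ 2 ≤ α ^ 2 * ‖z‖ ^ 2 := by
      rw [← mul_pow]; exact pow_le_pow_left₀ (by positivity) h1 2
    have hcc : 0 < 1 - c ^ 2 := by nlinarith
    have h7 : (1 - c ^ 2) * ‖z‖ ^ 2 ≤ ‖y‖ ^ 2 := by nlinarith
    have h8 : ((1 - c ^ 2) * ‖y‖ ^ 2) * ‖y‖ ^ 2 ≤ α ^ 2 * ‖y‖ ^ 2 := by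
      nlinarith [mul_le_mul_of_nonneg_left h7 (sq_nonneg α), mul_le_mul_of_nonneg_left h6 hcc.le]
    have h9 := le_of_mul_le_mul_right h8 hyp
    nlinarith
  have key2 : ∀ z, ‖mgD b f (mgD b' (fun i => 1 - f i) z)‖ ≤ c * ‖z‖ := by
    intro z
    set y := mgD b f (mgD b' (fun i => 1 - f i) z) with hy
    have h1 : ‖y‖ ^ 2 ≤ (c * ‖y‖) * ‖z‖ := by
      calc ‖y‖ ^ 2 = ⟪y, mgD b f (mgD b' (fun i => 1 - f i) z)⟫_ℝ := by
            rw [← hy, real_inner_self_eq_norm_sq]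
        _ = ⟪mgD b' (fun i => 1 - f i) y, z⟫_ℝ := by
            rw [← mgD_symm, hy, hidem, ← mgD_symm]
        _ ≤ _ := real_inner_le_norm _ _
        _ ≤ _ := mul_le_mul_of_nonneg_right (key y (by rw [hy, hidem])) (norm_nonneg _)
    by_contra hcon
    push Not at hcon
    have : 0 ≤ c * ‖z‖ := by positivity
    nlinarith
  refine ContinuousLinearMap.opNorm_le_bound _ (by positivity) fun z => ?_
  have : (mgD b' f - mgD b f) z = mgD b (fun i => 1 - f i) (mgD b' f z)
      - mgD b f (mgD b' (fun i => 1 - f i) z) := by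
    rw [_root_.sub_apply, hsplit, hsplit, map_sub]; abel
  rw [this]
  refine (norm_sub_le _ _).trans ?_
  linarith [h z, key2 z]

theorem mg_compress (b : OrthonormalBasis (Fin n) ℝ H) (E : H →L[ℝ] H) (r : ℕ) (x : ℝ)
    (hx0 : 0 ≤ x)
    (hx : ∀ i j : Fin n, i.1 < r → j.1 < r → |⟪b i, E (b j)⟫_ℝ| ≤ x) (z : H) :
    ‖mgD b (fun i => if i.1 < r then 1 else 0) (E (mgD b (fun i => if i.1 < r then 1 else 0) z))‖
      ≤ (r : ℝ) ^ 2 * x * ‖z‖ := by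
  set ρ : Fin n → ℝ := fun i => if i.1 < r then 1 else 0 with hρ
  have hρ0 : ∀ i, 0 ≤ ρ i := fun i => by simp only [hρ]; split_ifs <;> simp
  have hexp : mgD b ρ (E (mgD b ρ z))
      = ∑ i, ∑ j, (ρ i * (ρ j * ⟪b j, z⟫_ℝ * ⟪b i, E (b j)⟫_ℝ)) • b i := by
    rw [mgD_apply]
    refine Finset.sum_congr rfl fun i _ => ?_
    rw [← Finset.sum_smul, ← Finset.mul_sum, mgD_apply b ρ z, map_sum, inner_sum]
    congr 2
    exact Finset.sum_congr rfl fun j _ => by rw [map_smul, inner_smul_right]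
  have hterm : ∀ i j, ‖(ρ i * (ρ j * ⟪b j, z⟫_ℝ * ⟪b i, E (b j)⟫_ℝ)) • b i‖
      ≤ ρ i * (ρ j * (x * ‖z‖)) := fun i j => by
    rw [norm_smul, b.norm_eq_one, mul_one, Real.norm_eq_abs, abs_mul, abs_mul, abs_mul,
      abs_of_nonneg (hρ0 i), abs_of_nonneg (hρ0 j)]
    by_cases hi : i.1 < r
    · by_cases hj : j.1 < r
      · have h1 := hx i j hi hj
        have h2 : |⟪b j, z⟫_ℝ| ≤ ‖z‖ := by
          simpa [b.norm_eq_one] using abs_real_inner_le_norm (b j) z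
        have h3 : |⟪b j, z⟫_ℝ| * |⟪b i, E (b j)⟫_ℝ| ≤ ‖z‖ * x :=
          mul_le_mul h2 h1 (abs_nonneg _) (norm_nonneg _)
        simp only [hρ, if_pos hi, if_pos hj, one_mul]
        linarith
      · simp [hρ, hj]
    · simp [hρ, hi]
  have hsum : ∑ i, ρ i ≤ r := by
    simp only [hρ]
    rw [Finset.sum_boole]
    have : (Finset.univ.filter fun i : Fin n => i.1 < r).card ≤ (Finset.range r).card := by
      apply Finset.card_le_card_of_injOn (fun i => i.1)
      · intro i hi; simpa using hi
      · intro i _ j _ hij; exact Fin.ext hij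
    rw [Finset.card_range] at this
    exact_mod_cast this
  have hsum0 : 0 ≤ ∑ i, ρ i := Finset.sum_nonneg fun i _ => hρ0 i
  rw [hexp]
  calc _ ≤ ∑ i, ∑ j, ρ i * (ρ j * (x * ‖z‖)) := by
        refine (norm_sum_le _ _).trans (Finset.sum_le_sum fun i _ => ?_)
        exact (norm_sum_le _ _).trans (Finset.sum_le_sum fun j _ => hterm i j)
    _ = (∑ i, ρ i) ^ 2 * (x * ‖z‖) := by
        simp only [← Finset.mul_sum, ← Finset.sum_mul]; ring
    _ ≤ (r : ℝ) ^ 2 * (x * ‖z‖) :=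
        mul_le_mul_of_nonneg_right (pow_le_pow_left₀ hsum0 hsum 2) (by positivity)
    _ = _ := by ring

/-- One block of the Davis–Kahan argument. -/
theorem mg_block (b b' : OrthonormalBasis (Fin n) ℝ H) (l l' : Fin n → ℝ)
    (E : H →L[ℝ] H) (hE : ∀ z, mgD b' l' z = mgD b l z + E z)
    (σ f : Fin n → ℝ) (hf : ∀ i, f i = 0 ∨ f i = 1) (a c K : ℝ) (hK : 0 ≤ K)
    (ha : ∀ i, a ≤ l' i ∨ f i = 0) (hc : ∀ i, l i ≤ c ∨ σ i = 0)
    (hKb : ∀ z, ‖mgD b σ (E (mgD b' f z))‖ ≤ K * ‖z‖) (hgap : 0 < a - c) (z : H) :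
    ‖mgD b σ (mgD b' f z)‖ ≤ K / (a - c) * ‖z‖ := by
  have : FiniteDimensional ℝ H := b.toBasis.finiteDimensional_of_finite
  have h := mg_sylvester (mgD b σ ∘L mgD b' f) (mgD b' f ∘L mgD b σ) (mgD b' l') (mgD b l)
    (mgD b σ ∘L E ∘L mgD b' f) a c (a - c)
    (fun y z => by simp [mgD_symm])
    (fun z => by
      simp only [ContinuousLinearMap.comp_apply]
      have h1 : mgD b' f (mgD b' l' z) = mgD b' l' (mgD b' f z) := by
        rw [mgD_mul, mgD_mul]; congr 2; ext i; ring
      have h2 : ∀ w, mgD b l (mgD b σ w) = mgD b σ (mgD b l w) := fun w => by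
        rw [mgD_mul, mgD_mul]; congr 2; ext i; ring
      rw [h1, h2, hE, map_add]; abel)
    (fun w => mgD_quad_ge b' l' a _ fun i => by
      rcases ha i with h | h
      · exact Or.inl h
      · right; simp [mgD_inner, h])
    (fun w => mgD_quad_le b l c _ fun i => by
      rcases hc i with h | h
      · exact Or.inl h
      · right; simp [mgD_inner, h])
    le_rfl
  have h2 : ‖mgD b σ ∘L E ∘L mgD b' f‖ ≤ K :=
    ContinuousLinearMap.opNorm_le_bound _ hK fun z => hKb z
  have h3 : ‖mgD b σ ∘L mgD b' f‖ ≤ K / (a - c) := by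
    rw [le_div_iff₀ hgap]; linarith
  exact ((mgD b σ ∘L mgD b' f).le_opNorm z).trans
    (mul_le_mul_of_nonneg_right h3 (norm_nonneg _))

theorem mg_main (b b' : OrthonormalBasis (Fin n) ℝ H) (l l' : Fin n → ℝ)
    (hl : Antitone l) (hl' : Antitone l') (E : H →L[ℝ] H)
    (hE : ∀ z, mgD b' l' z = mgD b l z + E z) (k : Fin n) (r : ℕ) (hkr : k.1 < r)
    (δ x m : ℝ) (hδ : ∀ i, k < i → l i ≤ l k - δ) (hr : ∀ i : Fin n, r ≤ i.1 → l i ≤ l k - m / 2)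
    (hx0 : 0 ≤ x) (hx : ∀ i j : Fin n, i.1 < r → j.1 < r → |⟪b i, E (b j)⟫_ℝ| ≤ x)
    (hδ0 : 0 < δ) (hEδ : 4 * ‖E‖ ≤ δ) (hδm : δ ≤ m / 4) :
    ‖mgD b' (fun i => if i ≤ k then 1 else 0) - mgD b (fun i => if i ≤ k then 1 else 0)‖
      ≤ 24 * (‖E‖ / m + (r : ℝ) ^ 2 * x / δ) := by
  set f : Fin n → ℝ := fun i => if i ≤ k then 1 else 0 with hfdef
  set ρ : Fin n → ℝ := fun i => if i.1 < r then 1 else 0 with hρdef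
  have hf : ∀ i, f i = 0 ∨ f i = 1 := fun i => by simp only [hfdef]; split_ifs <;> simp
  have hρ : ∀ i, ρ i = 0 ∨ ρ i = 1 := fun i => by simp only [hρdef]; split_ifs <;> simp
  have hf1 : ∀ i, |f i| ≤ 1 := fun i => by rcases hf i with h | h <;> simp [h]
  have hρ1 : ∀ i, |ρ i| ≤ 1 := fun i => by rcases hρ i with h | h <;> simp [h]
  have hσ1 : ∀ i, |1 - ρ i| ≤ 1 := fun i => by rcases hρ i with h | h <;> simp [h]
  have hτ1 : ∀ i, |ρ i - f i| ≤ 1 := fun i => by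
    rcases hρ i with h | h <;> rcases hf i with h' | h' <;> simp [h, h']
  have hw := mg_weyl b b' l l' hl hl' E hE k
  have hE0 := norm_nonneg E
  have hm : 0 < m := by linarith
  have ha : ∀ i, l k - ‖E‖ ≤ l' i ∨ f i = 0 := fun i => by
    rcases le_or_gt i k with h | h
    · left; exact hw.trans (hl' h)
    · right; simp [hfdef, h.not_ge]
  have hEz : ∀ z, ‖E z‖ ≤ ‖E‖ * ‖z‖ := E.le_opNorm
  have hfz := mgD_norm_le b' f hf1
  have hB1 : ∀ z, ‖mgD b (fun i => 1 - ρ i) (mgD b' f z)‖ ≤ (5 / 2 * (‖E‖ / m)) * ‖z‖ := fun z => by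
    refine (mg_block b b' l l' E hE (fun i => 1 - ρ i) f hf (l k - ‖E‖) (l k - m / 2) ‖E‖ hE0 ha
      ?_ ?_ (by linarith) z).trans ?_
    · intro i
      rcases lt_or_ge i.1 r with h | h
      · right; simp [hρdef, h]
      · exact Or.inl (hr i h)
    · intro z
      exact (mgD_norm_le b _ hσ1 _).trans ((hEz _).trans
        (mul_le_mul_of_nonneg_left (hfz z) hE0))
    · apply mul_le_mul_of_nonneg_right _ (norm_nonneg _)
      have : 2 / 5 * m ≤ l k - ‖E‖ - (l k - m / 2) := by linarith
      calc _ ≤ ‖E‖ / (2 / 5 * m) := div_le_div_of_nonneg_left hE0 (by positivity) this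
        _ = _ := by field_simp
  have hsub : ∀ z, mgD b (fun i => 1 - ρ i) z = z - mgD b ρ z := fun z => by
    apply mg_ext b; intro i; rw [inner_sub_right, mgD_inner, mgD_inner]; ring
  have hτρ : ∀ z, mgD b (fun i => ρ i - f i) z = mgD b (fun i => ρ i - f i) (mgD b ρ z) :=
    fun z => by
      rw [mgD_mul]; congr 2; ext i
      rcases hρ i with h | h
      · have : f i = 0 := by
          have h' : ¬ i.1 < r := by
            intro hh; simp [hρdef, hh] at h
          have : ¬ i ≤ k := fun hh => h' (lt_of_le_of_lt hh hkr)
          simp [hfdef, this]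
        simp [h, this]
      · simp [h]
  set N := (r : ℝ) ^ 2 * x with hN
  have hN0 : 0 ≤ N := by positivity
  have hB2 : ∀ z, ‖mgD b (fun i => ρ i - f i) (mgD b' f z)‖
      ≤ (5 / 6 * (‖E‖ / m) + 4 / 3 * (N / δ)) * ‖z‖ := fun z => by
    refine (mg_block b b' l l' E hE (fun i => ρ i - f i) f hf (l k - ‖E‖) (l k - δ)
      (‖E‖ * (5 / 2 * (‖E‖ / m)) + N) (by positivity) ha
      ?_ ?_ (by linarith) z).trans ?_
    · intro i
      rcases le_or_gt i k with h | h
      · right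
        have : i.1 < r := lt_of_le_of_lt h hkr
        simp [hρdef, hfdef, h, this]
      · exact Or.inl (hδ i h)
    · intro z
      set y := mgD b' f z with hy
      have hsp : y = mgD b ρ y + mgD b (fun i => 1 - ρ i) y := by rw [hsub]; abel
      have h1 : ‖mgD b (fun i => ρ i - f i) (E (mgD b ρ y))‖ ≤ N * ‖z‖ := by
        rw [hτρ]
        refine (mgD_norm_le b _ hτ1 _).trans ((mg_compress b E r x hx0 hx y).trans ?_)
        exact mul_le_mul_of_nonneg_left (hfz z) hN0
      have h2 : ‖mgD b (fun i => ρ i - f i) (E (mgD b (fun i => 1 - ρ i) y))‖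
          ≤ ‖E‖ * (5 / 2 * (‖E‖ / m)) * ‖z‖ := by
        refine (mgD_norm_le b _ hτ1 _).trans ((hEz _).trans ?_)
        rw [mul_assoc]
        exact mul_le_mul_of_nonneg_left (hB1 z) hE0
      rw [hsp, map_add, map_add]
      refine (norm_add_le _ _).trans ?_
      linarith
    · apply mul_le_mul_of_nonneg_right _ (norm_nonneg _)
      have : 3 / 4 * δ ≤ l k - ‖E‖ - (l k - δ) := by linarith
      calc _ ≤ (‖E‖ * (5 / 2 * (‖E‖ / m)) + N) / (3 / 4 * δ) :=
            div_le_div_of_nonneg_left (by positivity) (by positivity) this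
        _ = (4 / 3 * (‖E‖ / δ)) * (5 / 2 * (‖E‖ / m)) + 4 / 3 * (N / δ) := by
            field_simp
        _ ≤ _ := by
            have h1 : ‖E‖ / δ ≤ 1 / 4 := by rw [div_le_iff₀ hδ0]; linarith
            have h2 : 0 ≤ ‖E‖ / m := by positivity
            nlinarith
  have hmain := mg_proj b b' f hf (10 / 3 * (‖E‖ / m) + 4 / 3 * (N / δ)) (by positivity)
    (fun z => by
      have : mgD b (fun i => 1 - f i) (mgD b' f z) = mgD b (fun i => 1 - ρ i) (mgD b' f z)
          + mgD b (fun i => ρ i - f i) (mgD b' f z) := by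
        apply mg_ext b; intro i
        rw [inner_add_right, mgD_inner, mgD_inner, mgD_inner]; ring
      rw [this]
      refine (norm_add_le _ _).trans ?_
      linarith [hB1 z, hB2 z])
  refine hmain.trans ?_
  have h1 : 0 ≤ ‖E‖ / m := by positivity
  have h2 : 0 ≤ N / δ := by positivity
  linarith

/-- Orthonormal basis from the 1-based family. -/
theorem mg_basis [Nonempty (Fin n)] (u : ℕ → (Fin n → ℝ))
    (hu : ∀ i ∈ Finset.Icc 1 n, ∀ j ∈ Finset.Icc 1 n, u i ⬝ᵥ u j = if i = j then 1 else 0) :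
    ∃ b : OrthonormalBasis (Fin n) ℝ (EuclideanSpace ℝ (Fin n)),
      ∀ i : Fin n, b i = WithLp.toLp 2 (u (i.1 + 1)) := by
  have hon : Orthonormal ℝ (fun i : Fin n => (WithLp.toLp 2 (u (i.1 + 1)) :
      EuclideanSpace ℝ (Fin n))) := by
    rw [orthonormal_iff_ite]
    intro i j
    rw [EuclideanSpace.inner_toLp_toLp]
    have := hu (j.1 + 1) (by simp) (i.1 + 1) (by simp)
    simp [this, Fin.ext_iff, eq_comm]
  refine ⟨(basisOfOrthonormalOfCardEqFinrank hon (by simp)).toOrthonormalBasis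
    (by simpa using hon), fun i => by simp⟩

theorem mg_toD (b : OrthonormalBasis (Fin n) ℝ (EuclideanSpace ℝ (Fin n)))
    (u : ℕ → (Fin n → ℝ)) (hb : ∀ i : Fin n, b i = WithLp.toLp 2 (u (i.1 + 1)))
    (M : Matrix (Fin n) (Fin n) ℝ) (c : ℕ → ℝ)
    (hM : ∀ i ∈ Finset.Icc 1 n, M *ᵥ u i = c i • u i) :
    (Matrix.toEuclideanLin M).toContinuousLinearMap = mgD b (fun i => c (i.1 + 1)) := by
  apply ContinuousLinearMap.coe_injective
  apply b.toBasis.ext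
  intro i
  have h1 : mgD b (fun i => c (i.1 + 1)) (b i) = c (i.1 + 1) • b i := by
    apply mg_ext b; intro j
    rw [mgD_inner, inner_smul_right, OrthonormalBasis.inner_eq_ite]
    split_ifs with h
    · rw [h]
    · simp
  have h2 : Matrix.toEuclideanLin M (b i) = c (i.1 + 1) • b i := by
    rw [hb, Matrix.toLpLin_apply]
    simp only [hM (i.1 + 1) (by simp)]
    rfl
  simp [h1, h2]

theorem mg_projD (b : OrthonormalBasis (Fin n) ℝ (EuclideanSpace ℝ (Fin n)))
    (u : ℕ → (Fin n → ℝ)) (hb : ∀ i : Fin n, b i = WithLp.toLp 2 (u (i.1 + 1)))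
    (hu : ∀ i ∈ Finset.Icc 1 n, ∀ j ∈ Finset.Icc 1 n, u i ⬝ᵥ u j = if i = j then 1 else 0)
    (p : ℕ) (hp1 : 1 ≤ p) (hpn : p < n) :
    (Matrix.toEuclideanLin (∑ i ∈ Finset.Icc 1 p, vecMulVec (u i) (u i))).toContinuousLinearMap
      = mgD b (fun i => if i ≤ (⟨p - 1, by omega⟩ : Fin n) then 1 else 0) := by
  rw [mg_toD b u hb _ (fun i => if i ≤ p then 1 else 0)]
  · congr 1; ext i
    have : i ≤ (⟨p - 1, by omega⟩ : Fin n) ↔ i.1 + 1 ≤ p := by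
      rw [Fin.le_def]; simp; omega
    simp [this]
  · intro j hj
    rw [Matrix.sum_mulVec]
    have : ∀ i ∈ Finset.Icc 1 p, vecMulVec (u i) (u i) *ᵥ u j = if i = j then u j else 0 := by
      intro i hi
      rw [vecMulVec_mulVec, hu i (by simp at hi ⊢; omega) j hj]
      split_ifs with h
      · simp [h]
      · simp
    rw [Finset.sum_congr rfl this, Finset.sum_ite_eq']
    simp only [Finset.mem_Icc] at hj ⊢
    by_cases h : j ≤ p <;> simp [h, hj.1]

end MG

/-- **Main theorem (moderate gap bound).** (Indices are 1-based; `σ₁ = ‖A‖`.) -/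
theorem main_moderate_gap
    {n : ℕ} (A E : Matrix (Fin n) (Fin n) ℝ) (hA : A.IsSymm) (hE : E.IsSymm)
    (lam tlam : ℕ → ℝ) (u tu : ℕ → (Fin n → ℝ))
    (hlam_mono : ∀ i ∈ Finset.Icc 1 n, ∀ j ∈ Finset.Icc 1 n, i ≤ j → lam j ≤ lam i)
    (htlam_mono : ∀ i ∈ Finset.Icc 1 n, ∀ j ∈ Finset.Icc 1 n, i ≤ j → tlam j ≤ tlam i)
    (hu_on : ∀ i ∈ Finset.Icc 1 n, ∀ j ∈ Finset.Icc 1 n,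
      u i ⬝ᵥ u j = if i = j then 1 else 0)
    (htu_on : ∀ i ∈ Finset.Icc 1 n, ∀ j ∈ Finset.Icc 1 n,
      tu i ⬝ᵥ tu j = if i = j then 1 else 0)
    (hu_eig : ∀ i ∈ Finset.Icc 1 n, A *ᵥ u i = lam i • u i)
    (htu_eig : ∀ i ∈ Finset.Icc 1 n, (A + E) *ᵥ tu i = tlam i • tu i)
    (p : ℕ) (hp1 : 1 ≤ p) (hpn : p < n)
    (r : ℕ) (hpr : p ≤ r) (hrn : r < n)
    (hr_half : |lam p| / 2 ≤ lam p - lam (r + 1))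
    (x : ℝ)
    (hx : x = (Finset.Icc 1 r ×ˢ Finset.Icc 1 r).sup'
      (Finset.Nonempty.product ⟨1, Finset.mem_Icc.mpr ⟨le_refl 1, le_trans hp1 hpr⟩⟩
        ⟨1, Finset.mem_Icc.mpr ⟨le_refl 1, le_trans hp1 hpr⟩⟩)
      (fun q => |u q.1 ⬝ᵥ E *ᵥ u q.2|))
    (δp : ℝ) (hδp : δp = lam p - lam (p + 1))
    (hE_pos : 0 < specNorm E)
    (hgap_lo : 4 * specNorm E ≤ δp) (hgap_hi : δp ≤ |lam p| / 4) :
    specNorm ((∑ i ∈ Finset.Icc 1 p, vecMulVec (tu i) (tu i))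
        - ∑ i ∈ Finset.Icc 1 p, vecMulVec (u i) (u i))
      ≤ 24 * (specNorm E / |lam p| * Real.log (6 * specNorm A / δp)
        + (r : ℝ) ^ 2 * x / δp) := by
  have hn0 : Nonempty (Fin n) := ⟨⟨0, by omega⟩⟩
  obtain ⟨b, hb⟩ := mg_basis u hu_on
  obtain ⟨b', hb'⟩ := mg_basis tu htu_on
  have hAD := mg_toD b u hb A lam hu_eig
  have hTD := mg_toD b' tu hb' (A + E) tlam htu_eig
  have hP := mg_projD b u hb hu_on p hp1 hpn
  have hP' := mg_projD b' tu hb' htu_on p hp1 hpn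
  have hδ0 : 0 < δp := by linarith
  have hx' : ∀ i ∈ Finset.Icc 1 r, ∀ j ∈ Finset.Icc 1 r, |u i ⬝ᵥ E *ᵥ u j| ≤ x := by
    intro i hi j hj
    rw [hx]
    exact Finset.le_sup' (fun q : ℕ × ℕ => |u q.1 ⬝ᵥ E *ᵥ u q.2|)
      (Finset.mk_mem_product hi hj)
  have hx0 : 0 ≤ x := by
    have h1 : 1 ∈ Finset.Icc 1 r := by simp; omega
    exact (abs_nonneg _).trans (hx' 1 h1 1 h1)
  have hp' : p - 1 + 1 = p := by omega
  have hmain := mg_main b b' (fun i => lam (i.1 + 1)) (fun i => tlam (i.1 + 1))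
    (fun i j hij => hlam_mono _ (by simp) _ (by simp) (by simpa using hij))
    (fun i j hij => htlam_mono _ (by simp) _ (by simp) (by simpa using hij))
    (Matrix.toEuclideanLin E).toContinuousLinearMap
    (fun z => by rw [← hAD, ← hTD]; simp)
    ⟨p - 1, by omega⟩ r (by simp; omega) δp x |lam p|
    (fun i hi => by
      have hi' : p - 1 < i.1 := hi
      have := hlam_mono (p + 1) (by simp; omega) (i.1 + 1) (by simp) (by omega)
      simp only [hp']; linarith)
    (fun i hi => by
      have := hlam_mono (r + 1) (by simp; omega) (i.1 + 1) (by simp) (by omega)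
      simp only [hp']; linarith)
    hx0
    (fun i j hi hj => by
      have h := hx' (i.1 + 1) (by simp; omega) (j.1 + 1) (by simp; omega)
      rw [hb, hb]
      simp only [LinearMap.coe_toContinuousLinearMap', Matrix.toLpLin_apply,
        EuclideanSpace.inner_toLp_toLp, star_trivial]
      rwa [dotProduct_comm])
    hδ0 hgap_lo hgap_hi
  have hL : specNorm ((∑ i ∈ Finset.Icc 1 p, vecMulVec (tu i) (tu i))
        - ∑ i ∈ Finset.Icc 1 p, vecMulVec (u i) (u i))
      ≤ 24 * (specNorm E / |lam p| + (r : ℝ) ^ 2 * x / δp) := by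
    unfold specNorm
    rw [map_sub, map_sub, hP, hP']
    exact hmain
  refine hL.trans ?_
  have hm : 0 < |lam p| := by linarith
  have hσ : |lam p| ≤ specNorm A := by
    have h1 := (Matrix.toEuclideanLin A).toContinuousLinearMap.le_opNorm
      (b ⟨p - 1, by omega⟩)
    have h2 : (Matrix.toEuclideanLin A).toContinuousLinearMap (b ⟨p - 1, by omega⟩)
        = lam p • b ⟨p - 1, by omega⟩ := by
      rw [hb]
      simp only [LinearMap.coe_toContinuousLinearMap', Matrix.toLpLin_apply, hp']
      rw [hu_eig p (by simp; omega)]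
      rfl
    rw [h2, norm_smul, b.norm_eq_one, mul_one, mul_one, Real.norm_eq_abs] at h1
    exact h1
  have hlog : 1 ≤ Real.log (6 * specNorm A / δp) := by
    have h3 : (3 : ℝ) ≤ 6 * specNorm A / δp := by
      rw [le_div_iff₀ hδ0]; linarith
    rw [Real.le_log_iff_exp_le (by linarith)]
    linarith [Real.exp_one_lt_d9]
  have h5 : 0 ≤ specNorm E / |lam p| := by positivity
  nlinarith
end

section
/- Let A be an m×n real matrix of rank r_A and let 1 ≤ p < r_A. Let r ≥ p be an integer with r < min(m,n) such that σ_p/2 ≤ σ_p − σ_{r+1}, and set x̄ := max_{1≤i,j≤r} |u_iᵀ E v_j|. Assume that 0 < 4‖E‖ ≤ δ_p := σ_p − σ_{p+1} ≤ σ_p/4. Then max{ ‖Π̃_p^{left} − Π_p^{left}‖, ‖Π̃_p^{right} − Π_p^{right}‖ } ≤ 24√2 ( (‖E‖/σ_p)·log(6σ₁/δ_p) + r²x̄/δ_p ). -/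
open Matrix

namespace SVDPert
open scoped Matrix.Norms.L2Operator

lemma specNorm_eq {m n : ℕ} (M : Matrix (Fin m) (Fin n) ℝ) : specNorm M = ‖M‖ := rfl

lemma norm_toLp_sq {m : ℕ} (x : Fin m → ℝ) : ‖WithLp.toLp 2 x‖ ^ 2 = x ⬝ᵥ x := by
  rw [EuclideanSpace.norm_sq_eq]
  simp [dotProduct, pow_two]

lemma dot_self_nonneg {m : ℕ} (x : Fin m → ℝ) : 0 ≤ x ⬝ᵥ x := by
  rw [← norm_toLp_sq]; positivity

lemma cs {m : ℕ} (x y : Fin m → ℝ) : (x ⬝ᵥ y) ^ 2 ≤ (x ⬝ᵥ x) * (y ⬝ᵥ y) := by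
  have := Finset.sum_mul_sq_le_sq_mul_sq Finset.univ x y
  simpa [dotProduct, pow_two] using this

lemma norm_mulVec_sq {m n : ℕ} (M : Matrix (Fin m) (Fin n) ℝ) (x : Fin n → ℝ) :
    (M *ᵥ x) ⬝ᵥ (M *ᵥ x) ≤ ‖M‖ ^ 2 * (x ⬝ᵥ x) := by
  have := Matrix.l2_opNorm_mulVec M (WithLp.toLp 2 x)
  rw [← norm_toLp_sq, ← norm_toLp_sq, ← mul_pow]
  exact pow_le_pow_left₀ (norm_nonneg _) this 2

lemma norm_le_of {m n : ℕ} (M : Matrix (Fin m) (Fin n) ℝ) (C : ℝ) (hC : 0 ≤ C)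
    (h : ∀ x, (M *ᵥ x) ⬝ᵥ (M *ᵥ x) ≤ C ^ 2 * (x ⬝ᵥ x)) : ‖M‖ ≤ C := by
  rw [← specNorm_eq]
  refine ContinuousLinearMap.opNorm_le_bound _ hC fun x => ?_
  have := h (WithLp.ofLp x)
  rw [← norm_toLp_sq, ← norm_toLp_sq, ← mul_pow] at this
  exact (pow_le_pow_iff_left₀ (norm_nonneg _) (by positivity) two_ne_zero).1 this

lemma norm_tr {m n : ℕ} (M : Matrix (Fin m) (Fin n) ℝ) : ‖Mᵀ‖ = ‖M‖ := by
  rw [← Matrix.l2_opNorm_conjTranspose M, Matrix.conjTranspose_eq_transpose_of_trivial]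

lemma dot_mul {m n k : ℕ} (M : Matrix (Fin m) (Fin n) ℝ) (N : Matrix (Fin m) (Fin k) ℝ)
    (x : Fin n → ℝ) (y : Fin k → ℝ) :
    (M *ᵥ x) ⬝ᵥ (N *ᵥ y) = x ⬝ᵥ ((Mᵀ * N) *ᵥ y) := by
  rw [← Matrix.mulVec_mulVec, Matrix.dotProduct_mulVec x, Matrix.vecMul_transpose]

/-- projector distance -/
lemma proj_dist {m p : ℕ} (U W : Matrix (Fin m) (Fin p) ℝ) (hU : Uᵀ * U = 1) (hW : Wᵀ * W = 1) :
    ‖W * Wᵀ - U * Uᵀ‖ ≤ ‖(1 - U * Uᵀ) * (W * Wᵀ)‖ := by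
  set s := ‖(1 - U * Uᵀ) * (W * Wᵀ)‖ with hs
  have hs0 : 0 ≤ s := norm_nonneg _
  -- for each y
  have h1 : ∀ y : Fin p → ℝ,
      y ⬝ᵥ y - ((Uᵀ * W) *ᵥ y) ⬝ᵥ ((Uᵀ * W) *ᵥ y) ≤ s ^ 2 * (y ⬝ᵥ y) := by
    intro y
    have := norm_mulVec_sq ((1 - U * Uᵀ) * (W * Wᵀ)) (W *ᵥ y)
    rw [dot_mul W W, hW, one_mulVec, mulVec_mulVec, dot_mul] at this
    rw [dot_mul]
    have e : ((1 - U * Uᵀ) * (W * Wᵀ) * W)ᵀ * ((1 - U * Uᵀ) * (W * Wᵀ) * W)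
        = 1 - (Uᵀ * W)ᵀ * (Uᵀ * W) := by
      have e1 : (1 - U * Uᵀ) * (W * Wᵀ) * W = W - U * (Uᵀ * W) := by
        rw [Matrix.mul_assoc, Matrix.mul_assoc, hW, Matrix.mul_one, Matrix.sub_mul,
          Matrix.one_mul, Matrix.mul_assoc]
      rw [e1]
      simp only [transpose_sub, transpose_mul, transpose_transpose, Matrix.sub_mul, Matrix.mul_sub,
        hW]
      have : Wᵀ * U * Uᵀ * (U * (Uᵀ * W)) = Wᵀ * U * (Uᵀ * W) := by
        rw [Matrix.mul_assoc, ← Matrix.mul_assoc Uᵀ U, hU, Matrix.one_mul]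
      rw [this]
      simp only [Matrix.mul_assoc]
      abel
    rw [e, sub_mulVec, one_mulVec, dotProduct_sub] at this
    exact this
  -- key : the reversed inequality
  have h2 : ∀ x : Fin p → ℝ,
      x ⬝ᵥ x - ((Wᵀ * U) *ᵥ x) ⬝ᵥ ((Wᵀ * U) *ᵥ x) ≤ s ^ 2 * (x ⬝ᵥ x) := by
    intro x
    have hx0 := dot_self_nonneg x
    have hm0 := dot_self_nonneg ((Wᵀ * U) *ᵥ x)
    by_cases hs1 : 1 ≤ s
    · nlinarith [mul_nonneg (sub_nonneg.2 (one_le_pow₀ hs1 (n := 2))) hx0]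
    · push Not at hs1
      have hs2 : s ^ 2 < 1 := by nlinarith
      have hinj : Function.Injective (Uᵀ * W).mulVec := by
        intro a b hab
        have hab' : (Uᵀ * W) *ᵥ (a - b) = 0 := by
          rw [mulVec_sub]; exact sub_eq_zero.2 hab
        have h := h1 (a - b)
        rw [hab'] at h
        have h0 := dot_self_nonneg (a - b)
        simp only [dotProduct_zero, sub_zero] at h
        have : (a - b) ⬝ᵥ (a - b) = 0 := by nlinarith
        exact sub_eq_zero.1 (dotProduct_self_eq_zero.1 this)
      have hsurj : Function.Surjective (Uᵀ * W).mulVec := by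
        rw [Matrix.mulVec_surjective_iff_isUnit]
        exact Matrix.mulVec_injective_iff_isUnit.1 hinj
      obtain ⟨y, rfl⟩ := hsurj x
      set x := (Uᵀ * W) *ᵥ y with hx
      have hy := h1 y
      have hy0 := dot_self_nonneg y
      have hxy : x ⬝ᵥ x = ((Wᵀ * U) *ᵥ x) ⬝ᵥ y := by
        conv_lhs => rw [hx, dot_mul]
        rw [hx, dotProduct_comm _ y, mulVec_mulVec]
        simp
      have hcs := cs ((Wᵀ * U) *ᵥ x) y
      rw [← hxy] at hcs
      -- a = x.x, b = |Mᵀx|², c = y.y : a² ≤ b c, c(1-s²) ≤ a ⇒ (1-s²) a ≤ b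
      change x ⬝ᵥ x - (Wᵀ * U) *ᵥ x ⬝ᵥ (Wᵀ * U) *ᵥ x ≤ s ^ 2 * (x ⬝ᵥ x)
      change 0 ≤ x ⬝ᵥ x at hx0
      change 0 ≤ ((Wᵀ * U) *ᵥ x) ⬝ᵥ ((Wᵀ * U) *ᵥ x) at hm0
      rw [← hx] at hy
      generalize x ⬝ᵥ x = a at *
      generalize ((Wᵀ * U) *ᵥ x) ⬝ᵥ ((Wᵀ * U) *ᵥ x) = b at *
      generalize y ⬝ᵥ y = c at *
      rcases hx0.eq_or_lt with h | h
      · subst h; simpa using hm0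
      · have : (1 - s ^ 2) * a ^ 2 ≤ b * a := by nlinarith
        nlinarith
  have h3 : ‖U * Uᵀ * (1 - W * Wᵀ)‖ ≤ s := by
    rw [← norm_tr]
    refine norm_le_of _ _ hs0 fun z => ?_
    have := h2 (Uᵀ *ᵥ z)
    have hU2 : (Uᵀ *ᵥ z) ⬝ᵥ (Uᵀ *ᵥ z) ≤ z ⬝ᵥ z := by
      have := dot_self_nonneg ((1 - U * Uᵀ) *ᵥ z)
      rw [dot_mul] at this
      have e : (1 - U * Uᵀ)ᵀ * (1 - U * Uᵀ) = 1 - U * Uᵀ := by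
        simp only [transpose_sub, transpose_mul, transpose_transpose, transpose_one]
        have : U * Uᵀ * (U * Uᵀ) = U * Uᵀ := by
          rw [Matrix.mul_assoc, ← Matrix.mul_assoc Uᵀ U, hU, Matrix.one_mul]
        rw [Matrix.mul_sub, Matrix.sub_mul, Matrix.sub_mul, this]
        simp
      rw [e, sub_mulVec, one_mulVec, dotProduct_sub] at this
      rw [dot_mul, transpose_transpose]; linarith
    have e : ((U * Uᵀ * (1 - W * Wᵀ))ᵀ *ᵥ z) ⬝ᵥ ((U * Uᵀ * (1 - W * Wᵀ))ᵀ *ᵥ z)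
       = (Uᵀ *ᵥ z) ⬝ᵥ (Uᵀ *ᵥ z) - ((Wᵀ * U) *ᵥ (Uᵀ *ᵥ z)) ⬝ᵥ ((Wᵀ * U) *ᵥ (Uᵀ *ᵥ z)) := by
      rw [mulVec_mulVec, dot_mul, dot_mul, dot_mul, ← dotProduct_sub, ← sub_mulVec]
      congr 2
      simp only [transpose_sub, transpose_mul, transpose_transpose, transpose_one]
      have h4 : (1 - W * Wᵀ) * ((1 - W * Wᵀ) * (U * Uᵀ)) = (1 - W * Wᵀ) * (U * Uᵀ) := by
        rw [← Matrix.mul_assoc]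
        congr 1
        have : W * Wᵀ * (W * Wᵀ) = W * Wᵀ := by
          rw [Matrix.mul_assoc, ← Matrix.mul_assoc Wᵀ W, hW, Matrix.one_mul]
        rw [Matrix.mul_sub, Matrix.sub_mul, Matrix.sub_mul, this]
        simp
      have h5 : U * Uᵀ * (U * Uᵀ) = U * Uᵀ := by
        rw [Matrix.mul_assoc, ← Matrix.mul_assoc Uᵀ U, hU, Matrix.one_mul]
      rw [Matrix.mul_assoc, h4, Matrix.sub_mul, Matrix.mul_sub, Matrix.one_mul, h5]
      simp only [Matrix.mul_assoc]
    rw [e]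
    nlinarith [sq_nonneg s]
  refine norm_le_of _ _ hs0 fun x => ?_
  have hWW : W * Wᵀ * (W * Wᵀ) = W * Wᵀ := by
    rw [Matrix.mul_assoc, ← Matrix.mul_assoc Wᵀ W, hW, Matrix.one_mul]
  have hUU : U * Uᵀ * (U * Uᵀ) = U * Uᵀ := by
    rw [Matrix.mul_assoc, ← Matrix.mul_assoc Uᵀ U, hU, Matrix.one_mul]
  have a1 := norm_mulVec_sq ((1 - U * Uᵀ) * (W * Wᵀ)) ((W * Wᵀ) *ᵥ x)
  have a2 := norm_mulVec_sq (U * Uᵀ * (1 - W * Wᵀ)) ((1 - W * Wᵀ) *ᵥ x)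
  rw [← hs] at a1
  have a3 : ‖U * Uᵀ * (1 - W * Wᵀ)‖ ^ 2 ≤ s ^ 2 := pow_le_pow_left₀ (norm_nonneg _) h3 2
  have a4 := mul_le_mul_of_nonneg_right a3 (dot_self_nonneg ((1 - W * Wᵀ) *ᵥ x))
  have tP : (W * Wᵀ)ᵀ = W * Wᵀ := by simp
  have tQ : (U * Uᵀ)ᵀ = U * Uᵀ := by simp
  generalize W * Wᵀ = Q at *
  generalize U * Uᵀ = P at *
  have b1 : (Q *ᵥ x) ⬝ᵥ (Q *ᵥ x) + ((1 - Q) *ᵥ x) ⬝ᵥ ((1 - Q) *ᵥ x) = x ⬝ᵥ x := by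
    rw [dot_mul, dot_mul, ← dotProduct_add, ← add_mulVec]
    have : Qᵀ * Q + (1 - Q)ᵀ * (1 - Q) = 1 := by
      rw [transpose_sub, tP, transpose_one]
      noncomm_ring
      simp [hWW]
    rw [this, one_mulVec]
  have b2 : ((Q - P) *ᵥ x) ⬝ᵥ ((Q - P) *ᵥ x) =
      (((1 - P) * Q) *ᵥ (Q *ᵥ x)) ⬝ᵥ (((1 - P) * Q) *ᵥ (Q *ᵥ x)) +
      ((P * (1 - Q)) *ᵥ ((1 - Q) *ᵥ x)) ⬝ᵥ ((P * (1 - Q)) *ᵥ ((1 - Q) *ᵥ x)) := by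
    rw [mulVec_mulVec, mulVec_mulVec, dot_mul, dot_mul, dot_mul, ← dotProduct_add, ← add_mulVec]
    congr 2
    have c1 : (1 - P) * Q * Q = Q - P * Q := by rw [Matrix.mul_assoc, hWW, Matrix.sub_mul, Matrix.one_mul]
    have c2 : P * (1 - Q) * (1 - Q) = P - P * Q := by
      have : (1 - Q) * (1 - Q) = 1 - Q := by
        rw [Matrix.mul_sub, Matrix.sub_mul, Matrix.sub_mul, hWW]; simp
      rw [Matrix.mul_assoc, this, Matrix.mul_sub, Matrix.mul_one]
    rw [c1, c2]
    simp only [transpose_sub, transpose_mul, tP, tQ]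
    simp only [Matrix.mul_sub, Matrix.sub_mul, hWW, hUU, Matrix.mul_assoc]
    have : P * (P * Q) = P * Q := by rw [← Matrix.mul_assoc, hUU]
    rw [this]
    abel
  rw [b2, ← b1]
  nlinarith



def ON {m : ℕ} (k : ℕ) (u : ℕ → Fin m → ℝ) : Prop :=
  ∀ i ∈ Finset.Icc 1 k, ∀ j ∈ Finset.Icc 1 k, u i ⬝ᵥ u j = if i = j then 1 else 0

def D {m n : ℕ} (S : Finset ℕ) (c : ℕ → ℝ) (a : ℕ → Fin m → ℝ) (b : ℕ → Fin n → ℝ) :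
    Matrix (Fin m) (Fin n) ℝ := ∑ i ∈ S, c i • vecMulVec (a i) (b i)

lemma D_congr {m n : ℕ} {S T : Finset ℕ} {c d : ℕ → ℝ} (a : ℕ → Fin m → ℝ) (b : ℕ → Fin n → ℝ)
    (h : S = T) (h2 : ∀ i ∈ T, c i = d i) : D S c a b = D T d a b := by
  subst h
  exact Finset.sum_congr rfl fun i hi => by rw [h2 i hi]

lemma D_tr {m n : ℕ} (S : Finset ℕ) (c : ℕ → ℝ) (a : ℕ → Fin m → ℝ) (b : ℕ → Fin n → ℝ) :
    (D S c a b)ᵀ = D S c b a := by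
  simp [D, transpose_sum, transpose_vecMulVec]

lemma D_mul {k m n l : ℕ} {S T : Finset ℕ} (hS : S ⊆ Finset.Icc 1 k) (hT : T ⊆ Finset.Icc 1 k)
    (c d : ℕ → ℝ) (a : ℕ → Fin m → ℝ) (b : ℕ → Fin n → ℝ) (e : ℕ → Fin l → ℝ) (hb : ON k b) :
    D S c a b * D T d b e = D (S ∩ T) (fun i => c i * d i) a e := by
  classical
  unfold D
  rw [Matrix.sum_mul, ← Finset.filter_mem_eq_inter, Finset.sum_filter]
  refine Finset.sum_congr rfl fun i hi => ?_
  rw [Matrix.mul_sum]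
  have : ∀ j ∈ T, c i • vecMulVec (a i) (b i) * d j • vecMulVec (b j) (e j)
      = if i = j then (c i * d i) • vecMulVec (a i) (e i) else 0 := by
    intro j hj
    rw [Matrix.smul_mul, Matrix.mul_smul, vecMulVec_mul_vecMulVec, hb i (hS hi) j (hT hj)]
    split_ifs with h
    · subst h; simp [smul_smul]
    · have h0 : vecMulVec (a i) (0 : Fin l → ℝ) = 0 := by ext; simp [vecMulVec_apply]
      simp [h0]
  rw [Finset.sum_congr rfl this, Finset.sum_ite_eq]

lemma D_mulVec {m n : ℕ} (S : Finset ℕ) (c : ℕ → ℝ) (a : ℕ → Fin m → ℝ) (b : ℕ → Fin n → ℝ)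
    (x : Fin n → ℝ) : D S c a b *ᵥ x = ∑ i ∈ S, (c i * (b i ⬝ᵥ x)) • a i := by
  unfold D
  rw [sum_mulVec]
  refine Finset.sum_congr rfl fun i _ => ?_
  rw [smul_mulVec, vecMulVec_mulVec]
  ext j
  simp; ring

lemma comb_sq {k m : ℕ} {S : Finset ℕ} (hS : S ⊆ Finset.Icc 1 k) (a : ℕ → Fin m → ℝ) (ha : ON k a)
    (w : ℕ → ℝ) : (∑ i ∈ S, w i • a i) ⬝ᵥ (∑ i ∈ S, w i • a i) = ∑ i ∈ S, (w i) ^ 2 := by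
  rw [sum_dotProduct]
  refine Finset.sum_congr rfl fun i hi => ?_
  rw [dotProduct_sum]
  have : ∀ j ∈ S, (w i • a i) ⬝ᵥ (w j • a j) = if i = j then (w i) ^ 2 else 0 := by
    intro j hj
    rw [smul_dotProduct, dotProduct_smul, ha i (hS hi) j (hS hj)]
    split_ifs with h
    · subst h; simp [pow_two]
    · simp
  rw [Finset.sum_congr rfl this, Finset.sum_ite_eq, if_pos hi]

lemma bessel {k m : ℕ} {S : Finset ℕ} (hS : S ⊆ Finset.Icc 1 k) (a : ℕ → Fin m → ℝ) (ha : ON k a)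
    (x : Fin m → ℝ) : ∑ i ∈ S, (a i ⬝ᵥ x) ^ 2 ≤ x ⬝ᵥ x := by
  have h := dot_self_nonneg (x - ∑ i ∈ S, (a i ⬝ᵥ x) • a i)
  rw [sub_dotProduct, dotProduct_sub, dotProduct_sub, comb_sq hS a ha] at h
  have e : (∑ i ∈ S, (a i ⬝ᵥ x) • a i) ⬝ᵥ x = ∑ i ∈ S, (a i ⬝ᵥ x) ^ 2 := by
    rw [sum_dotProduct]
    exact Finset.sum_congr rfl fun i _ => by rw [smul_dotProduct, smul_eq_mul, pow_two]
  rw [dotProduct_comm x (∑ i ∈ S, (a i ⬝ᵥ x) • a i), e] at h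
  linarith

lemma D_norm {k m n : ℕ} {S : Finset ℕ} (hS : S ⊆ Finset.Icc 1 k) (c : ℕ → ℝ)
    (a : ℕ → Fin m → ℝ) (b : ℕ → Fin n → ℝ) (ha : ON k a) (hb : ON k b) (C : ℝ) (hC : 0 ≤ C)
    (h0 : ∀ i ∈ S, 0 ≤ c i) (h : ∀ i ∈ S, c i ≤ C) : ‖D S c a b‖ ≤ C := by
  refine norm_le_of _ _ hC fun x => ?_
  rw [D_mulVec, comb_sq hS a ha]
  calc _ ≤ ∑ i ∈ S, C ^ 2 * (b i ⬝ᵥ x) ^ 2 := by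
        refine Finset.sum_le_sum fun i hi => ?_
        rw [mul_pow]
        exact mul_le_mul_of_nonneg_right (pow_le_pow_left₀ (h0 i hi) (h i hi) 2) (sq_nonneg _)
    _ ≤ _ := by
        rw [← Finset.mul_sum]
        exact mul_le_mul_of_nonneg_left (bessel hS b hb x) (sq_nonneg _)

lemma compl_norm {m : ℕ} (P : Matrix (Fin m) (Fin m) ℝ) (h1 : Pᵀ = P) (h2 : P * P = P) :
    ‖1 - P‖ ≤ 1 := by
  refine norm_le_of _ _ zero_le_one fun x => ?_
  have h := dot_self_nonneg (P *ᵥ x)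
  rw [dot_mul, h1, h2] at h
  rw [dot_mul]
  have e : (1 - P)ᵀ * (1 - P) = 1 - P := by
    rw [transpose_sub, h1, transpose_one, Matrix.mul_sub, Matrix.sub_mul, Matrix.sub_mul, h2]; simp
  rw [e, sub_mulVec, one_mulVec, dotProduct_sub]
  linarith

lemma vecMulVec_norm {m n : ℕ} (a : Fin m → ℝ) (b : Fin n → ℝ) (ha : a ⬝ᵥ a = 1) (hb : b ⬝ᵥ b = 1) :
    ‖vecMulVec a b‖ ≤ 1 := by
  refine norm_le_of _ _ zero_le_one fun x => ?_
  rw [vecMulVec_mulVec]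
  have := cs b x
  simp only [op_smul_eq_smul, smul_dotProduct, dotProduct_smul, ha, smul_eq_mul]
  rw [hb] at this
  nlinarith

/-- column matrix -/
def col {m : ℕ} (p : ℕ) (u : ℕ → Fin m → ℝ) : Matrix (Fin m) (Fin p) ℝ :=
  Matrix.of fun a i => u (i.1 + 1) a

lemma sum_Icc_fin {M : Type*} [AddCommMonoid M] (p : ℕ) (f : ℕ → M) :
    ∑ i ∈ Finset.Icc 1 p, f i = ∑ i : Fin p, f (i.1 + 1) := by
  rw [Fin.sum_univ_eq_sum_range (fun i => f (i + 1)), Finset.range_eq_Ico,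
    Finset.sum_Ico_add' f 0 p 1]
  rfl

lemma col_mul_tr {m : ℕ} (p : ℕ) (u : ℕ → Fin m → ℝ) :
    col p u * (col p u)ᵀ = ∑ i ∈ Finset.Icc 1 p, vecMulVec (u i) (u i) := by
  rw [sum_Icc_fin]
  ext a b
  simp [col, Matrix.mul_apply, Matrix.sum_apply, vecMulVec_apply]

lemma D_one {m : ℕ} (p : ℕ) (u : ℕ → Fin m → ℝ) :
    D (Finset.Icc 1 p) (fun _ => 1) u u = ∑ i ∈ Finset.Icc 1 p, vecMulVec (u i) (u i) := by
  simp [D]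

lemma tr_mul_col {k m : ℕ} (p : ℕ) (hp : p ≤ k) (u : ℕ → Fin m → ℝ) (hu : ON k u) :
    (col p u)ᵀ * col p u = 1 := by
  ext i j
  have := hu (i.1 + 1) (by simp; omega) (j.1 + 1) (by simp; omega)
  rw [Matrix.one_apply]
  simp only [Matrix.mul_apply, col, transpose_apply, of_apply]
  rw [dotProduct] at this
  rw [this]
  simp [Fin.ext_iff]

lemma svd_aux {m n : ℕ} (A : Matrix (Fin m) (Fin n) ℝ) (σ : ℕ → ℝ) (u : ℕ → Fin m → ℝ)
    (v : ℕ → Fin n → ℝ) (hv : ON n v) (h : ∀ i ∈ Finset.Icc 1 n, A *ᵥ v i = σ i • u i) :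
    A = D (Finset.Icc 1 n) σ u v := by
  have h1 : col n v * (col n v)ᵀ = 1 := mul_eq_one_comm.1 (tr_mul_col n le_rfl v hv)
  rw [col_mul_tr] at h1
  conv_lhs => rw [← Matrix.mul_one A, ← h1, Matrix.mul_sum]
  refine Finset.sum_congr rfl fun i hi => ?_
  rw [mul_vecMulVec, h i hi, smul_vecMulVec]

lemma svd {m n : ℕ} (A : Matrix (Fin m) (Fin n) ℝ) (σ : ℕ → ℝ) (u : ℕ → Fin m → ℝ)
    (v : ℕ → Fin n → ℝ) (hu : ON (min m n) u) (hv : ON (min m n) v)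
    (h : ∀ i ∈ Finset.Icc 1 (min m n), A *ᵥ v i = σ i • u i ∧ Aᵀ *ᵥ u i = σ i • v i) :
    A = D (Finset.Icc 1 (min m n)) σ u v := by
  rcases le_total n m with hmn | hmn
  · rw [min_eq_right hmn] at *
    exact svd_aux A σ u v hv fun i hi => (h i hi).1
  · rw [min_eq_left hmn] at *
    have := svd_aux Aᵀ σ v u hu fun i hi => (h i hi).2
    rw [← Matrix.transpose_transpose A, this, D_tr]

lemma weyl {k m n : ℕ} (A E : Matrix (Fin m) (Fin n) ℝ) (σ tσ : ℕ → ℝ) (u tu : ℕ → Fin m → ℝ)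
    (v tv : ℕ → Fin n → ℝ) (hu : ON k u) (hv : ON k v) (htu : ON k tu) (htv : ON k tv)
    (hA : A = D (Finset.Icc 1 k) σ u v) (hAE : A + E = D (Finset.Icc 1 k) tσ tu tv)
    (p : ℕ) (hp1 : 1 ≤ p) (hpk : p ≤ k) (hσp : 0 < σ p)
    (hσ : ∀ i ∈ Finset.Icc 1 p, σ p ≤ σ i)
    (htσ0 : ∀ i ∈ Finset.Icc 1 k, 0 ≤ tσ i)
    (htσ : ∀ i ∈ Finset.Icc p k, tσ i ≤ tσ p) : σ p - ‖E‖ ≤ tσ p := by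
  classical
  have hsub : Finset.Icc 1 p ⊆ Finset.Icc 1 k := Finset.Icc_subset_Icc le_rfl hpk
  -- the vector
  obtain ⟨x, hx0, hx1, hx2⟩ : ∃ x : Fin n → ℝ, x ≠ 0 ∧
      D (Finset.Icc 1 p) (fun _ => 1) v v *ᵥ x = x ∧ ∀ j ∈ Finset.Ico 1 p, tv j ⬝ᵥ x = 0 := by
    let f : (Fin p → ℝ) →ₗ[ℝ] (Fin (p - 1) → ℝ) :=
      Matrix.mulVecLin ((col (p - 1) tv)ᵀ * col p v)
    have hker : LinearMap.ker f ≠ ⊥ := LinearMap.ker_ne_bot_of_finrank_lt (by simp; omega)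
    obtain ⟨c, hc, hc0⟩ := (Submodule.ne_bot_iff _).1 hker
    have hc' : ((col (p - 1) tv)ᵀ * col p v) *ᵥ c = 0 := hc
    refine ⟨col p v *ᵥ c, ?_, ?_, ?_⟩
    · intro h
      apply hc0
      rw [← one_mulVec c, ← tr_mul_col p hpk v hv, ← mulVec_mulVec, h, mulVec_zero]
    · rw [D_one, ← col_mul_tr, mulVec_mulVec, Matrix.mul_assoc, tr_mul_col p hpk v hv, Matrix.mul_one]
    · intro j hj
      rw [Finset.mem_Ico] at hj
      rw [← mulVec_mulVec] at hc'
      have := congrFun hc' ⟨j - 1, by omega⟩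
      simp only [mulVec, Pi.zero_apply] at this
      rw [← this]
      congr 1
      ext a
      simp [col, Nat.sub_add_cancel hj.1]
  let X : Matrix (Fin n) (Fin 1) ℝ := vecMulVec x (fun _ => 1)
  have hX0 : 0 < ‖X‖ := by
    rw [norm_pos_iff]
    intro h
    apply hx0
    ext i
    simpa [X, vecMulVec_apply] using congrFun (congrFun h i) 0
  have hB : D (Finset.Icc 1 p) (fun i => (σ i)⁻¹) v u * A = D (Finset.Icc 1 p) (fun _ => 1) v v := by
    rw [hA, D_mul hsub (le_refl _) _ _ _ _ _ hu]
    refine D_congr _ _ (Finset.inter_eq_left.2 hsub) fun i hi => ?_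
    exact inv_mul_cancel₀ (lt_of_lt_of_le hσp (hσ i hi)).ne'
  have hBn : ‖D (Finset.Icc 1 p) (fun i => (σ i)⁻¹) v u‖ ≤ (σ p)⁻¹ := by
    refine D_norm hsub _ _ _ hv hu _ (by positivity) ?_ ?_
    · intro i hi; exact inv_nonneg.2 (hσp.le.trans (hσ i hi))
    · intro i hi; exact inv_anti₀ hσp (hσ i hi)
  have e1 : ‖X‖ ≤ (σ p)⁻¹ * ‖A * X‖ := by
    have : X = D (Finset.Icc 1 p) (fun i => (σ i)⁻¹) v u * (A * X) := by
      rw [← Matrix.mul_assoc, hB, mul_vecMulVec, hx1]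
    calc ‖X‖ = _ := congrArg _ this
      _ ≤ _ := Matrix.l2_opNorm_mul _ _
      _ ≤ _ := mul_le_mul_of_nonneg_right hBn (norm_nonneg _)
  have hpm : p ∈ Finset.Icc 1 k := Finset.mem_Icc.2 ⟨hp1, hpk⟩
  have hsub2 : Finset.Icc p k ⊆ Finset.Icc 1 k := Finset.Icc_subset_Icc hp1 le_rfl
  have e2 : ‖(A + E) * X‖ ≤ tσ p * ‖X‖ := by
    have : (A + E) * X = D (Finset.Icc p k) tσ tu tv * X := by
      rw [hAE, mul_vecMulVec, mul_vecMulVec, D_mulVec, D_mulVec]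
      congr 1
      symm
      refine Finset.sum_subset hsub2 fun i hi hi' => ?_
      rw [hx2 i (by simp at hi hi' ⊢; omega)]; simp
    rw [this]
    refine (Matrix.l2_opNorm_mul _ _).trans (mul_le_mul_of_nonneg_right ?_ (norm_nonneg _))
    exact D_norm hsub2 _ _ _ htu htv _ (htσ0 p hpm) (fun i hi => htσ0 i (hsub2 hi)) htσ
  have e3 : ‖A * X‖ ≤ ‖(A + E) * X‖ + ‖E‖ * ‖X‖ := by
    have : A * X = (A + E) * X - E * X := by rw [Matrix.add_mul]; simp
    rw [this]
    exact (norm_sub_le _ _).trans (add_le_add le_rfl (Matrix.l2_opNorm_mul _ _))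
  have e4 : σ p * ‖X‖ ≤ (tσ p + ‖E‖) * ‖X‖ := by
    rw [inv_mul_eq_div, le_div_iff₀ hσp] at e1
    nlinarith
  have := le_of_mul_le_mul_right e4 hX0
  linarith

lemma step {m n : ℕ} (A E : Matrix (Fin m) (Fin n) ℝ) (P P' : Matrix (Fin m) (Fin m) ℝ)
    (Q Q' : Matrix (Fin n) (Fin n) ℝ) (B : Matrix (Fin n) (Fin m) ℝ) (c t : ℝ) (ht : 0 < t)
    (hP' : (A + E) * B = P') (hB : Q' * B = B) (hBn : ‖B‖ ≤ t⁻¹)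
    (hPA : P * A * Q = P * A) (hc : ‖P * A‖ ≤ c) :
    t * ‖P * P'‖ ≤ c * ‖Q * Q'‖ + ‖P * E * Q'‖ := by
  have e : P * P' = (P * A * (Q * Q') + P * E * Q') * B := by
    rw [Matrix.add_mul, ← Matrix.mul_assoc (P * A), hPA, Matrix.mul_assoc _ Q', hB,
      Matrix.mul_assoc _ Q', hB, ← hP', ← Matrix.add_mul, ← Matrix.mul_add, Matrix.mul_assoc]
  have h1 : ‖P * P'‖ ≤ (c * ‖Q * Q'‖ + ‖P * E * Q'‖) * t⁻¹ := by
    rw [e]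
    refine (Matrix.l2_opNorm_mul _ _).trans ?_
    have h2 : ‖P * A * (Q * Q') + P * E * Q'‖ ≤ c * ‖Q * Q'‖ + ‖P * E * Q'‖ := by
      refine (norm_add_le _ _).trans (add_le_add ?_ le_rfl)
      exact (Matrix.l2_opNorm_mul _ _).trans (mul_le_mul_of_nonneg_right hc (norm_nonneg _))
    exact mul_le_mul h2 hBn (norm_nonneg _) ((norm_nonneg _).trans h2)
  rw [← div_eq_mul_inv, le_div_iff₀ ht] at h1
  linarith


structure Data {m n : ℕ} (k : ℕ) (A E : Matrix (Fin m) (Fin n) ℝ) (σ tσ : ℕ → ℝ)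
    (u tu : ℕ → Fin m → ℝ) (v tv : ℕ → Fin n → ℝ) (p r : ℕ) (x : ℝ) : Prop where
  hu : ON k u
  hv : ON k v
  htu : ON k tu
  htv : ON k tv
  hA : A = D (Finset.Icc 1 k) σ u v
  hAE : A + E = D (Finset.Icc 1 k) tσ tu tv
  σmono : ∀ i ∈ Finset.Icc 1 k, ∀ j ∈ Finset.Icc 1 k, i ≤ j → σ j ≤ σ i
  σ0 : ∀ i ∈ Finset.Icc 1 k, 0 ≤ σ i
  tσmono : ∀ i ∈ Finset.Icc 1 k, ∀ j ∈ Finset.Icc 1 k, i ≤ j → tσ j ≤ tσ i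
  tσ0 : ∀ i ∈ Finset.Icc 1 k, 0 ≤ tσ i
  hp : 1 ≤ p
  hpr : p ≤ r
  hrk : r < k
  hx : ∀ i ∈ Finset.Icc 1 r, ∀ j ∈ Finset.Icc 1 r, |u i ⬝ᵥ E *ᵥ v j| ≤ x

variable {m n k : ℕ} {A E : Matrix (Fin m) (Fin n) ℝ} {σ tσ : ℕ → ℝ}
    {u tu : ℕ → Fin m → ℝ} {v tv : ℕ → Fin n → ℝ} {p r : ℕ} {x : ℝ}

lemma Data.symm (d : Data k A E σ tσ u tu v tv p r x) :
    Data k Aᵀ Eᵀ σ tσ v tv u tu p r x where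
  hu := d.hv
  hv := d.hu
  htu := d.htv
  htv := d.htu
  hA := by rw [← D_tr, ← d.hA]
  hAE := by rw [← D_tr, ← d.hAE, transpose_add]
  σmono := d.σmono
  σ0 := d.σ0
  tσmono := d.tσmono
  tσ0 := d.tσ0
  hp := d.hp
  hpr := d.hpr
  hrk := d.hrk
  hx := by
    intro i hi j hj
    have := d.hx j hj i hi
    rwa [mulVec_transpose, ← dotProduct_comm, ← dotProduct_mulVec]

/-- shorthand for projectors -/
abbrev Pr {m : ℕ} (S : Finset ℕ) (u : ℕ → Fin m → ℝ) : Matrix (Fin m) (Fin m) ℝ :=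
  D S (fun _ => 1) u u

lemma Pr_mul {k m n : ℕ} {S T : Finset ℕ} (hS : S ⊆ Finset.Icc 1 k) (hT : T ⊆ Finset.Icc 1 k)
    (c : ℕ → ℝ) (a : ℕ → Fin m → ℝ) (b : ℕ → Fin n → ℝ) (ha : ON k a) :
    Pr S a * D T c a b = D (S ∩ T) c a b := by
  rw [Pr, D_mul hS hT _ _ _ _ _ ha]
  simp

lemma mul_Pr {k m n : ℕ} {S T : Finset ℕ} (hS : S ⊆ Finset.Icc 1 k) (hT : T ⊆ Finset.Icc 1 k)
    (c : ℕ → ℝ) (a : ℕ → Fin m → ℝ) (b : ℕ → Fin n → ℝ) (hb : ON k b) :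
    D T c a b * Pr S b = D (T ∩ S) c a b := by
  rw [Pr, D_mul hT hS _ _ _ _ _ hb]
  simp

lemma Pr_norm {k m : ℕ} {S : Finset ℕ} (hS : S ⊆ Finset.Icc 1 k) (a : ℕ → Fin m → ℝ) (ha : ON k a) :
    ‖Pr S a‖ ≤ 1 :=
  D_norm hS _ _ _ ha ha _ zero_le_one (fun _ _ => zero_le_one) (fun _ _ => le_rfl)

lemma Pr_compl_norm {k m : ℕ} {S : Finset ℕ} (hS : S ⊆ Finset.Icc 1 k) (a : ℕ → Fin m → ℝ)
    (ha : ON k a) : ‖1 - Pr S a‖ ≤ 1 :=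
  compl_norm _ (D_tr _ _ _ _) (by rw [Pr_mul hS hS _ _ _ ha, Finset.inter_self])

lemma mul_le_of {a b c : ℕ} (M : Matrix (Fin a) (Fin b) ℝ) (N : Matrix (Fin b) (Fin c) ℝ) (s t : ℝ)
    (h1 : ‖M‖ ≤ s) (h2 : ‖N‖ ≤ t) : ‖M * N‖ ≤ s * t :=
  (Matrix.l2_opNorm_mul _ _).trans (mul_le_mul h1 h2 (norm_nonneg _) ((norm_nonneg _).trans h1))

lemma Data.sp (d : Data k A E σ tσ u tu v tv p r x) : Finset.Icc 1 p ⊆ Finset.Icc 1 k :=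
  Finset.Icc_subset_Icc le_rfl (d.hpr.trans d.hrk.le)

lemma Data.sr (d : Data k A E σ tσ u tu v tv p r x) : Finset.Icc 1 r ⊆ Finset.Icc 1 k :=
  Finset.Icc_subset_Icc le_rfl d.hrk.le

lemma Data.s2 (d : Data k A E σ tσ u tu v tv p r x) : Finset.Ioc p r ⊆ Finset.Icc 1 k := by
  intro i hi
  have := d.hrk
  simp at hi ⊢; omega

lemma s3 : Finset.Ioc r k ⊆ Finset.Icc 1 k := by
  intro i hi
  simp at hi ⊢; omega

/-- the pseudo-inverse of the top part -/
lemma Data.pinv (d : Data k A E σ tσ u tu v tv p r x) (ht : 0 < tσ p) :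
    ∃ B : Matrix (Fin n) (Fin m) ℝ, (A + E) * B = Pr (Finset.Icc 1 p) tu ∧
      Pr (Finset.Icc 1 p) tv * B = B ∧ ‖B‖ ≤ (tσ p)⁻¹ := by
  have hpk := d.hpr.trans d.hrk.le
  have hge : ∀ i ∈ Finset.Icc 1 p, tσ p ≤ tσ i := fun i hi =>
    d.tσmono i (d.sp hi) p (Finset.mem_Icc.2 ⟨d.hp, hpk⟩) (Finset.mem_Icc.1 hi).2
  refine ⟨D (Finset.Icc 1 p) (fun i => (tσ i)⁻¹) tv tu, ?_, ?_, ?_⟩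
  · rw [d.hAE, D_mul (le_refl _) d.sp _ _ _ _ _ d.htv]
    exact D_congr _ _ (Finset.inter_eq_right.2 d.sp) fun i hi =>
      mul_inv_cancel₀ (ht.trans_le (hge i hi)).ne'
  · rw [Pr_mul d.sp d.sp _ _ _ d.htv, Finset.inter_self]
  · refine D_norm d.sp _ _ _ d.htv d.htu _ (by positivity) ?_ ?_
    · intro i hi; exact inv_nonneg.2 (ht.le.trans (hge i hi))
    · intro i hi; exact inv_anti₀ ht (hge i hi)

lemma Data.three (d : Data k A E σ tσ u tu v tv p r x) (ht : 0 < tσ p) :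
    tσ p * ‖(1 - Pr (Finset.Icc 1 r) u) * Pr (Finset.Icc 1 p) tu‖ ≤
      σ (r + 1) * ‖(1 - Pr (Finset.Icc 1 r) v) * Pr (Finset.Icc 1 p) tv‖ + ‖E‖ := by
  obtain ⟨B, hB1, hB2, hB3⟩ := d.pinv ht
  have hrk := d.hrk
  have hPA : (1 - Pr (Finset.Icc 1 r) u) * A = D (Finset.Ioc r k) σ u v := by
    rw [Matrix.sub_mul, Matrix.one_mul, d.hA, Pr_mul d.sr (le_refl _) _ _ _ d.hu,
      Finset.inter_eq_left.2 d.sr, sub_eq_iff_eq_add]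
    unfold D
    rw [← Finset.sum_union]
    · congr 1
      ext i; simp; omega
    · rw [Finset.disjoint_left]
      intro i hi; simp at hi ⊢; omega
  have hPAQ : D (Finset.Ioc r k) σ u v * (1 - Pr (Finset.Icc 1 r) v) = D (Finset.Ioc r k) σ u v := by
    rw [Matrix.mul_sub, Matrix.mul_one, mul_Pr d.sr s3 _ _ _ d.hv]
    have : Finset.Ioc r k ∩ Finset.Icc 1 r = ∅ := by
      ext i; simp; omega
    rw [this]; simp [D]
  have hr1 : r + 1 ∈ Finset.Icc 1 k := by simp; omega
  have h := step A E (1 - Pr (Finset.Icc 1 r) u) (Pr (Finset.Icc 1 p) tu)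
    (1 - Pr (Finset.Icc 1 r) v) (Pr (Finset.Icc 1 p) tv) B (σ (r + 1)) (tσ p) ht hB1 hB2 hB3
    (by rw [hPA, hPAQ]) (by
      rw [hPA]
      exact D_norm s3 _ _ _ d.hu d.hv _ (d.σ0 _ hr1) (fun i hi => d.σ0 i (s3 hi))
        fun i hi => d.σmono _ hr1 _ (s3 hi) (by simp at hi; omega))
  refine h.trans (add_le_add le_rfl ?_)
  have := mul_le_of _ _ _ _ (mul_le_of _ E _ _ (Pr_compl_norm d.sr u d.hu) le_rfl)
    (Pr_norm d.sp tv d.htv)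
  simpa using this

lemma Data.x0 (d : Data k A E σ tσ u tu v tv p r x) : 0 ≤ x := by
  have h1 : 1 ∈ Finset.Icc 1 r := by simpa using d.hp.trans d.hpr
  exact (abs_nonneg _).trans (d.hx 1 h1 1 h1)

lemma Data.mid (d : Data k A E σ tσ u tu v tv p r x) :
    ‖Pr (Finset.Icc 1 r) u * E * Pr (Finset.Icc 1 r) v‖ ≤ (r : ℝ) ^ 2 * x := by
  have e : Pr (Finset.Icc 1 r) u * E * Pr (Finset.Icc 1 r) v =
      ∑ i ∈ Finset.Icc 1 r, ∑ j ∈ Finset.Icc 1 r, (u i ⬝ᵥ E *ᵥ v j) • vecMulVec (u i) (v j) := by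
    rw [Pr, Pr, D_one, D_one, Matrix.sum_mul, Matrix.sum_mul]
    refine Finset.sum_congr rfl fun i _ => ?_
    rw [Matrix.mul_sum]
    refine Finset.sum_congr rfl fun j _ => ?_
    rw [Matrix.mul_assoc, mul_vecMulVec, mul_vecMulVec, vecMulVec_mulVec]
    ext a b
    simp [vecMulVec_apply]
    ring
  rw [e]
  have hb : ∀ i ∈ Finset.Icc 1 r, ∀ j ∈ Finset.Icc 1 r,
      ‖(u i ⬝ᵥ E *ᵥ v j) • vecMulVec (u i) (v j)‖ ≤ x := by
    intro i hi j hj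
    rw [norm_smul, Real.norm_eq_abs]
    have h1 := vecMulVec_norm (u i) (v j) (by simpa using d.hu i (d.sr hi) i (d.sr hi))
      (by simpa using d.hv j (d.sr hj) j (d.sr hj))
    have := mul_le_mul (d.hx i hi j hj) h1 (norm_nonneg _) d.x0
    simpa using this
  calc _ ≤ ∑ i ∈ Finset.Icc 1 r, ∑ j ∈ Finset.Icc 1 r, x :=
        norm_sum_le_of_le _ fun i hi => norm_sum_le_of_le _ fun j hj => hb i hi j hj
    _ = _ := by simp; ring

lemma Data.two (d : Data k A E σ tσ u tu v tv p r x) (ht : 0 < tσ p) :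
    tσ p * ‖Pr (Finset.Ioc p r) u * Pr (Finset.Icc 1 p) tu‖ ≤
      σ (p + 1) * ‖Pr (Finset.Ioc p r) v * Pr (Finset.Icc 1 p) tv‖ +
      ((r : ℝ) ^ 2 * x + ‖E‖ * ‖(1 - Pr (Finset.Icc 1 r) v) * Pr (Finset.Icc 1 p) tv‖) := by
  obtain ⟨B, hB1, hB2, hB3⟩ := d.pinv ht
  have hrk := d.hrk
  have hpr := d.hpr
  have hPA : Pr (Finset.Ioc p r) u * A = D (Finset.Ioc p r) σ u v := by
    rw [d.hA, Pr_mul d.s2 (le_refl _) _ _ _ d.hu, Finset.inter_eq_left.2 d.s2]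
  have hPAQ : D (Finset.Ioc p r) σ u v * Pr (Finset.Ioc p r) v = D (Finset.Ioc p r) σ u v := by
    rw [mul_Pr d.s2 d.s2 _ _ _ d.hv, Finset.inter_self]
  have hr1 : p + 1 ∈ Finset.Icc 1 k := by simp; omega
  have h := step A E (Pr (Finset.Ioc p r) u) (Pr (Finset.Icc 1 p) tu)
    (Pr (Finset.Ioc p r) v) (Pr (Finset.Icc 1 p) tv) B (σ (p + 1)) (tσ p) ht hB1 hB2 hB3
    (by rw [hPA, hPAQ]) (by
      rw [hPA]
      exact D_norm d.s2 _ _ _ d.hu d.hv _ (d.σ0 _ hr1) (fun i hi => d.σ0 i (d.s2 hi))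
        fun i hi => d.σmono _ hr1 _ (d.s2 hi) (by simp at hi; omega))
  refine h.trans (add_le_add le_rfl ?_)
  have e1 : Pr (Finset.Ioc p r) u * Pr (Finset.Icc 1 r) u = Pr (Finset.Ioc p r) u := by
    rw [Pr_mul d.s2 d.sr _ _ _ d.hu]
    congr 1
    ext i; simp; omega
  have e : Pr (Finset.Ioc p r) u * E * Pr (Finset.Icc 1 p) tv =
      Pr (Finset.Ioc p r) u * (Pr (Finset.Icc 1 r) u * E * Pr (Finset.Icc 1 r) v)
        * Pr (Finset.Icc 1 p) tv
      + Pr (Finset.Ioc p r) u * E * ((1 - Pr (Finset.Icc 1 r) v) * Pr (Finset.Icc 1 p) tv) := by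
    rw [← Matrix.mul_assoc, ← Matrix.mul_assoc, e1, ← Matrix.mul_assoc, ← Matrix.add_mul,
      Matrix.mul_sub, Matrix.mul_one, add_sub_cancel]
  rw [e]
  refine (norm_add_le _ _).trans (add_le_add ?_ ?_)
  · have := mul_le_of _ _ _ _ (mul_le_of _ _ _ _ (Pr_norm d.s2 u d.hu) d.mid) (Pr_norm d.sp tv d.htv)
    simpa using this
  · have := mul_le_of _ _ _ _ (mul_le_of _ E _ _ (Pr_norm d.s2 u d.hu) le_rfl)
      (le_refl ‖(1 - Pr (Finset.Icc 1 r) v) * Pr (Finset.Icc 1 p) tv‖)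
    simpa using this

lemma Data.core (d : Data k A E σ tσ u tu v tv p r x) (hσ : σ (r + 1) ≤ σ p / 2) (δ : ℝ)
    (hδ : δ = σ p - σ (p + 1)) (hE : 0 < ‖E‖) (h4 : 4 * ‖E‖ ≤ δ) (h5 : δ ≤ σ p / 4) :
    ‖(∑ i ∈ Finset.Icc 1 p, vecMulVec (tu i) (tu i)) - ∑ i ∈ Finset.Icc 1 p, vecMulVec (u i) (u i)‖
      ≤ 4 * (‖E‖ / σ p + (r : ℝ) ^ 2 * x / δ) := by
  have hδ0 : 0 < δ := by linarith
  have hσp : 0 < σ p := by linarith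
  have hpr := d.hpr
  have hrk := d.hrk
  have hpk := d.hpr.trans d.hrk.le
  have hpm : p ∈ Finset.Icc 1 k := Finset.mem_Icc.2 ⟨d.hp, hpk⟩
  have hw : σ p - ‖E‖ ≤ tσ p := by
    refine weyl A E σ tσ u tu v tv d.hu d.hv d.htu d.htv d.hA d.hAE p d.hp hpk hσp ?_ d.tσ0 ?_
    · intro i hi
      exact d.σmono i (d.sp hi) p hpm (Finset.mem_Icc.1 hi).2
    · intro i hi
      rw [Finset.mem_Icc] at hi
      exact d.tσmono p hpm i (Finset.mem_Icc.2 ⟨d.hp.trans hi.1, hi.2⟩) hi.1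
  have ht : 0 < tσ p := by linarith
  have a1 := d.three ht
  have a2 := d.symm.three ht
  have b1 := d.two ht
  have b2 := d.symm.two ht
  rw [norm_tr] at a2 b2
  have hs1 : 0 ≤ σ (r + 1) := d.σ0 _ (by simp; omega)
  have hs2 : 0 ≤ σ (p + 1) := d.σ0 _ (by simp; omega)
  have hpd := proj_dist (col p u) (col p tu) (tr_mul_col p hpk u d.hu) (tr_mul_col p hpk tu d.htu)
  rw [col_mul_tr, col_mul_tr] at hpd
  refine hpd.trans ?_
  rw [← D_one, ← D_one]
  have hsplit : (1 - Pr (Finset.Icc 1 p) u) * Pr (Finset.Icc 1 p) tu =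
      (1 - Pr (Finset.Icc 1 r) u) * Pr (Finset.Icc 1 p) tu +
      Pr (Finset.Ioc p r) u * Pr (Finset.Icc 1 p) tu := by
    rw [← Matrix.add_mul]
    congr 1
    have : Pr (Finset.Icc 1 r) u = Pr (Finset.Icc 1 p) u + Pr (Finset.Ioc p r) u := by
      unfold Pr D
      rw [← Finset.sum_union]
      · congr 1
        ext i; simp; omega
      · rw [Finset.disjoint_left]
        intro i hi; simp at hi ⊢; omega
    rw [this]; abel
  change ‖(1 - Pr (Finset.Icc 1 p) u) * Pr (Finset.Icc 1 p) tu‖ ≤ _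
  rw [hsplit]
  refine (norm_add_le _ _).trans ?_
  have hR : 0 ≤ (r : ℝ) ^ 2 * x := mul_nonneg (sq_nonneg _) d.x0
  have n1 := norm_nonneg ((1 - Pr (Finset.Icc 1 r) u) * Pr (Finset.Icc 1 p) tu)
  have n2 := norm_nonneg ((1 - Pr (Finset.Icc 1 r) v) * Pr (Finset.Icc 1 p) tv)
  have n3 := norm_nonneg (Pr (Finset.Ioc p r) u * Pr (Finset.Icc 1 p) tu)
  have n4 := norm_nonneg (Pr (Finset.Ioc p r) v * Pr (Finset.Icc 1 p) tv)
  generalize ‖(1 - Pr (Finset.Icc 1 r) u) * Pr (Finset.Icc 1 p) tu‖ = y at *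
  generalize ‖(1 - Pr (Finset.Icc 1 r) v) * Pr (Finset.Icc 1 p) tv‖ = y' at *
  generalize ‖Pr (Finset.Ioc p r) u * Pr (Finset.Icc 1 p) tu‖ = z at *
  generalize ‖Pr (Finset.Ioc p r) v * Pr (Finset.Icc 1 p) tv‖ = z' at *
  generalize (r : ℝ) ^ 2 * x = R at *
  generalize ‖E‖ = e at *
  -- the pair of inequalities
  have key : ∀ a b s t f g : ℝ, 0 ≤ s → 0 < g → s + g ≤ t → 0 ≤ a → 0 ≤ b → t * a ≤ s * b + f →
      t * b ≤ s * a + f → a ≤ f / g ∧ b ≤ f / g := by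
    intro a b s t f g hs hg hst ha hb h1 h2
    rw [le_div_iff₀ hg, le_div_iff₀ hg]
    rcases le_total a b with hab | hab
    · have : b * g ≤ f := by nlinarith
      exact ⟨(mul_le_mul_of_nonneg_right hab hg.le).trans this, this⟩
    · have : a * g ≤ f := by nlinarith
      exact ⟨this, (mul_le_mul_of_nonneg_right hab hg.le).trans this⟩
  obtain ⟨hy, hy'⟩ := key y y' (σ (r + 1)) (tσ p) e (7 / 16 * σ p) hs1 (by linarith) (by linarith)
    n1 n2 a1 a2
  have hyy : e / (7 / 16 * σ p) = 16 / 7 * (e / σ p) := by field_simp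
  rw [hyy] at hy hy'
  set w := 16 / 7 * (e / σ p) with hw'
  obtain ⟨hz, -⟩ := key z z' (σ (p + 1)) (tσ p) (R + e * w) (3 / 4 * δ) hs2 (by linarith)
    (by linarith) n3 n4
    (b1.trans (by nlinarith)) (b2.trans (by nlinarith))
  have hw0 : 0 ≤ w := n1.trans hy
  have hz2 : (R + e * w) / (3 / 4 * δ) ≤ 4 / 3 * (R / δ) + w / 3 := by
    rw [div_le_iff₀ (by linarith)]
    have : (4 / 3 * (R / δ) + w / 3) * (3 / 4 * δ) = R + w * δ / 4 := by field_simp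
    rw [this]; nlinarith
  have hRδ : 0 ≤ R / δ := by positivity
  have heσ : 0 ≤ e / σ p := by positivity
  linarith

end SVDPert

/-- **Perturbation of singular subspaces of a rectangular matrix** (Theorem 2.7 of
the paper). Indices are 1-based; `u_i, v_i` (resp. `ũ_i, ṽ_i`) are the left and
right singular vectors of `A` (resp. `Ã = A + E`) with singular values `σ_i`
(resp. `σ̃_i`). -/
theorem main_rectangular
    {m n : ℕ} (A E : Matrix (Fin m) (Fin n) ℝ)
    (σ tσ : ℕ → ℝ) (u tu : ℕ → (Fin m → ℝ)) (v tv : ℕ → (Fin n → ℝ))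
    (hσ_mono : ∀ i ∈ Finset.Icc 1 (min m n), ∀ j ∈ Finset.Icc 1 (min m n),
      i ≤ j → σ j ≤ σ i)
    (hσ_nonneg : ∀ i ∈ Finset.Icc 1 (min m n), 0 ≤ σ i)
    (htσ_mono : ∀ i ∈ Finset.Icc 1 (min m n), ∀ j ∈ Finset.Icc 1 (min m n),
      i ≤ j → tσ j ≤ tσ i)
    (htσ_nonneg : ∀ i ∈ Finset.Icc 1 (min m n), 0 ≤ tσ i)
    (hu_on : ∀ i ∈ Finset.Icc 1 (min m n), ∀ j ∈ Finset.Icc 1 (min m n),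
      u i ⬝ᵥ u j = if i = j then 1 else 0)
    (hv_on : ∀ i ∈ Finset.Icc 1 (min m n), ∀ j ∈ Finset.Icc 1 (min m n),
      v i ⬝ᵥ v j = if i = j then 1 else 0)
    (htu_on : ∀ i ∈ Finset.Icc 1 (min m n), ∀ j ∈ Finset.Icc 1 (min m n),
      tu i ⬝ᵥ tu j = if i = j then 1 else 0)
    (htv_on : ∀ i ∈ Finset.Icc 1 (min m n), ∀ j ∈ Finset.Icc 1 (min m n),
      tv i ⬝ᵥ tv j = if i = j then 1 else 0)
    (hsing : ∀ i ∈ Finset.Icc 1 (min m n),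
      A *ᵥ v i = σ i • u i ∧ Aᵀ *ᵥ u i = σ i • v i)
    (htsing : ∀ i ∈ Finset.Icc 1 (min m n),
      (A + E) *ᵥ tv i = tσ i • tu i ∧ (A + E)ᵀ *ᵥ tu i = tσ i • tv i)
    (rA : ℕ) (hrA : A.rank = rA)
    (p : ℕ) (hp1 : 1 ≤ p) (hprA : p < rA)
    (r : ℕ) (hpr : p ≤ r) (hrmn : r < min m n)
    (hr_half : σ p / 2 ≤ σ p - σ (r + 1))
    (xbar : ℝ)
    (hxbar : xbar = (Finset.Icc 1 r ×ˢ Finset.Icc 1 r).sup'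
      (Finset.Nonempty.product (Finset.nonempty_Icc.mpr (le_trans hp1 hpr))
        (Finset.nonempty_Icc.mpr (le_trans hp1 hpr)))
      (fun q => |u q.1 ⬝ᵥ E *ᵥ v q.2|))
    (δp : ℝ) (hδp : δp = σ p - σ (p + 1))
    (hE_pos : 0 < specNorm E)
    (hgap_lo : 4 * specNorm E ≤ δp) (hgap_hi : δp ≤ σ p / 4) :
    max
      (specNorm ((∑ i ∈ Finset.Icc 1 p, vecMulVec (tu i) (tu i))
        - ∑ i ∈ Finset.Icc 1 p, vecMulVec (u i) (u i)))
      (specNorm ((∑ i ∈ Finset.Icc 1 p, vecMulVec (tv i) (tv i))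
        - ∑ i ∈ Finset.Icc 1 p, vecMulVec (v i) (v i)))
      ≤ 24 * Real.sqrt 2 * (specNorm E / σ p * Real.log (6 * σ 1 / δp)
        + (r : ℝ) ^ 2 * xbar / δp) := by
  have h1m : (1 : ℕ) ∈ Finset.Icc 1 (min m n) := by simp only [Finset.mem_Icc]; omega
  have hpm : p ∈ Finset.Icc 1 (min m n) := by simp only [Finset.mem_Icc]; omega
  have d : SVDPert.Data (min m n) A E σ tσ u tu v tv p r xbar :=
    { hu := hu_on, hv := hv_on, htu := htu_on, htv := htv_on
      hA := SVDPert.svd A σ u v hu_on hv_on hsing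
      hAE := SVDPert.svd (A + E) tσ tu tv htu_on htv_on htsing
      σmono := hσ_mono, σ0 := hσ_nonneg, tσmono := htσ_mono, tσ0 := htσ_nonneg
      hp := hp1, hpr := hpr, hrk := hrmn
      hx := by
        intro i hi j hj
        rw [hxbar]
        exact Finset.le_sup' (fun q : ℕ × ℕ => |u q.1 ⬝ᵥ E *ᵥ v q.2|)
          (Finset.mk_mem_product hi hj) }
  have hδ0 : 0 < δp := by linarith
  have hσp : 0 < σ p := by linarith
  have hσ1 : σ p ≤ σ 1 := hσ_mono 1 h1m p hpm hp1
  have c1 := d.core (by linarith) δp hδp hE_pos hgap_lo hgap_hi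
  have hEt : specNorm Eᵀ = specNorm E := SVDPert.norm_tr E
  have c2 := d.symm.core (by linarith) δp hδp (by rw [SVDPert.norm_tr]; exact hE_pos)
    (by rw [SVDPert.norm_tr]; exact hgap_lo) hgap_hi
  rw [SVDPert.norm_tr] at c2
  have hlog : 1 ≤ Real.log (6 * σ 1 / δp) := by
    rw [Real.le_log_iff_exp_le (by have := hσp.trans_le hσ1; positivity), le_div_iff₀ hδ0]
    have := Real.exp_one_lt_d9
    nlinarith
  have hsq : 1 ≤ Real.sqrt 2 := by
    rw [Real.one_le_sqrt]; norm_num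
  have t1 : 0 ≤ specNorm E / σ p := by positivity
  have t2 : 0 ≤ (r : ℝ) ^ 2 * xbar / δp :=
    div_nonneg (mul_nonneg (sq_nonneg _) d.x0) hδ0.le
  have hfin : 4 * (specNorm E / σ p + (r : ℝ) ^ 2 * xbar / δp) ≤
      24 * Real.sqrt 2 * (specNorm E / σ p * Real.log (6 * σ 1 / δp)
        + (r : ℝ) ^ 2 * xbar / δp) := by
    have h1 : specNorm E / σ p ≤ specNorm E / σ p * Real.log (6 * σ 1 / δp) :=
      le_mul_of_one_le_right t1 hlog
    refine mul_le_mul (by linarith) (by linarith) (by linarith) (by linarith)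
  exact max_le (c1.trans hfin) (c2.trans hfin)
end
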